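/- Let $s \ge 6$ be an integer and $N_r = 100$. Suppose $f_0 : \mathbb{R}^3 \times \mathbb{R}^3 \to [0,\infty)$ is $s$-times continuously differentiable, radially symmetric in the sense that $f_0(Rx, Rv) = f_0(x,v)$ for every $R \in SO(3)$, and for every multi-index $\alpha$ with $|\alpha| \le s$ the function $(1+|x|+|v|)^{N_r} \partial^{\alpha}_{x,v} f_0$ lies in $L^2(\mathbb{R}^3 \times \mathbb{R}^3)$. Then there exists a global classical solution $f$ of the relativistic Vlasov–Poisson system on $[0,\infty)$ with $f(0,\cdot,\cdot) = f_0$, and for every $T > 0$ the electric field satisfies $\sup_{t \in [0,T]} \sup_{x \in \mathbb{R}^3} |E(t,x)| < \infty$. -/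

import Mathlib

open MeasureTheory Real Set
noncomputable section

abbrev E3 := EuclideanSpace ℝ (Fin 3)

/-- The relativistic velocity `v̂ = v / √(1+|v|²)`. -/
def vhat (v : E3) : E3 := (Real.sqrt (1 + ‖v‖ ^ 2))⁻¹ • v

/-- The spatial density `ρ(t,x) = ∫ f(t,x,v) dv`. -/
def rvpRho (f : ℝ → E3 → E3 → ℝ) (t : ℝ) (x : E3) : ℝ := ∫ v, f t x v

/-- The electric field `E(t,x) = (4π)⁻¹ ∫ (x-y) ρ(t,y)/|x-y|³ dy`. -/
def rvpField (f : ℝ → E3 → E3 → ℝ) (t : ℝ) (x : E3) : E3 :=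
  (4 * Real.pi)⁻¹ • ∫ y, (rvpRho f t y / ‖x - y‖ ^ 3) • (x - y)

/-- `f` is a classical solution of the relativistic Vlasov–Poisson system on the
time interval `I`: it is nonnegative, `C¹`, and satisfies the transport equation
`∂ₜ f + v̂ ⋅ ∇ₓ f + E ⋅ ∇ᵥ f = 0` pointwise (phrased as the vanishing of the
derivative of `f` in the direction `(1, v̂, E(t,x))`). -/
def IsRVPSolution (I : Set ℝ) (f : ℝ → E3 → E3 → ℝ) : Prop :=
  (∀ t ∈ I, ∀ x v, 0 ≤ f t x v) ∧
  ContDiffOn ℝ 1 (fun p : ℝ × E3 × E3 => f p.1 p.2.1 p.2.2) (I ×ˢ (Set.univ : Set (E3 × E3))) ∧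
  ∀ t ∈ I, ∀ x v,
    fderivWithin ℝ (fun p : ℝ × E3 × E3 => f p.1 p.2.1 p.2.2)
      (I ×ˢ (Set.univ : Set (E3 × E3))) (t, x, v) (1, vhat v, rvpField f t x) = 0

section ODE
open Filter Topology

/-- A time-dependent vector field that is continuous in time and Lipschitz in space, with a
Lipschitz constant `K T` on the time interval `[-T, T]`. -/
structure LipVF {X : Type*} [NormedAddCommGroup X] (K : ℝ → ℝ) (v : ℝ → X → X) : Prop where
  lip : ∀ T t x y, |t| ≤ T → ‖v t x - v t y‖ ≤ K T * ‖x - y‖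
  cont : ∀ x, Continuous fun t => v t x

theorem LipVF.continuous_uncurry {X : Type*} [NormedAddCommGroup X]
    {K : ℝ → ℝ} {v : ℝ → X → X} (h : LipVF K v) :
    Continuous fun p : ℝ × X => v p.1 p.2 := by
  rw [continuous_iff_continuousAt]
  rintro ⟨t, x⟩
  have h1 : Tendsto (fun p : ℝ × X => v p.1 x) (𝓝 (t, x)) (𝓝 (v t x)) :=
    ((h.cont x).comp continuous_fst).tendsto (t, x)
  have h2 : Tendsto (fun p : ℝ × X => K (|t| + 1) * ‖p.2 - x‖) (𝓝 (t, x)) (𝓝 0) := by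
    have : Continuous fun p : ℝ × X => K (|t| + 1) * ‖p.2 - x‖ := by fun_prop
    simpa using this.tendsto (t, x)
  have h3 : Tendsto (fun p : ℝ × X => v p.1 p.2 - v p.1 x) (𝓝 (t, x)) (𝓝 0) := by
    refine squeeze_zero_norm' ?_ h2
    have hev : ∀ᶠ p : ℝ × X in 𝓝 (t, x), |p.1| < |t| + 1 :=
      (continuous_abs.comp continuous_fst).continuousAt.eventually_lt continuousAt_const
        (by simp)
    filter_upwards [hev] with p hp
    exact h.lip _ _ _ _ hp.le
  have := h3.add h1
  simpa [ContinuousAt] using this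

theorem integral_exp_mul_abs_sub_le {lam : ℝ} (hlam : 0 < lam) (s t : ℝ) :
    |∫ τ in s..t, exp (lam * |τ - s|)| ≤ exp (lam * |t - s|) / lam := by
  rcases le_total s t with h | h
  · have h1 : ∫ τ in s..t, exp (lam * |τ - s|) = ∫ τ in s..t, exp (lam * (τ - s)) := by
      refine intervalIntegral.integral_congr fun τ hτ => ?_
      rw [uIcc_of_le h] at hτ
      simp [abs_of_nonneg (sub_nonneg.2 hτ.1)]
    have h2 : ∫ τ in s..t, exp (lam * (τ - s))
        = exp (lam * (t - s)) / lam - exp (lam * (s - s)) / lam := by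
      refine intervalIntegral.integral_eq_sub_of_hasDerivAt
        (f := fun τ => exp (lam * (τ - s)) / lam) (fun τ _ => ?_)
        (by apply Continuous.intervalIntegrable; fun_prop)
      have := ((((hasDerivAt_id τ).sub_const s).const_mul lam).exp).div_const lam
      exact this.congr_deriv (by simp only [id]; field_simp)
    rw [h1, h2, abs_of_nonneg (sub_nonneg.2 h), sub_self, mul_zero, exp_zero, abs_of_nonneg]
    · have : 0 < 1 / lam := by positivity
      linarith
    · have : 1 ≤ exp (lam * (t - s)) := one_le_exp (mul_nonneg hlam.le (sub_nonneg.2 h))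
      rw [← sub_div]
      exact div_nonneg (by linarith) hlam.le
  · have h1 : ∫ τ in s..t, exp (lam * |τ - s|) = ∫ τ in s..t, exp (lam * (s - τ)) := by
      refine intervalIntegral.integral_congr fun τ hτ => ?_
      rw [uIcc_of_ge h] at hτ
      simp only [abs_of_nonpos (sub_nonpos.2 hτ.2), neg_sub]
    have h2 : ∫ τ in s..t, exp (lam * (s - τ))
        = -exp (lam * (s - t)) / lam - -exp (lam * (s - s)) / lam := by
      refine intervalIntegral.integral_eq_sub_of_hasDerivAt
        (f := fun τ => -exp (lam * (s - τ)) / lam) (fun τ _ => ?_)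
        (by apply Continuous.intervalIntegrable; fun_prop)
      have := ((((hasDerivAt_id τ).const_sub s).const_mul lam).exp).neg.div_const lam
      exact this.congr_deriv (by simp only [id]; field_simp)
    rw [h1, h2, abs_of_nonpos (sub_nonpos.2 h), sub_self, mul_zero, exp_zero, neg_sub,
      abs_of_nonpos]
    · have : 0 < 1 / lam := by positivity
      have e : -(-exp (lam * (s - t)) / lam - -1 / lam) = exp (lam * (s - t)) / lam - 1 / lam := by
        ring
      rw [e]; linarith
    · have : 1 ≤ exp (lam * (s - t)) := one_le_exp (mul_nonneg hlam.le (sub_nonneg.2 h))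
      rw [← sub_div]
      exact div_nonpos_of_nonpos_of_nonneg (by linarith) hlam.le

theorem LipVF.exists_solution_Icc {X : Type*} [NormedAddCommGroup X] [NormedSpace ℝ X]
    [CompleteSpace X]
    {K : ℝ → ℝ} {v : ℝ → X → X} (h : LipVF K v) (T : ℝ)
    (s : ℝ) (hs : s ∈ Icc (-T) T) (x₀ : X) :
    ∃ α : ℝ → X, α s = x₀ ∧ ∀ t ∈ Ioo (-T) T, HasDerivAt α (v t (α t)) t := by
  have hT : -T ≤ T := hs.1.trans hs.2
  set lam : ℝ := 2 * |K T| + 1 with hlam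
  have hlam0 : 0 < lam := by positivity
  have hv := h.continuous_uncurry
  let ext : C(Icc (-T) T, X) → ℝ → X := fun W τ => exp (lam * |τ - s|) • W (projIcc (-T) T hT τ)
  have hext : ∀ W, Continuous (ext W) := fun W => by
    have : Continuous fun τ => W (projIcc (-T) T hT τ) := W.continuous.comp continuous_projIcc
    exact (by fun_prop : Continuous fun τ => exp (lam * |τ - s|)).smul this
  have hInt : ∀ W, Continuous fun τ => v τ (ext W τ) := fun W =>
    hv.comp (continuous_id.prodMk (hext W))
  let sol : C(Icc (-T) T, X) → ℝ → X := fun W t => x₀ + ∫ τ in s..t, v τ (ext W τ)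
  have hsol : ∀ W t, HasDerivAt (sol W) (v t (ext W t)) t := fun W t =>
    (intervalIntegral.integral_hasDerivAt_right ((hInt W).intervalIntegrable _ _)
      (hInt W).stronglyMeasurable.stronglyMeasurableAtFilter (hInt W).continuousAt).const_add x₀
  have hsolc : ∀ W, Continuous (sol W) := fun W =>
    continuous_iff_continuousAt.2 fun t => (hsol W t).continuousAt
  let P : C(Icc (-T) T, X) → C(Icc (-T) T, X) := fun W =>
    ⟨fun t => exp (-(lam * |(t : ℝ) - s|)) • sol W t, by
      have := (hsolc W).comp (continuous_subtype_val (p := fun t : ℝ => t ∈ Icc (-T) T))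
      exact (by fun_prop : Continuous fun t : Icc (-T) T => exp (-(lam * |(t : ℝ) - s|))).smul this⟩
  have hP : ContractingWith (1 / 2) P := by
    refine ⟨by norm_num, LipschitzWith.of_dist_le_mul fun W₁ W₂ => ?_⟩
    rw [ContinuousMap.dist_le (by positivity)]
    intro t
    have hsub : P W₁ t - P W₂ t = exp (-(lam * |(t : ℝ) - s|)) •
        ∫ τ in s..t, (v τ (ext W₁ τ) - v τ (ext W₂ τ)) := by
      rw [intervalIntegral.integral_sub ((hInt W₁).intervalIntegrable _ _)
        ((hInt W₂).intervalIntegrable _ _)]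
      simp only [P, sol, ContinuousMap.coe_mk, ← smul_sub]
      congr 1; abel
    have hb : ‖∫ τ in s..t, (v τ (ext W₁ τ) - v τ (ext W₂ τ))‖ ≤
        |∫ τ in s..t, |K T| * dist W₁ W₂ * exp (lam * |τ - s|)| := by
      refine intervalIntegral.norm_integral_le_abs_of_norm_le ?_
        (by apply Continuous.intervalIntegrable; fun_prop)
      refine (ae_restrict_mem measurableSet_uIoc).mono fun τ hτ => ?_
      have hτ' : |τ| ≤ T := by
        have := uIoc_subset_uIcc hτ
        have h2 := uIcc_subset_Icc hs t.2 this
        exact abs_le.2 h2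
      calc ‖v τ (ext W₁ τ) - v τ (ext W₂ τ)‖ ≤ K T * ‖ext W₁ τ - ext W₂ τ‖ := h.lip _ _ _ _ hτ'
        _ ≤ |K T| * (exp (lam * |τ - s|) * dist W₁ W₂) := by
          refine mul_le_mul (le_abs_self _) ?_ (norm_nonneg _) (abs_nonneg _)
          simp only [ext, ← smul_sub, norm_smul, Real.norm_eq_abs, abs_exp]
          gcongr
          rw [← dist_eq_norm]
          exact ContinuousMap.dist_apply_le_dist _
        _ = _ := by ring
    rw [dist_eq_norm, hsub, norm_smul, Real.norm_eq_abs, abs_exp]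
    rw [intervalIntegral.integral_const_mul, abs_mul, abs_of_nonneg (by positivity)] at hb
    have h4 := integral_exp_mul_abs_sub_le hlam0 s t
    calc exp (-(lam * |(t : ℝ) - s|)) * ‖∫ τ in s..t, (v τ (ext W₁ τ) - v τ (ext W₂ τ))‖
        ≤ exp (-(lam * |(t : ℝ) - s|)) *
          (|K T| * dist W₁ W₂ * (exp (lam * |(t : ℝ) - s|) / lam)) := by
          gcongr
          exact hb.trans (by gcongr)
      _ = (|K T| / lam) * dist W₁ W₂ := by
          rw [exp_neg]; field_simp
      _ ≤ ((1 / 2 : NNReal) : ℝ) * dist W₁ W₂ := by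
          gcongr
          rw [div_le_iff₀ hlam0, hlam]
          push_cast
          linarith
  obtain ⟨W, hW, -⟩ := hP.exists_fixedPoint (0 : C(Icc (-T) T, X)) (edist_ne_top _ _)
  refine ⟨sol W, by simp [sol], fun t ht => ?_⟩
  have : ext W t = sol W t := by
    have h1 : W (projIcc (-T) T hT t) = P W (projIcc (-T) T hT t) := by rw [hW]
    simp only [ext]
    rw [h1, projIcc_of_mem hT ⟨ht.1.le, ht.2.le⟩]
    simp only [P, ContinuousMap.coe_mk, smul_smul, ← exp_add]
    simp
  rw [← this]
  exact hsol W t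

theorem LipVF.lipschitzWith {X : Type*} [NormedAddCommGroup X]
    {K : ℝ → ℝ} {v : ℝ → X → X} (h : LipVF K v) {T t : ℝ}
    (ht : |t| ≤ T) : LipschitzWith (K T).toNNReal (v t) :=
  LipschitzWith.of_dist_le_mul fun x y => by
    rw [dist_eq_norm, dist_eq_norm]
    exact (h.lip _ _ _ _ ht).trans (by gcongr; exact le_coe_toNNReal _)

theorem LipVF.eqOn_Ioo {X : Type*} [NormedAddCommGroup X] [NormedSpace ℝ X]
    {K : ℝ → ℝ} {v : ℝ → X → X} (h : LipVF K v) {T s : ℝ}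
    (hs : s ∈ Ioo (-T) T) {α β : ℝ → X} (hα : ∀ t ∈ Ioo (-T) T, HasDerivAt α (v t (α t)) t)
    (hβ : ∀ t ∈ Ioo (-T) T, HasDerivAt β (v t (β t)) t) (he : α s = β s) :
    EqOn α β (Ioo (-T) T) :=
  ODE_solution_unique_of_mem_Ioo (s := fun _ => univ) (K := (K T).toNNReal)
    (fun _ ht => (h.lipschitzWith (abs_le.2 ⟨ht.1.le, ht.2.le⟩)).lipschitzOnWith) hs
    (fun t ht => ⟨hα t ht, trivial⟩) (fun t ht => ⟨hβ t ht, trivial⟩) he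

theorem LipVF.exists_solution {X : Type*} [NormedAddCommGroup X] [NormedSpace ℝ X]
    [CompleteSpace X]
    {K : ℝ → ℝ} {v : ℝ → X → X} (h : LipVF K v) (s : ℝ) (x₀ : X) :
    ∃ α : ℝ → X, α s = x₀ ∧ ∀ t, HasDerivAt α (v t (α t)) t := by
  have hmem : ∀ t c : ℝ, 0 < c → t ∈ Ioo (-(|s| + |t| + c)) (|s| + |t| + c) := fun t c hc => by
    constructor <;> cases abs_cases t <;> linarith [abs_nonneg s]
  have hmems : ∀ t c : ℝ, 0 < c → s ∈ Ioo (-(|s| + |t| + c)) (|s| + |t| + c) := fun t c hc => by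
    constructor <;> cases abs_cases s <;> linarith [abs_nonneg t]
  choose a ha0 ha using fun t : ℝ => h.exists_solution_Icc (|s| + |t| + 1) s
    (Ioo_subset_Icc_self (hmems t 1 one_pos)) x₀
  refine ⟨fun t => a t t, ha0 s, fun t => ?_⟩
  obtain ⟨b, hb0, hb⟩ := h.exists_solution_Icc (|s| + |t| + 2) s
    (Ioo_subset_Icc_self (hmems t 2 two_pos)) x₀
  have key : ∀ u, |u| < |t| + 1 → a u u = b u := fun u hu => by
    have hsub : Ioo (-(|s| + |u| + 1)) (|s| + |u| + 1) ⊆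
        Ioo (-(|s| + |t| + 2)) (|s| + |t| + 2) :=
      Ioo_subset_Ioo (by linarith) (by linarith)
    exact h.eqOn_Ioo (hmems u 1 one_pos) (ha u) (fun r hr => hb r (hsub hr))
      ((ha0 u).trans hb0.symm) (hmem u 1 one_pos)
  have hev : (fun t => a t t) =ᶠ[𝓝 t] b := by
    have : ∀ᶠ u in 𝓝 t, |u| < |t| + 1 :=
      continuous_abs.continuousAt.eventually_lt continuousAt_const (by simp)
    filter_upwards [this] with u hu using key u hu
  have := (hb t (hmem t 2 two_pos)).congr_of_eventuallyEq hev
  rwa [← key t (by linarith)] at this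

end ODE

section ODEFlow
open Filter Topology

theorem gronwallBound_le {δ K ε x : ℝ} (hK : 0 ≤ K) (hε : 0 ≤ ε) :
    gronwallBound δ K ε x ≤ (δ + ε * x) * exp (K * x) := by
  rcases hK.eq_or_lt with rfl | hK
  · simp [gronwallBound_K0]
  · rw [gronwallBound_of_K_ne_0 hK.ne']
    have h1 : exp (K * x) - 1 ≤ K * x * exp (K * x) := by
      have h2 := add_one_le_exp (-(K * x))
      have h3 : exp (-(K * x)) * exp (K * x) = 1 := by rw [← exp_add]; simp
      nlinarith [exp_pos (K * x)]
    have h2 : ε / K * (exp (K * x) - 1) ≤ ε / K * (K * x * exp (K * x)) := by gcongr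
    have h3 : ε / K * (K * x * exp (K * x)) = ε * x * exp (K * x) := by field_simp
    linarith

/-- Gronwall's inequality, forward and backward in time. -/
theorem norm_le_of_norm_deriv_le {X : Type*} [NormedAddCommGroup X] [NormedSpace ℝ X]
    {w w' : ℝ → X} {K ε T s t : ℝ} (hK : 0 ≤ K) (hε : 0 ≤ ε)
    (hw : ∀ t, HasDerivAt w (w' t) t) (hb : ∀ t, |t| ≤ T → ‖w' t‖ ≤ K * ‖w t‖ + ε)
    (hs : |s| ≤ T) (ht : |t| ≤ T) :
    ‖w t‖ ≤ (‖w s‖ + ε * |t - s|) * exp (K * |t - s|) := by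
  rw [abs_le] at hs ht
  rcases le_total s t with h | h
  · have := norm_le_gronwallBound_of_norm_deriv_right_le (f := w) (f' := w') (δ := ‖w s‖)
      (K := K) (ε := ε) (a := s) (b := t) (fun u _ => (hw u).continuousAt.continuousWithinAt)
      (fun u _ => (hw u).hasDerivWithinAt) le_rfl
      (fun u hu => hb u (abs_le.2 ⟨by linarith [hu.1], by linarith [hu.2]⟩)) t ⟨h, le_rfl⟩
    rw [abs_of_nonneg (sub_nonneg.2 h)]
    exact this.trans (gronwallBound_le hK hε)
  · have hw2 : ∀ u, HasDerivAt (fun u => w (-u)) (-(w' (-u))) u := fun u => by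
      have := (hw (-u)).scomp u (hasDerivAt_neg u)
      simpa [Function.comp_def] using this
    have := norm_le_gronwallBound_of_norm_deriv_right_le (f := fun u => w (-u))
      (f' := fun u => -(w' (-u))) (δ := ‖w s‖)
      (K := K) (ε := ε) (a := -s) (b := -t)
      (fun u _ => (hw2 u).continuousAt.continuousWithinAt)
      (fun u _ => (hw2 u).hasDerivWithinAt) (by simp)
      (fun u hu => by
        rw [norm_neg]
        exact hb (-u) (abs_le.2 ⟨by linarith [hu.2], by linarith [hu.1]⟩)) (-t) ⟨by linarith, le_rfl⟩
    rw [abs_of_nonpos (sub_nonpos.2 h)]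
    simp only [neg_neg] at this
    refine (this.trans (gronwallBound_le hK hε)).trans (le_of_eq ?_)
    rw [show -t - -s = -(t - s) by ring]

open Classical in
/-- The value at time `t` of the solution of `α' = v(·, α)` with `α s = x`. -/
def odeFlow {X : Type*} [NormedAddCommGroup X] [NormedSpace ℝ X] (v : ℝ → X → X)
    (s t : ℝ) (x : X) : X :=
  if h : ∃ α : ℝ → X, α s = x ∧ ∀ t, HasDerivAt α (v t (α t)) t then h.choose t else x

section
variable {X : Type*} [NormedAddCommGroup X] [NormedSpace ℝ X] [CompleteSpace X] {K : ℝ → ℝ}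
  {v : ℝ → X → X}

theorem LipVF.odeFlow_spec (h : LipVF K v) (s : ℝ) (x : X) :
    odeFlow v s s x = x ∧ ∀ t, HasDerivAt (fun t => odeFlow v s t x) (v t (odeFlow v s t x)) t := by
  have hex := h.exists_solution s x
  have : (fun t => odeFlow v s t x) = hex.choose := by
    ext t; simp only [odeFlow, dif_pos hex]
  have h2 := hex.choose_spec
  rw [← this] at h2
  exact h2

theorem LipVF.odeFlow_self (h : LipVF K v) (s : ℝ) (x : X) : odeFlow v s s x = x :=
  (h.odeFlow_spec s x).1

theorem LipVF.hasDerivAt_odeFlow (h : LipVF K v) (s : ℝ) (x : X) (t : ℝ) :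
    HasDerivAt (fun t => odeFlow v s t x) (v t (odeFlow v s t x)) t :=
  (h.odeFlow_spec s x).2 t

theorem LipVF.odeFlow_eq (h : LipVF K v) {s : ℝ} {x : X} {α : ℝ → X} (h0 : α s = x)
    (hα : ∀ t, HasDerivAt α (v t (α t)) t) (t : ℝ) : odeFlow v s t x = α t := by
  have hs : s ∈ Ioo (-(|s| + |t| + 1)) (|s| + |t| + 1) := by
    constructor <;> cases abs_cases s <;> linarith [abs_nonneg t]
  have ht : t ∈ Ioo (-(|s| + |t| + 1)) (|s| + |t| + 1) := by
    constructor <;> cases abs_cases t <;> linarith [abs_nonneg s]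
  exact h.eqOn_Ioo hs (fun r _ => h.hasDerivAt_odeFlow s x r) (fun r _ => hα r)
    ((h.odeFlow_self s x).trans h0.symm) ht

theorem LipVF.odeFlow_odeFlow (h : LipVF K v) (s t u : ℝ) (x : X) :
    odeFlow v t u (odeFlow v s t x) = odeFlow v s u x :=
  h.odeFlow_eq rfl (fun r => h.hasDerivAt_odeFlow s x r) u

theorem LipVF.odeFlow_odeFlow_self (h : LipVF K v) (s t : ℝ) (x : X) :
    odeFlow v t s (odeFlow v s t x) = x := by
  rw [h.odeFlow_odeFlow, h.odeFlow_self]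

theorem LipVF.norm_odeFlow_sub_le (h : LipVF K v) {T s t : ℝ} (hs : |s| ≤ T) (ht : |t| ≤ T)
    (x y : X) :
    ‖odeFlow v s t x - odeFlow v s t y‖ ≤ exp (|K T| * |t - s|) * ‖x - y‖ := by
  have := norm_le_of_norm_deriv_le (w := fun t => odeFlow v s t x - odeFlow v s t y)
    (abs_nonneg (K T)) le_rfl
    (fun r => (h.hasDerivAt_odeFlow s x r).sub (h.hasDerivAt_odeFlow s y r))
    (fun r hr => by
      rw [add_zero]
      exact (h.lip _ _ _ _ hr).trans (by gcongr; exact le_abs_self _)) hs ht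
  simp only [h.odeFlow_self, zero_mul, add_zero] at this
  linarith

/-- The flow from time `0` to time `t`, and back, as a homeomorphism of extended phase space. -/
theorem LipVF.continuous_odeFlow_zero (h : LipVF K v) :
    Continuous fun p : ℝ × X => odeFlow v 0 p.1 p.2 := by
  rw [continuous_iff_continuousAt]
  rintro ⟨t, x⟩
  have h1 : Tendsto (fun p : ℝ × X => odeFlow v 0 p.1 x) (𝓝 (t, x)) (𝓝 (odeFlow v 0 t x)) :=
    ((h.hasDerivAt_odeFlow 0 x t).continuousAt.comp
      (f := Prod.fst) (x := (t, x)) continuousAt_fst)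
  have h2 : Tendsto (fun p : ℝ × X => exp (|K (|t| + 1)| * (|t| + 1)) * ‖p.2 - x‖)
      (𝓝 (t, x)) (𝓝 0) := by
    have : Continuous fun p : ℝ × X => exp (|K (|t| + 1)| * (|t| + 1)) * ‖p.2 - x‖ := by fun_prop
    simpa using this.tendsto (t, x)
  have h3 : Tendsto (fun p : ℝ × X => odeFlow v 0 p.1 p.2 - odeFlow v 0 p.1 x)
      (𝓝 (t, x)) (𝓝 0) := by
    refine squeeze_zero_norm' ?_ h2
    have hev : ∀ᶠ p : ℝ × X in 𝓝 (t, x), |p.1| < |t| + 1 :=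
      (continuous_abs.comp continuous_fst).continuousAt.eventually_lt continuousAt_const
        (by simp)
    filter_upwards [hev] with p hp
    refine (h.norm_odeFlow_sub_le (T := |t| + 1) (by simp; positivity) hp.le _ _).trans ?_
    gcongr
    simpa using hp.le
  have := h3.add h1
  simpa [ContinuousAt] using this

theorem LipVF.continuous_odeFlow_to_zero (h : LipVF K v) :
    Continuous fun p : ℝ × X => odeFlow v p.1 0 p.2 := by
  rw [continuous_iff_continuousAt]
  rintro ⟨t, x⟩
  have hc : Continuous fun p : ℝ × X => odeFlow v 0 p.1 (odeFlow v t 0 x) :=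
    h.continuous_odeFlow_zero.comp (continuous_fst.prodMk continuous_const)
  have h2 : Tendsto (fun p : ℝ × X => exp (|K (|t| + 1)| * (|t| + 1)) *
      ‖p.2 - odeFlow v 0 p.1 (odeFlow v t 0 x)‖) (𝓝 (t, x)) (𝓝 0) := by
    have : Continuous fun p : ℝ × X => exp (|K (|t| + 1)| * (|t| + 1)) *
      ‖p.2 - odeFlow v 0 p.1 (odeFlow v t 0 x)‖ := by fun_prop
    have h3 := this.tendsto (t, x)
    simpa [h.odeFlow_odeFlow, h.odeFlow_self] using h3
  rw [ContinuousAt, tendsto_iff_norm_sub_tendsto_zero]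
  refine squeeze_zero' (Eventually.of_forall fun _ => norm_nonneg _) ?_ h2
  have hev : ∀ᶠ p : ℝ × X in 𝓝 (t, x), |p.1| < |t| + 1 :=
    (continuous_abs.comp continuous_fst).continuousAt.eventually_lt continuousAt_const
      (by simp)
  filter_upwards [hev] with p hp
  have e : odeFlow v t 0 x = odeFlow v p.1 0 (odeFlow v 0 p.1 (odeFlow v t 0 x)) := by
    rw [h.odeFlow_odeFlow_self]
  have := h.norm_odeFlow_sub_le (T := |t| + 1) (s := p.1) (t := 0) hp.le (by simp; positivity)
    p.2 (odeFlow v 0 p.1 (odeFlow v t 0 x))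
  rw [← e] at this
  refine this.trans ?_
  gcongr
  simpa using hp.le

end
end ODEFlow

section ODEDeriv
open Filter Topology

/-- The solution of the linearised equation along the trajectory through `x` at time `s`. -/
def varFlow {X : Type*} [NormedAddCommGroup X] [NormedSpace ℝ X] (v : ℝ → X → X)
    (dv : ℝ → X → X →L[ℝ] X) (s t : ℝ) (x : X) : X →L[ℝ] X :=
  odeFlow (fun t A => (dv t (odeFlow v s t x)).comp A) s t (ContinuousLinearMap.id ℝ X)

theorem LipVF.norm_deriv_le {X : Type*} [NormedAddCommGroup X] [NormedSpace ℝ X] {K : ℝ → ℝ}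
    {v : ℝ → X → X} {dv : ℝ → X → X →L[ℝ] X} (h : LipVF K v) (hd : ∀ t x, HasFDerivAt (v t) (dv t x) x)
    {T t : ℝ} (ht : |t| ≤ T) (x : X) : ‖dv t x‖ ≤ |K T| :=
  (hd t x).le_of_lip' (abs_nonneg _) (Eventually.of_forall fun y =>
    (h.lip _ _ _ _ ht).trans (by gcongr; exact le_abs_self _))

section
variable {X : Type*} [NormedAddCommGroup X] [NormedSpace ℝ X] [CompleteSpace X] {K : ℝ → ℝ}
  {v : ℝ → X → X} {dv : ℝ → X → X →L[ℝ] X}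

theorem LipVF.continuous_odeFlow_right (h : LipVF K v) (s : ℝ) (x : X) :
    Continuous fun t => odeFlow v s t x :=
  continuous_iff_continuousAt.2 fun t => (h.hasDerivAt_odeFlow s x t).continuousAt

theorem LipVF.variational (h : LipVF K v) (hd : ∀ t x, HasFDerivAt (v t) (dv t x) x)
    (hc : Continuous fun p : ℝ × X => dv p.1 p.2) (s : ℝ) (x : X) :
    LipVF (fun T => |K T|)
      (fun t (A : X →L[ℝ] X) => (dv t (odeFlow v s t x)).comp A) where
  lip T t A B ht := by
    rw [← ContinuousLinearMap.comp_sub]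
    exact (ContinuousLinearMap.opNorm_comp_le _ _).trans
      (by gcongr; exact h.norm_deriv_le hd ht _)
  cont A := by
    have : Continuous fun t => dv t (odeFlow v s t x) :=
      hc.comp (continuous_id.prodMk (h.continuous_odeFlow_right s x))
    exact this.clm_comp continuous_const

theorem LipVF.exists_tube (h : LipVF K v) (hc : Continuous fun p : ℝ × X => dv p.1 p.2)
    (s T : ℝ) (x : X) {ε : ℝ} (hε : 0 < ε) :
    ∃ δ > 0, ∀ t, |t| ≤ T → ∀ c, ‖c - odeFlow v s t x‖ < δ →
      ‖dv t c - dv t (odeFlow v s t x)‖ < ε := by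
  have hΦ := h.continuous_odeFlow_right s x
  have hg : Continuous fun p : ℝ × X =>
      ‖dv p.1 (odeFlow v s p.1 x + p.2) - dv p.1 (odeFlow v s p.1 x)‖ := by
    have h1 : Continuous fun p : ℝ × X => odeFlow v s p.1 x := hΦ.comp continuous_fst
    exact ((hc.comp (continuous_fst.prodMk (h1.add continuous_snd))).sub
      (hc.comp (continuous_fst.prodMk h1))).norm
  have hopen : IsOpen {p : ℝ × X |
      ‖dv p.1 (odeFlow v s p.1 x + p.2) - dv p.1 (odeFlow v s p.1 x)‖ < ε} :=
    isOpen_lt hg continuous_const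
  obtain ⟨u, w, -, hw, hu, h0, hsub⟩ := generalized_tube_lemma (isCompact_Icc (a := -T) (b := T))
    (isCompact_singleton (x := (0 : X))) hopen (by
      rintro ⟨t, y⟩ ⟨-, hy⟩
      simp only [mem_singleton_iff] at hy
      simp [hy, hε])
  obtain ⟨δ, hδ, hball⟩ := Metric.isOpen_iff.1 hw 0 (h0 rfl)
  refine ⟨δ, hδ, fun t ht c hcd => ?_⟩
  have := hsub (mk_mem_prod (hu (abs_le.1 ht)) (hball (a := c - odeFlow v s t x) (by simpa using hcd)))
  simpa using this

theorem LipVF.hasFDerivAt_odeFlow (h : LipVF K v) (hd : ∀ t x, HasFDerivAt (v t) (dv t x) x)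
    (hc : Continuous fun p : ℝ × X => dv p.1 p.2) (s t : ℝ) (x : X) :
    HasFDerivAt (odeFlow v s t) (varFlow v dv s t x) x := by
  have hA := h.variational hd hc s x
  rw [hasFDerivAt_iff_isLittleO, Asymptotics.isLittleO_iff]
  intro ε' hε'
  set T := |s| + |t| with hT
  have hs : |s| ≤ T := by linarith [abs_nonneg t]
  have ht : |t| ≤ T := by linarith [abs_nonneg s]
  have hT0 : 0 ≤ T := by positivity
  set M := exp (|K T| * (2 * T)) with hM
  have hMb : ∀ r, |r| ≤ T → exp (|K T| * |r - s|) ≤ M := fun r hr => by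
    refine exp_le_exp.2 (mul_le_mul_of_nonneg_left ?_ (abs_nonneg _))
    exact (abs_sub _ _).trans (by linarith)
  have hM0 : 0 < M := exp_pos _
  obtain ⟨ε, hε, hε2⟩ : ∃ ε > 0, ε * M * (2 * T) * M ≤ ε' :=
    ⟨ε' / (M * (2 * T) * M + 1), by positivity, by
      rw [div_mul_eq_mul_div, div_mul_eq_mul_div, div_mul_eq_mul_div, div_le_iff₀ (by positivity)]
      nlinarith⟩
  obtain ⟨δ, hδ, htube⟩ := h.exists_tube hc s T x hε
  have hnear : ∀ᶠ y in 𝓝 x, ‖y - x‖ < δ / M := by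
    have : Continuous fun y => ‖y - x‖ := by fun_prop
    exact this.continuousAt.eventually_lt continuousAt_const (by simp; positivity)
  filter_upwards [hnear] with y hy
  have hflow : ∀ r, |r| ≤ T → ‖odeFlow v s r y - odeFlow v s r x‖ ≤ M * ‖y - x‖ := fun r hr =>
    (h.norm_odeFlow_sub_le hs hr y x).trans (by gcongr; exact hMb r hr)
  have key := norm_le_of_norm_deriv_le (T := T) (s := s) (t := t) (K := |K T|)
    (ε := ε * M * ‖y - x‖)
    (w := fun r => odeFlow v s r y - odeFlow v s r x - varFlow v dv s r x (y - x))
    (w' := fun r => v r (odeFlow v s r y) - v r (odeFlow v s r x) -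
      (dv r (odeFlow v s r x)) (varFlow v dv s r x (y - x)))
    (abs_nonneg _) (by positivity)
    (fun r => ((h.hasDerivAt_odeFlow s y r).sub (h.hasDerivAt_odeFlow s x r)).sub
      (by
        have := (hA.hasDerivAt_odeFlow s (ContinuousLinearMap.id ℝ X) r).clm_apply
          (hasDerivAt_const r (y - x))
        exact this.congr_deriv (by simp [varFlow])))
    (fun r hr => by
      have h1 : ‖v r (odeFlow v s r y) - v r (odeFlow v s r x) -
          dv r (odeFlow v s r x) (odeFlow v s r y - odeFlow v s r x)‖ ≤
          ε * ‖odeFlow v s r y - odeFlow v s r x‖ := by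
        refine (convex_ball (odeFlow v s r x) δ).norm_image_sub_le_of_norm_hasFDerivWithin_le'
          (f' := dv r) (fun z _ => (hd r z).hasFDerivWithinAt)
          (fun z hz => (htube r hr z (by simpa [dist_eq_norm] using hz)).le)
          (Metric.mem_ball_self hδ) ?_
        rw [Metric.mem_ball, dist_eq_norm]
        refine (hflow r hr).trans_lt ?_
        rw [lt_div_iff₀ hM0] at hy
        linarith
      have h2 : v r (odeFlow v s r y) - v r (odeFlow v s r x) -
          dv r (odeFlow v s r x) (varFlow v dv s r x (y - x)) =
          (v r (odeFlow v s r y) - v r (odeFlow v s r x) -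
            dv r (odeFlow v s r x) (odeFlow v s r y - odeFlow v s r x)) +
          dv r (odeFlow v s r x)
            (odeFlow v s r y - odeFlow v s r x - varFlow v dv s r x (y - x)) := by
        simp only [map_sub]; abel
      rw [h2]
      refine (norm_add_le _ _).trans ?_
      have h3 := ((dv r (odeFlow v s r x)).le_opNorm
        (odeFlow v s r y - odeFlow v s r x - varFlow v dv s r x (y - x))).trans
        (mul_le_mul_of_nonneg_right (h.norm_deriv_le hd hr _) (norm_nonneg _))
      have h4 := mul_le_mul_of_nonneg_left (hflow r hr) hε.le
      linarith) hs ht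
  have h0 : odeFlow v s s y - odeFlow v s s x - varFlow v dv s s x (y - x) = 0 := by
    simp [varFlow, h.odeFlow_self, hA.odeFlow_self]
  rw [h0, norm_zero, zero_add] at key
  refine key.trans ?_
  have hts : |t - s| ≤ 2 * T := (abs_sub _ _).trans (by linarith)
  calc ε * M * ‖y - x‖ * |t - s| * exp (|K T| * |t - s|)
      ≤ ε * M * ‖y - x‖ * (2 * T) * M := by gcongr; exact hMb t ht
    _ = ε * M * (2 * T) * M * ‖y - x‖ := by ring
    _ ≤ ε' * ‖y - x‖ := by gcongr

theorem LipVF.continuous_varFlow (h : LipVF K v) (hd : ∀ t x, HasFDerivAt (v t) (dv t x) x)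
    (hc : Continuous fun p : ℝ × X => dv p.1 p.2) :
    Continuous fun p : ℝ × X => varFlow v dv 0 p.1 p.2 := by
  rw [continuous_iff_continuousAt]
  rintro ⟨t, x⟩
  have hA := fun y => h.variational hd hc 0 y
  have h1 : Tendsto (fun p : ℝ × X => varFlow v dv 0 p.1 x) (𝓝 (t, x))
      (𝓝 (varFlow v dv 0 t x)) :=
    ((hA x).continuous_odeFlow_right 0 _).continuousAt.comp
      (f := Prod.fst) (x := (t, x)) continuousAt_fst
  set T := |t| + 1 with hT
  have hT0 : 0 ≤ T := by positivity
  set M := exp (|K T| * T) with hM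
  have hMb : ∀ r, |r| ≤ T → exp (|K T| * |r - 0|) ≤ M := fun r hr => by
    rw [sub_zero]
    exact exp_le_exp.2 (mul_le_mul_of_nonneg_left hr (abs_nonneg _))
  have hM0 : 0 < M := exp_pos _
  have h3 : Tendsto (fun p : ℝ × X => varFlow v dv 0 p.1 p.2 - varFlow v dv 0 p.1 x)
      (𝓝 (t, x)) (𝓝 0) := by
    rw [Metric.tendsto_nhds]
    intro ε' hε'
    obtain ⟨ε, hε, hε2⟩ : ∃ ε > 0, ε * M * T * M < ε' :=
      ⟨ε' / (M * T * M + 1), by positivity, by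
        rw [div_mul_eq_mul_div, div_mul_eq_mul_div, div_mul_eq_mul_div, div_lt_iff₀ (by positivity)]
        nlinarith⟩
    obtain ⟨δ, hδ, htube⟩ := h.exists_tube hc 0 T x hε
    have hev : ∀ᶠ p : ℝ × X in 𝓝 (t, x), |p.1| < T :=
      (continuous_abs.comp continuous_fst).continuousAt.eventually_lt continuousAt_const
        (by simp [hT])
    have hnear : ∀ᶠ p : ℝ × X in 𝓝 (t, x), ‖p.2 - x‖ < δ / M := by
      have : Continuous fun p : ℝ × X => ‖p.2 - x‖ := by fun_prop
      exact this.continuousAt.eventually_lt continuousAt_const (by simp; positivity)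
    filter_upwards [hev, hnear] with p hp hy
    have hz : |(0 : ℝ)| ≤ T := by simpa using hT0
    have hAx : ∀ r, |r| ≤ T → ‖varFlow v dv 0 r x‖ ≤ M := fun r hr => by
      have := norm_le_of_norm_deriv_le (T := T) (s := 0) (t := r) (K := |K T|) (ε := 0)
        (abs_nonneg _) le_rfl
        ((hA x).hasDerivAt_odeFlow 0 (ContinuousLinearMap.id ℝ X))
        (fun r hr => by
          rw [add_zero]
          exact (ContinuousLinearMap.opNorm_comp_le _ _).trans
            (by gcongr; exact h.norm_deriv_le hd hr _)) hz hr
      refine this.trans ?_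
      rw [(hA x).odeFlow_self, zero_mul, add_zero]
      calc _ ≤ 1 * exp (|K T| * |r - 0|) := by
            gcongr; exact ContinuousLinearMap.norm_id_le
        _ ≤ M := by rw [one_mul]; exact hMb r hr
    have key := norm_le_of_norm_deriv_le (T := T) (s := 0) (t := p.1) (K := |K T|) (ε := ε * M)
      (w := fun r => varFlow v dv 0 r p.2 - varFlow v dv 0 r x)
      (w' := fun r => (dv r (odeFlow v 0 r p.2)).comp (varFlow v dv 0 r p.2) -
        (dv r (odeFlow v 0 r x)).comp (varFlow v dv 0 r x))
      (abs_nonneg _) (by positivity)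
      (fun r => ((hA p.2).hasDerivAt_odeFlow 0 _ r).sub ((hA x).hasDerivAt_odeFlow 0 _ r))
      (fun r hr => by
        have h2 : (dv r (odeFlow v 0 r p.2)).comp (varFlow v dv 0 r p.2) -
          (dv r (odeFlow v 0 r x)).comp (varFlow v dv 0 r x) =
          (dv r (odeFlow v 0 r p.2)).comp (varFlow v dv 0 r p.2 - varFlow v dv 0 r x) +
          (dv r (odeFlow v 0 r p.2) - dv r (odeFlow v 0 r x)).comp (varFlow v dv 0 r x) := by
          simp only [ContinuousLinearMap.comp_sub, ContinuousLinearMap.sub_comp]; abel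
        rw [h2]
        refine (norm_add_le _ _).trans (add_le_add ?_ ?_)
        · exact (ContinuousLinearMap.opNorm_comp_le _ _).trans
            (by gcongr; exact h.norm_deriv_le hd hr _)
        · refine (ContinuousLinearMap.opNorm_comp_le _ _).trans ?_
          gcongr
          · refine (htube r hr _ ?_).le
            refine (h.norm_odeFlow_sub_le hz hr p.2 x).trans_lt ?_
            rw [lt_div_iff₀ hM0] at hy
            exact (mul_le_mul_of_nonneg_right (hMb r hr) (norm_nonneg _)).trans_lt (by linarith)
          · exact hAx r hr) hz hp.le
    have h0 : varFlow v dv 0 0 p.2 - varFlow v dv 0 0 x = 0 := by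
      simp [varFlow, (hA _).odeFlow_self]
    rw [h0, norm_zero, zero_add] at key
    rw [dist_zero_right]
    refine key.trans_lt (lt_of_le_of_lt ?_ hε2)
    gcongr
    · simpa using hp.le
    · exact hMb _ hp.le
  have := h3.add h1
  simpa [ContinuousAt] using this

theorem LipVF.contDiff_odeFlow_zero (h : LipVF K v) (hd : ∀ t x, HasFDerivAt (v t) (dv t x) x)
    (hc : Continuous fun p : ℝ × X => dv p.1 p.2) :
    (∀ p : ℝ × X, HasFDerivAt (fun p : ℝ × X => odeFlow v 0 p.1 p.2)
      ((ContinuousLinearMap.toSpanSingleton ℝ (v p.1 (odeFlow v 0 p.1 p.2))).coprod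
        (varFlow v dv 0 p.1 p.2)) p) ∧
    ContDiff ℝ 1 fun p : ℝ × X => odeFlow v 0 p.1 p.2 := by
  have hv : Continuous fun p : ℝ × X => v p.1 (odeFlow v 0 p.1 p.2) :=
    h.continuous_uncurry.comp (continuous_fst.prodMk h.continuous_odeFlow_zero)
  have h1 : Continuous fun p : ℝ × X =>
      ContinuousLinearMap.toSpanSingleton ℝ (v p.1 (odeFlow v 0 p.1 p.2)) :=
    (ContinuousLinearMap.toSpanSingletonLIE ℝ X).continuous.comp hv
  have h2 := h.continuous_varFlow hd hc
  have hder : ∀ p : ℝ × X, HasFDerivAt (fun p : ℝ × X => odeFlow v 0 p.1 p.2)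
      ((ContinuousLinearMap.toSpanSingleton ℝ (v p.1 (odeFlow v 0 p.1 p.2))).coprod
        (varFlow v dv 0 p.1 p.2)) p := fun p =>
    (hasStrictFDerivAt_uncurry_coprod (f := fun t x => odeFlow v 0 t x)
      (f₁ := fun t x => ContinuousLinearMap.toSpanSingleton ℝ (v t (odeFlow v 0 t x)))
      (f₂ := fun t x => varFlow v dv 0 t x)
      (Eventually.of_forall fun q => (h.hasDerivAt_odeFlow 0 q.2 q.1).hasFDerivAt)
      (Eventually.of_forall fun q => h.hasFDerivAt_odeFlow hd hc 0 q.1 q.2)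
      h1.continuousAt h2.continuousAt).hasFDerivAt
  refine ⟨hder, contDiff_one_iff_hasFDerivAt.2 ⟨_, ?_, hder⟩⟩
  have e : ∀ p : ℝ × X, (ContinuousLinearMap.toSpanSingleton ℝ (v p.1 (odeFlow v 0 p.1 p.2))).coprod
      (varFlow v dv 0 p.1 p.2) =
      (ContinuousLinearMap.toSpanSingleton ℝ (v p.1 (odeFlow v 0 p.1 p.2))).comp
        (ContinuousLinearMap.fst ℝ ℝ X) +
      (varFlow v dv 0 p.1 p.2).comp (ContinuousLinearMap.snd ℝ ℝ X) := fun p => by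
    ext <;> simp
  simp only [e]
  exact (h1.clm_comp continuous_const).add (h2.clm_comp continuous_const)

theorem LipVF.contDiff_odeFlow_to_zero (h : LipVF K v)
    (hd : ∀ t x, HasFDerivAt (v t) (dv t x) x)
    (hc : Continuous fun p : ℝ × X => dv p.1 p.2) :
    ContDiff ℝ 1 fun p : ℝ × X => odeFlow v p.1 0 p.2 := by
  obtain ⟨hder, hcd⟩ := h.contDiff_odeFlow_zero hd hc
  let Ψ : ℝ × X ≃ₜ ℝ × X :=
    { toFun := fun p => (p.1, odeFlow v 0 p.1 p.2)
      invFun := fun p => (p.1, odeFlow v p.1 0 p.2)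
      left_inv := fun p => by simp [h.odeFlow_odeFlow_self]
      right_inv := fun p => by simp [h.odeFlow_odeFlow_self]
      continuous_toFun := continuous_fst.prodMk h.continuous_odeFlow_zero
      continuous_invFun := continuous_fst.prodMk h.continuous_odeFlow_to_zero }
  have hinv : ∀ s t : ℝ, ∀ x : X, (varFlow v dv t s (odeFlow v s t x)).comp (varFlow v dv s t x) =
      ContinuousLinearMap.id ℝ X := fun s t x => by
    have h1 := (h.hasFDerivAt_odeFlow hd hc t s (odeFlow v s t x)).comp x
      (h.hasFDerivAt_odeFlow hd hc s t x)
    have h2 : odeFlow v t s ∘ odeFlow v s t = id := by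
      ext y; simp [h.odeFlow_odeFlow_self]
    rw [h2] at h1
    exact h1.unique (hasFDerivAt_id x)
  let D : ℝ × X → (ℝ × X) ≃L[ℝ] (ℝ × X) := fun p =>
    ContinuousLinearEquiv.equivOfInverse
      ((ContinuousLinearMap.fst ℝ ℝ X).prod
        ((ContinuousLinearMap.toSpanSingleton ℝ (v p.1 (odeFlow v 0 p.1 p.2))).coprod
        (varFlow v dv 0 p.1 p.2)))
      ((ContinuousLinearMap.fst ℝ ℝ X).prod
        ((varFlow v dv p.1 0 (odeFlow v 0 p.1 p.2)).comp (ContinuousLinearMap.snd ℝ ℝ X -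
          (ContinuousLinearMap.toSpanSingleton ℝ (v p.1 (odeFlow v 0 p.1 p.2))).comp
            (ContinuousLinearMap.fst ℝ ℝ X))))
      (fun q => by
        have := DFunLike.congr_fun (hinv 0 p.1 p.2) q.2
        simp only [ContinuousLinearMap.comp_apply, ContinuousLinearMap.id_apply] at this
        ext <;> simp [this])
      (fun q => by
        have := DFunLike.congr_fun (hinv p.1 0 (odeFlow v 0 p.1 p.2))
          (q.2 - q.1 • v p.1 (odeFlow v 0 p.1 p.2))
        rw [h.odeFlow_odeFlow_self] at this
        simp only [ContinuousLinearMap.comp_apply, ContinuousLinearMap.id_apply] at this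
        refine Prod.ext (by simp) ?_
        simp only [map_sub, map_smul] at this
        simp [this])
  have hΨ := Ψ.contDiff_symm (f₀' := D) (n := 1) (fun p => hasFDerivAt_fst.prodMk (hder p))
    (contDiff_fst.prodMk hcd)
  exact contDiff_snd.comp hΨ

end
end ODEDeriv

section PhaseFlow
open Filter Topology

/-- The relativistic energy `γ = √(1+|v|²)`. -/
def gam (v : E3) : ℝ := Real.sqrt (1 + ‖v‖ ^ 2)

theorem gam_sq (v : E3) : gam v ^ 2 = 1 + ‖v‖ ^ 2 := sq_sqrt (by positivity)

theorem one_le_gam (v : E3) : 1 ≤ gam v := by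
  rw [gam, one_le_sqrt]; nlinarith [norm_nonneg v]

theorem gam_pos (v : E3) : 0 < gam v := one_pos.trans_le (one_le_gam v)

theorem norm_le_gam (v : E3) : ‖v‖ ≤ gam v := le_sqrt_of_sq_le (by linarith)

theorem gam_le (v : E3) : gam v ≤ 1 + ‖v‖ := by
  rw [gam, sqrt_le_iff]
  exact ⟨by positivity, by nlinarith [norm_nonneg v]⟩

theorem abs_gam_sub_gam_le (a b : E3) : |gam a - gam b| ≤ ‖a - b‖ := by
  have h1 : |gam a - gam b| * (gam a + gam b) = |‖a‖ - ‖b‖| * (‖a‖ + ‖b‖) := by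
    have h2 : gam a + gam b = |gam a + gam b| :=
      (abs_of_pos (add_pos (gam_pos a) (gam_pos b))).symm
    have h3 : ‖a‖ + ‖b‖ = |‖a‖ + ‖b‖| := (abs_of_nonneg (by positivity)).symm
    rw [h2, h3, ← abs_mul, ← abs_mul]
    congr 1
    linarith [gam_sq a, gam_sq b]
  have h4 := abs_norm_sub_norm_le a b
  have h5 : |‖a‖ - ‖b‖| * (‖a‖ + ‖b‖) ≤ ‖a - b‖ * (gam a + gam b) := by
    gcongr
    exacts [norm_le_gam a, norm_le_gam b]
  rw [← h1] at h5
  exact le_of_mul_le_mul_right h5 (add_pos (gam_pos a) (gam_pos b))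

theorem vhat_eq (v : E3) : vhat v = (gam v)⁻¹ • v := rfl

theorem norm_vhat_le (v : E3) : ‖vhat v‖ ≤ 1 := by
  rw [vhat_eq, norm_smul, norm_inv, norm_of_nonneg (gam_pos v).le, inv_mul_le_iff₀ (gam_pos v),
    mul_one]
  exact norm_le_gam v

theorem norm_vhat_sub_le (a b : E3) : ‖vhat a - vhat b‖ ≤ 2 * ‖a - b‖ := by
  have ha := gam_pos a
  have hb := gam_pos b
  have h1 : vhat a - vhat b = (gam a)⁻¹ • ((a - b) - (gam a - gam b) • vhat b) := by
    rw [vhat_eq, vhat_eq, smul_sub, smul_sub, smul_smul, smul_smul]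
    rw [sub_sub, ← add_smul]
    congr 2
    field_simp
    ring
  rw [h1, norm_smul, norm_inv, norm_of_nonneg ha.le, inv_mul_le_iff₀ ha]
  calc ‖a - b - (gam a - gam b) • vhat b‖ ≤ ‖a - b‖ + |gam a - gam b| * ‖vhat b‖ := by
        refine (norm_sub_le _ _).trans ?_
        rw [norm_smul, Real.norm_eq_abs]
    _ ≤ ‖a - b‖ + ‖a - b‖ * 1 := by
        gcongr
        exacts [abs_gam_sub_gam_le a b, norm_vhat_le b]
    _ ≤ gam a * (2 * ‖a - b‖) := by nlinarith [one_le_gam a, norm_nonneg (a - b)]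

theorem continuous_vhat : Continuous vhat :=
  (LipschitzWith.of_dist_le_mul (K := 2) fun a b => by
    rw [dist_eq_norm, dist_eq_norm]; exact norm_vhat_sub_le a b).continuous

theorem contDiff_gam : ContDiff ℝ 1 gam :=
  (contDiff_const.add (contDiff_norm_sq ℝ)).sqrt fun v => by positivity

theorem contDiff_vhat : ContDiff ℝ 1 vhat :=
  (contDiff_gam.inv fun v => (gam_pos v).ne').smul contDiff_id

/-- Bounded force fields that are Lipschitz in space and time, locally uniformly in time. -/
structure GoodField (B : ℝ) (L : ℝ → ℝ) (E : ℝ → E3 → E3) : Prop where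
  bdd : ∀ t x, ‖E t x‖ ≤ B
  lip : ∀ T t x y, |t| ≤ T → ‖E t x - E t y‖ ≤ L T * ‖x - y‖
  lip_time : ∀ T s t x, |s| ≤ T → |t| ≤ T → ‖E s x - E t x‖ ≤ L T * |s - t|

/-- The characteristic vector field `(v̂, E(t,x))` on phase space. -/
def phaseVF (E : ℝ → E3 → E3) (t : ℝ) (z : E3 × E3) : E3 × E3 := (vhat z.2, E t z.1)

/-- The characteristic flow from time `0` to time `t`. -/
def charFlow (E : ℝ → E3 → E3) (t : ℝ) (z : E3 × E3) : E3 × E3 := odeFlow (phaseVF E) 0 t z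

variable {B : ℝ} {L : ℝ → ℝ} {E : ℝ → E3 → E3}

theorem GoodField.bound_nonneg (h : GoodField B L E) : 0 ≤ B :=
  (norm_nonneg _).trans (h.bdd 0 0)

theorem GoodField.continuous_time (h : GoodField B L E) (x : E3) : Continuous fun t => E t x := by
  rw [continuous_iff_continuousAt]
  intro t
  rw [ContinuousAt, tendsto_iff_norm_sub_tendsto_zero]
  have h2 : Tendsto (fun s : ℝ => L (|t| + 1) * |s - t|) (𝓝 t) (𝓝 0) := by
    have : Continuous fun s : ℝ => L (|t| + 1) * |s - t| := by fun_prop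
    simpa using this.tendsto t
  refine squeeze_zero' (Eventually.of_forall fun _ => norm_nonneg _) ?_ h2
  have hev : ∀ᶠ s in 𝓝 t, |s| < |t| + 1 :=
    continuous_abs.continuousAt.eventually_lt continuousAt_const (by simp)
  filter_upwards [hev] with s hs
  exact h.lip_time _ _ _ _ hs.le (by simp)

theorem GoodField.lipVF (h : GoodField B L E) : LipVF (fun T => 2 + |L T|) (phaseVF E) where
  lip T t z w ht := by
    rw [phaseVF, phaseVF, Prod.mk_sub_mk, Prod.norm_def]
    have h1 : ‖z.1 - w.1‖ ≤ ‖z - w‖ := norm_fst_le (z - w)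
    have h2 : ‖z.2 - w.2‖ ≤ ‖z - w‖ := norm_snd_le (z - w)
    refine max_le ?_ ?_
    · refine (norm_vhat_sub_le _ _).trans ?_
      nlinarith [abs_nonneg (L T), norm_nonneg (z - w)]
    · refine (h.lip T t _ _ ht).trans ?_
      nlinarith [abs_nonneg (L T), norm_nonneg (z - w), le_abs_self (L T),
        mul_le_mul (le_abs_self (L T)) h1 (norm_nonneg _) (abs_nonneg _)]
  cont z := continuous_const.prodMk (h.continuous_time z.1)

theorem GoodField.norm_phaseVF_le (h : GoodField B L E) (t : ℝ) (z : E3 × E3) :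
    ‖phaseVF E t z‖ ≤ 1 + B := by
  rw [phaseVF, Prod.norm_def]
  have := h.bound_nonneg
  exact max_le ((norm_vhat_le _).trans (by linarith)) ((h.bdd _ _).trans (by linarith))

theorem GoodField.norm_odeFlow_sub_le (h : GoodField B L E) (s t u : ℝ) (z : E3 × E3) :
    ‖odeFlow (phaseVF E) s t z - odeFlow (phaseVF E) s u z‖ ≤ (1 + B) * |t - u| :=
  convex_univ.norm_image_sub_le_of_norm_hasDerivWithin_le (s := univ)
    (fun r _ => (h.lipVF.hasDerivAt_odeFlow s z r).hasDerivWithinAt)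
    (fun _ _ => h.norm_phaseVF_le _ _) trivial trivial

theorem GoodField.hasDerivAt_pos (h : GoodField B L E) (t : ℝ) (z : E3 × E3) :
    HasDerivAt (fun t => (charFlow E t z).1) (vhat (charFlow E t z).2) t :=
  (h.lipVF.hasDerivAt_odeFlow 0 z t).fst

theorem GoodField.hasDerivAt_vel (h : GoodField B L E) (t : ℝ) (z : E3 × E3) :
    HasDerivAt (fun t => (charFlow E t z).2) (E t (charFlow E t z).1) t :=
  (h.lipVF.hasDerivAt_odeFlow 0 z t).snd

theorem GoodField.charFlow_zero (h : GoodField B L E) (z : E3 × E3) : charFlow E 0 z = z :=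
  h.lipVF.odeFlow_self 0 z

theorem GoodField.norm_pos_sub_le (h : GoodField B L E) (s t : ℝ) (z : E3 × E3) :
    ‖(charFlow E s z).1 - (charFlow E t z).1‖ ≤ |s - t| := by
  have := convex_univ.norm_image_sub_le_of_norm_hasDerivWithin_le (s := univ)
    (fun r _ => (h.hasDerivAt_pos r z).hasDerivWithinAt)
    (fun r _ => norm_vhat_le _) (mem_univ t) (mem_univ s)
  simpa using this

theorem GoodField.norm_vel_sub_le (h : GoodField B L E) (s t : ℝ) (z : E3 × E3) :
    ‖(charFlow E s z).2 - (charFlow E t z).2‖ ≤ B * |s - t| := by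
  have := convex_univ.norm_image_sub_le_of_norm_hasDerivWithin_le (s := univ)
    (fun r _ => (h.hasDerivAt_vel r z).hasDerivWithinAt)
    (fun r _ => h.bdd _ _) (mem_univ t) (mem_univ s)
  simpa using this

theorem GoodField.continuous_odeFlow (h : GoodField B L E) (s t : ℝ) :
    Continuous (odeFlow (phaseVF E) s t) := by
  set T := |s| + |t|
  refine (LipschitzWith.of_dist_le_mul
    (K := (exp (abs (2 + |L T|) * |t - s|)).toNNReal) fun a b => ?_).continuous
  rw [dist_eq_norm, dist_eq_norm, coe_toNNReal _ (exp_pos _).le]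
  exact h.lipVF.norm_odeFlow_sub_le (T := T) (by simp [T]) (by simp [T]) _ _

theorem GoodField.continuous_charFlow_right (h : GoodField B L E) (t : ℝ) :
    Continuous (charFlow E t) := h.continuous_odeFlow 0 t

/-- One step of the symplectic Euler scheme. -/
def eulerStep (E : ℝ → E3 → E3) (h s : ℝ) (z : E3 × E3) : E3 × E3 :=
  (z.1 + h • vhat (z.2 + h • E s z.1), z.2 + h • E s z.1)

theorem GoodField.norm_odeFlow_sub_eulerStep_le (hE : GoodField B L E) {T h s : ℝ}
    (hs : |s| ≤ T) (hsh : |s + h| ≤ T) (z : E3 × E3) :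
    ‖eulerStep E h s z - odeFlow (phaseVF E) s (s + h) z‖ ≤
      (2 + |L T|) * (2 + 2 * B) * h ^ 2 := by
  have hB := hE.bound_nonneg
  set v' := z.2 + h • E s z.1 with hv'
  have key := (convex_uIcc s (s + h)).norm_image_sub_le_of_norm_hasDerivWithin_le
    (f := fun τ => (τ - s) • ((vhat v', E s z.1) : E3 × E3) - odeFlow (phaseVF E) s τ z)
    (f' := fun τ => ((vhat v', E s z.1) : E3 × E3) - phaseVF E τ (odeFlow (phaseVF E) s τ z))
    (C := (2 + |L T|) * (2 + 2 * B) * |h|)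
    (fun τ _ => by
      have h1 : HasDerivAt (fun τ => (τ - s) • ((vhat v', E s z.1) : E3 × E3))
          (vhat v', E s z.1) τ := by
        simpa using ((hasDerivAt_id τ).sub_const s).smul_const ((vhat v', E s z.1) : E3 × E3)
      exact (h1.sub (hE.lipVF.hasDerivAt_odeFlow s z τ)).hasDerivWithinAt)
    (fun τ hτ => by
      have hτs : |τ - s| ≤ |h| := by
        have := abs_sub_left_of_mem_uIcc hτ
        simpa using this
      have hτT : |τ| ≤ T := abs_le.2 (uIcc_subset_Icc (abs_le.1 hs) (abs_le.1 hsh) hτ)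
      have hflow := hE.norm_odeFlow_sub_le s s τ z
      rw [hE.lipVF.odeFlow_self, abs_sub_comm] at hflow
      set w := odeFlow (phaseVF E) s τ z
      have hw1 : ‖z.1 - w.1‖ ≤ (1 + B) * |h| :=
        (norm_fst_le (z - w)).trans (hflow.trans (by gcongr))
      have hw2 : ‖z.2 - w.2‖ ≤ (1 + B) * |h| :=
        (norm_snd_le (z - w)).trans (hflow.trans (by gcongr))
      have hl := abs_nonneg (L T)
      have hh := abs_nonneg h
      rw [phaseVF, Prod.mk_sub_mk, Prod.norm_def]
      refine max_le ?_ ?_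
      · have h1 : ‖v' - w.2‖ ≤ (1 + 2 * B) * |h| := by
          have : v' - w.2 = (z.2 - w.2) + h • E s z.1 := by rw [hv']; abel
          rw [this]
          refine (norm_add_le _ _).trans ?_
          rw [norm_smul, Real.norm_eq_abs]
          nlinarith [hE.bdd s z.1]
        refine (norm_vhat_sub_le _ _).trans ?_
        have : 0 ≤ |L T| * (2 + 2 * B) * |h| := by positivity
        nlinarith
      · have e : E s z.1 - E τ w.1 = (E s z.1 - E τ z.1) + (E τ z.1 - E τ w.1) := by abel
        rw [e]
        refine (norm_add_le _ _).trans ?_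
        have h1 : ‖E s z.1 - E τ z.1‖ ≤ |L T| * |h| :=
          (hE.lip_time T s τ _ hs hτT).trans
            (mul_le_mul (le_abs_self _) (by rwa [abs_sub_comm]) (abs_nonneg _) hl)
        have h2 : ‖E τ z.1 - E τ w.1‖ ≤ |L T| * ((1 + B) * |h|) :=
          (hE.lip T τ _ _ hτT).trans (mul_le_mul (le_abs_self _) hw1 (norm_nonneg _) hl)
        have : 0 ≤ 2 * (2 + 2 * B) * |h| := by positivity
        have h3 : 0 ≤ |L T| * B * |h| := by positivity
        nlinarith) left_mem_uIcc right_mem_uIcc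
  simp only [add_sub_cancel_left, sub_self, zero_smul, zero_sub, hE.lipVF.odeFlow_self,
    sub_neg_eq_add, Real.norm_eq_abs] at key
  have e : h • ((vhat v', E s z.1) : E3 × E3) - odeFlow (phaseVF E) s (s + h) z + z =
      eulerStep E h s z - odeFlow (phaseVF E) s (s + h) z := by
    have : eulerStep E h s z = h • ((vhat v', E s z.1) : E3 × E3) + z := by
      ext1 <;> simp [eulerStep, ← hv'] <;> simp [hv', add_comm]
    rw [this]; abel
  rw [e] at key
  refine key.trans (le_of_eq ?_)
  rw [mul_assoc _ |h|, ← sq, sq_abs]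

/-- Iterates of the symplectic Euler scheme. -/
def eulerIter (E : ℝ → E3 → E3) (h s : ℝ) : ℕ → E3 × E3 → E3 × E3
  | 0, z => z
  | k + 1, z => eulerStep E h (s + k * h) (eulerIter E h s k z)

theorem GoodField.norm_eulerIter_sub_le (hE : GoodField B L E) {T h s : ℝ} {n : ℕ}
    (hT : |s| + n * |h| ≤ T) (z : E3 × E3) : ∀ k : ℕ, k ≤ n →
    ‖eulerIter E h s k z - odeFlow (phaseVF E) s (s + k * h) z‖ ≤
      k * ((2 + |L T|) * (2 + 2 * B) * h ^ 2) * exp (k * ((2 + |L T|) * |h|)) := by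
  have hB := hE.bound_nonneg
  have habs : ∀ k : ℕ, k ≤ n → |s + k * h| ≤ T := fun k hk => by
    refine (abs_add_le _ _).trans ?_
    rw [abs_mul, Nat.abs_cast]
    have : (k : ℝ) * |h| ≤ n * |h| := by gcongr
    linarith
  intro k
  induction k with
  | zero => intro _; simp [eulerIter, hE.lipVF.odeFlow_self]
  | succ k ih =>
    intro hk
    have ih := ih (Nat.le_of_succ_le hk)
    have h1 := habs k (Nat.le_of_succ_le hk)
    have h2 : |s + k * h + h| ≤ T := by
      have := habs (k + 1) hk
      push_cast at this
      rwa [add_assoc, ← add_one_mul]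
    set y := eulerIter E h s k z
    set C := (2 + |L T|) * (2 + 2 * B) * h ^ 2
    have hC : 0 ≤ C := by positivity
    have h3 := hE.norm_odeFlow_sub_eulerStep_le h1 h2 y
    have h4 := hE.lipVF.norm_odeFlow_sub_le h1 h2 y (odeFlow (phaseVF E) s (s + k * h) z)
    rw [hE.lipVF.odeFlow_odeFlow, add_sub_cancel_left, abs_of_nonneg (by positivity)] at h4
    have e : s + ((k + 1 : ℕ) : ℝ) * h = s + k * h + h := by push_cast; ring
    rw [e, eulerIter]
    set a := (2 + |L T|) * |h| with ha
    have ha0 : 0 ≤ a := by positivity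
    have hexp : exp ((k + 1 : ℕ) * a) = exp (k * a) * exp a := by
      rw [← exp_add]; push_cast; ring_nf
    have h5 : 1 ≤ exp ((k + 1 : ℕ) * a) := one_le_exp (by positivity)
    calc ‖eulerStep E h (s + k * h) y - odeFlow (phaseVF E) s (s + k * h + h) z‖
        ≤ C + exp a * ‖y - odeFlow (phaseVF E) s (s + k * h) z‖ := by
          refine (norm_sub_le_norm_sub_add_norm_sub _
            (odeFlow (phaseVF E) (s + k * h) (s + k * h + h) y) _).trans ?_
          exact add_le_add h3 h4
      _ ≤ C + exp a * (k * C * exp (k * a)) := by gcongr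
      _ ≤ C * exp ((k + 1 : ℕ) * a) + exp a * (k * C * exp (k * a)) := by
          gcongr
          exact le_mul_of_one_le_right hC h5
      _ = ((k + 1 : ℕ) : ℝ) * C * exp ((k + 1 : ℕ) * a) := by rw [hexp]; push_cast; ring

theorem GoodField.continuous_space (hE : GoodField B L E) (t : ℝ) : Continuous (E t) :=
  (LipschitzWith.of_dist_le_mul (K := (L |t|).toNNReal) fun a b => by
    rw [dist_eq_norm, dist_eq_norm]
    exact (hE.lip _ t a b le_rfl).trans (by gcongr; exact le_coe_toNNReal _)).continuous

theorem measurePreserving_shear_snd {a : E3 → E3} (ha : Continuous a) :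
    MeasurePreserving (fun p : E3 × E3 => (p.1, p.2 + a p.1)) volume volume := by
  rw [Measure.volume_eq_prod]
  exact (MeasurePreserving.id volume).skew_product (g := fun x v => v + a x)
    (by fun_prop) (Eventually.of_forall fun x => (measurePreserving_add_right volume (a x)).map_eq)

theorem measurePreserving_shear_fst {a : E3 → E3} (ha : Continuous a) :
    MeasurePreserving (fun p : E3 × E3 => (p.1 + a p.2, p.2)) volume volume := by
  have hsw : MeasurePreserving (Prod.swap : E3 × E3 → E3 × E3) volume volume := by
    rw [Measure.volume_eq_prod]; exact Measure.measurePreserving_swap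
  exact (hsw.comp (measurePreserving_shear_snd ha)).comp hsw

theorem GoodField.measurePreserving_eulerStep (hE : GoodField B L E) (h s : ℝ) :
    MeasurePreserving (eulerStep E h s) volume volume := by
  have h1 := measurePreserving_shear_snd (a := fun x => h • E s x)
    ((hE.continuous_space s).const_smul h)
  have h2 := measurePreserving_shear_fst (a := fun v => h • vhat v) (continuous_vhat.const_smul h)
  exact h2.comp h1

theorem GoodField.measurePreserving_eulerIter (hE : GoodField B L E) (h s : ℝ) (k : ℕ) :
    MeasurePreserving (eulerIter E h s k) volume volume := by
  induction k with
  | zero => exact MeasurePreserving.id volume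
  | succ k ih => exact (hE.measurePreserving_eulerStep h _).comp ih

theorem GoodField.tendsto_eulerIter (hE : GoodField B L E) (s t : ℝ) (z : E3 × E3) :
    Tendsto (fun n : ℕ => eulerIter E ((t - s) / (n + 1 : ℕ)) s (n + 1) z) atTop
      (𝓝 (odeFlow (phaseVF E) s t z)) := by
  rw [tendsto_iff_norm_sub_tendsto_zero]
  set T := |s| + |t - s|
  set C := (2 + |L T|) * (2 + 2 * B) * (t - s) ^ 2 * exp ((2 + |L T|) * |t - s|)
  have hlim : Tendsto (fun n : ℕ => C * (1 / ((n : ℝ) + 1))) atTop (𝓝 0) := by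
    simpa using tendsto_one_div_add_atTop_nhds_zero_nat.const_mul C
  refine squeeze_zero (fun _ => norm_nonneg _) (fun n => ?_) hlim
  have hn : (0 : ℝ) < (n + 1 : ℕ) := by positivity
  have hb := hE.norm_eulerIter_sub_le (T := T) (h := (t - s) / (n + 1 : ℕ)) (s := s) (n := n + 1)
    (by rw [abs_div, Nat.abs_cast, mul_div_cancel₀ _ hn.ne']) z (n + 1) le_rfl
  rw [mul_div_cancel₀ _ hn.ne', add_sub_cancel] at hb
  refine hb.trans (le_of_eq ?_)
  rw [abs_div, Nat.abs_cast]
  have e : ((n + 1 : ℕ) : ℝ) * ((2 + |L T|) * (|t - s| / (n + 1 : ℕ))) = (2 + |L T|) * |t - s| := by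
    field_simp
  rw [e]
  simp only [C]
  push_cast
  field_simp

theorem volume_preimage_le_of_tendsto {S : ℕ → E3 × E3 → E3 × E3} {Φ : E3 × E3 → E3 × E3}
    (hS : ∀ n, MeasurePreserving (S n) volume volume)
    (hlim : ∀ z, Tendsto (fun n => S n z) atTop (𝓝 (Φ z))) (hΦ : Continuous Φ)
    (A : Set (E3 × E3)) : volume (Φ ⁻¹' A) ≤ volume A := by
  have hopen : ∀ U : Set (E3 × E3), IsOpen U → volume (Φ ⁻¹' U) ≤ volume U := fun U hU => by
    calc volume (Φ ⁻¹' U) = ∫⁻ z, (Φ ⁻¹' U).indicator 1 z := by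
          rw [lintegral_indicator_one (hU.preimage hΦ).measurableSet]
      _ ≤ ∫⁻ z, liminf (fun n => (S n ⁻¹' U).indicator (1 : E3 × E3 → ENNReal) z) atTop := by
          refine lintegral_mono fun z => ?_
          by_cases hz : Φ z ∈ U
          · have hev : ∀ᶠ n in atTop, S n z ∈ U := (hlim z).eventually (hU.mem_nhds hz)
            rw [indicator_of_mem (by exact hz)]
            refine le_liminf_of_le (by isBoundedDefault) ?_
            filter_upwards [hev] with n hn
            rw [indicator_of_mem (by exact hn)]
          · rw [indicator_of_notMem (by exact hz)]
            exact zero_le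
      _ ≤ liminf (fun n => ∫⁻ z, (S n ⁻¹' U).indicator (1 : E3 × E3 → ENNReal) z) atTop :=
          lintegral_liminf_le fun n =>
            measurable_one.indicator ((hS n).measurable hU.measurableSet)
      _ = volume U := by
          have : ∀ n, ∫⁻ z, (S n ⁻¹' U).indicator (1 : E3 × E3 → ENNReal) z = volume U :=
            fun n => by
              rw [lintegral_indicator_one ((hS n).measurable hU.measurableSet),
                (hS n).measure_preimage hU.measurableSet.nullMeasurableSet]
          simp [this]
  rw [Set.measure_eq_iInf_isOpen A]
  refine le_iInf fun U => le_iInf fun hAU => le_iInf fun hU => ?_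
  exact (measure_mono (preimage_mono hAU)).trans (hopen U hU)

/-- Liouville's theorem. -/
theorem GoodField.measurePreserving_odeFlow (hE : GoodField B L E) (s t : ℝ) :
    MeasurePreserving (odeFlow (phaseVF E) s t) volume volume := by
  have hle : ∀ s t A, volume (odeFlow (phaseVF E) s t ⁻¹' A) ≤ volume A := fun s t A =>
    volume_preimage_le_of_tendsto (fun n => hE.measurePreserving_eulerIter _ s (n + 1))
      (fun z => hE.tendsto_eulerIter s t z) (hE.continuous_odeFlow s t) A
  refine ⟨(hE.continuous_odeFlow s t).measurable, ?_⟩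
  ext A hA
  rw [Measure.map_apply (hE.continuous_odeFlow s t).measurable hA]
  refine le_antisymm (hle s t A) ?_
  have h1 := hle t s (odeFlow (phaseVF E) s t ⁻¹' A)
  rw [preimage_preimage] at h1
  simpa [hE.lipVF.odeFlow_odeFlow_self] using h1

theorem GoodField.measurePreserving_charFlow (hE : GoodField B L E) (t : ℝ) :
    MeasurePreserving (charFlow E t) volume volume := hE.measurePreserving_odeFlow 0 t

end PhaseFlow

section Density
open Filter Topology

theorem integrable_inv_one_add_norm_pow_four :
    Integrable (fun x : E3 => ((1 + ‖x‖) ^ 4)⁻¹) volume := by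
  have h := integrable_one_add_norm (E := E3) (μ := volume) (r := 4) (by simp; norm_num)
  refine h.congr (Eventually.of_forall fun x => ?_)
  simp only
  rw [rpow_neg (by positivity)]
  norm_cast

theorem integrable_prod_inv_one_add_norm_pow_four :
    Integrable (fun z : E3 × E3 => ((1 + ‖z.1‖) ^ 4)⁻¹ * ((1 + ‖z.2‖) ^ 4)⁻¹) volume := by
  rw [Measure.volume_eq_prod]
  exact integrable_inv_one_add_norm_pow_four.mul_prod integrable_inv_one_add_norm_pow_four

/-- Continuous nonnegative phase-space densities with polynomial decay. -/
structure DecayData (D : ℝ) (g : E3 × E3 → ℝ) : Prop where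
  cont : Continuous g
  nonneg : ∀ z, 0 ≤ g z
  decay : ∀ z, g z ≤ D * ((1 + ‖z.1‖) ^ 4)⁻¹ * ((1 + ‖z.2‖) ^ 5)⁻¹

/-- The measure with density `g` on phase space. -/
def massMeasure (g : E3 × E3 → ℝ) : Measure (E3 × E3) :=
  volume.withDensity fun z => ENNReal.ofReal (g z)

variable {D : ℝ} {g : E3 × E3 → ℝ}

theorem DecayData.D_nonneg (hg : DecayData D g) : 0 ≤ D := by
  have := (hg.nonneg 0).trans (hg.decay 0)
  simpa using this

theorem DecayData.gam_mul_le (hg : DecayData D g) (z : E3 × E3) :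
    gam z.2 * g z ≤ D * (((1 + ‖z.1‖) ^ 4)⁻¹ * ((1 + ‖z.2‖) ^ 4)⁻¹) := by
  calc gam z.2 * g z ≤ (1 + ‖z.2‖) * (D * ((1 + ‖z.1‖) ^ 4)⁻¹ * ((1 + ‖z.2‖) ^ 5)⁻¹) :=
        mul_le_mul (gam_le _) (hg.decay z) (hg.nonneg z) (by positivity)
    _ = _ := by field_simp

theorem DecayData.le_prod (hg : DecayData D g) (z : E3 × E3) :
    g z ≤ D * (((1 + ‖z.1‖) ^ 4)⁻¹ * ((1 + ‖z.2‖) ^ 4)⁻¹) := by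
  refine le_trans ?_ (hg.gam_mul_le z)
  exact le_mul_of_one_le_left (hg.nonneg z) (one_le_gam _)

theorem DecayData.le_vel (hg : DecayData D g) (z : E3 × E3) :
    g z ≤ D * ((1 + ‖z.2‖) ^ 4)⁻¹ := by
  refine (hg.le_prod z).trans (mul_le_mul_of_nonneg_left ?_ hg.D_nonneg)
  refine mul_le_of_le_one_left (by positivity) (inv_le_one_of_one_le₀ ?_)
  exact one_le_pow₀ (by linarith [norm_nonneg z.1])

theorem DecayData.integrable (hg : DecayData D g) : Integrable g volume := by
  refine (integrable_prod_inv_one_add_norm_pow_four.const_mul D).mono'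
    hg.cont.aestronglyMeasurable (Eventually.of_forall fun z => ?_)
  rw [norm_of_nonneg (hg.nonneg z)]
  exact hg.le_prod z

theorem DecayData.isFiniteMeasure (hg : DecayData D g) : IsFiniteMeasure (massMeasure g) :=
  isFiniteMeasure_withDensity_ofReal hg.integrable.2

theorem DecayData.integral_massMeasure (hg : DecayData D g) (F : E3 × E3 → ℝ) :
    ∫ z, F z ∂(massMeasure g) = ∫ z, g z * F z := by
  rw [massMeasure, integral_withDensity_eq_integral_toReal_smul₀]
  · refine integral_congr_ae (Eventually.of_forall fun z => ?_)
    simp [ENNReal.toReal_ofReal (hg.nonneg z)]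
  · exact hg.cont.measurable.ennreal_ofReal.aemeasurable
  · exact Eventually.of_forall fun z => ENNReal.ofReal_lt_top

theorem DecayData.integrable_massMeasure_iff (hg : DecayData D g) (F : E3 × E3 → ℝ) :
    Integrable F (massMeasure g) ↔ Integrable (fun z => g z * F z) volume := by
  rw [massMeasure, integrable_withDensity_iff_integrable_smul₀']
  · refine integrable_congr (Eventually.of_forall fun z => ?_)
    simp [ENNReal.toReal_ofReal (hg.nonneg z)]
  · exact hg.cont.measurable.ennreal_ofReal.aemeasurable
  · exact Eventually.of_forall fun z => ENNReal.ofReal_lt_top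

theorem DecayData.integrable_gam (hg : DecayData D g) :
    Integrable (fun z : E3 × E3 => gam z.2) (massMeasure g) := by
  rw [hg.integrable_massMeasure_iff]
  refine (integrable_prod_inv_one_add_norm_pow_four.const_mul D).mono' ?_
    (Eventually.of_forall fun z => ?_)
  · exact (hg.cont.mul (contDiff_gam.continuous.comp continuous_snd)).aestronglyMeasurable
  · rw [norm_of_nonneg (mul_nonneg (hg.nonneg z) (gam_pos _).le), mul_comm]
    exact hg.gam_mul_le z

/-- The constant in the bound of the spatial density by velocity growth. -/
def densConst (D : ℝ) : ℝ :=
  D * (∫ v : E3, ((1 + ‖v‖) ^ 4)⁻¹) * volume.real (Metric.ball (0 : E3) 1)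

theorem DecayData.densConst_nonneg (hg : DecayData D g) : 0 ≤ densConst D :=
  mul_nonneg (mul_nonneg hg.D_nonneg (integral_nonneg fun v => by positivity)) measureReal_nonneg

theorem DecayData.measure_preimage_le (hg : DecayData D g) {Φ : E3 × E3 → E3 × E3}
    (hΦ : MeasurePreserving Φ volume volume) {Q : ℝ} (hQ : 0 ≤ Q)
    (hV : ∀ z, ‖(Φ z).2‖ ≤ ‖z.2‖ + Q) {A : Set E3} (hA : MeasurableSet A) :
    massMeasure g {z | (Φ z).1 ∈ A} ≤
      ENNReal.ofReal (D * (1 + Q) ^ 4 * ∫ v : E3, ((1 + ‖v‖) ^ 4)⁻¹) * volume A := by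
  have hm : MeasurableSet {z | (Φ z).1 ∈ A} := hΦ.measurable.fst hA
  have hD := hg.D_nonneg
  set F : E3 × E3 → ENNReal := fun z =>
    A.indicator 1 z.1 * ENNReal.ofReal (D * (1 + Q) ^ 4 * ((1 + ‖z.2‖) ^ 4)⁻¹) with hF
  have hFm : Measurable F := by
    refine Measurable.mul ((measurable_one.indicator hA).comp measurable_fst) ?_
    refine ENNReal.measurable_ofReal.comp (Continuous.measurable ?_)
    refine continuous_const.mul (Continuous.inv₀ (by fun_prop) fun z => by positivity)
  calc massMeasure g {z | (Φ z).1 ∈ A}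
      = ∫⁻ z in {z | (Φ z).1 ∈ A}, ENNReal.ofReal (g z) := withDensity_apply _ hm
    _ ≤ ∫⁻ z, F (Φ z) := by
        rw [← lintegral_indicator hm]
        refine lintegral_mono fun z => ?_
        by_cases hz : (Φ z).1 ∈ A
        · rw [indicator_of_mem (by exact hz)]
          simp only [hF, indicator_of_mem hz, Pi.one_apply, one_mul]
          refine ENNReal.ofReal_le_ofReal ((hg.le_vel z).trans ?_)
          rw [mul_assoc]
          refine mul_le_mul_of_nonneg_left ?_ hD
          rw [← div_eq_mul_inv, le_div_iff₀ (by positivity), inv_mul_le_iff₀ (by positivity),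
            ← mul_pow]
          refine pow_le_pow_left₀ (by positivity) ?_ _
          nlinarith [hV z, norm_nonneg z.2]
        · rw [indicator_of_notMem (by exact hz)]
          exact zero_le
    _ = ∫⁻ z, F z := hΦ.lintegral_comp hFm
    _ = _ := by
        rw [Measure.volume_eq_prod, lintegral_prod _ hFm.aemeasurable]
        simp only [hF]
        have : ∀ x : E3, ∫⁻ v : E3, A.indicator 1 x *
            ENNReal.ofReal (D * (1 + Q) ^ 4 * ((1 + ‖v‖) ^ 4)⁻¹) =
            A.indicator 1 x * ENNReal.ofReal (D * (1 + Q) ^ 4 * ∫ v : E3, ((1 + ‖v‖) ^ 4)⁻¹) := by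
          intro x
          rw [lintegral_const_mul' _ _ (by by_cases hx : x ∈ A <;> simp [hx])]
          congr 1
          rw [← integral_const_mul, ofReal_integral_eq_lintegral_ofReal
            (integrable_inv_one_add_norm_pow_four.const_mul _)]
          exact Eventually.of_forall fun v => by positivity
        simp only [this]
        rw [lintegral_mul_const' _ _ ENNReal.ofReal_ne_top, lintegral_indicator_one hA, mul_comm]

/-- The mass of the particles whose position `X z` lies within distance `r` of the origin. -/
def massIn (μ : Measure (E3 × E3)) (X : E3 × E3 → E3) (r : ℝ) : ℝ := μ.real {z | ‖X z‖ ≤ r}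

/-- A nondecreasing mass function whose shells have mass at most `b` times the cube shell. -/
structure ShellBound (b : ℝ) (N : ℝ → ℝ) : Prop where
  nonneg : ∀ r, 0 ≤ N r
  mono : Monotone N
  zero : N 0 = 0
  shell : ∀ r s, 0 ≤ r → r ≤ s → N s - N r ≤ b * (s ^ 3 - r ^ 3)

theorem DecayData.shellBound (hg : DecayData D g) {Φ : E3 × E3 → E3 × E3}
    (hΦ : MeasurePreserving Φ volume volume) {Q : ℝ} (hQ : 0 ≤ Q)
    (hV : ∀ z, ‖(Φ z).2‖ ≤ ‖z.2‖ + Q) :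
    ShellBound (densConst D * (1 + Q) ^ 4) (massIn (massMeasure g) fun z => (Φ z).1) := by
  have := hg.isFiniteMeasure
  have hD := hg.D_nonneg
  have hI : 0 ≤ ∫ v : E3, ((1 + ‖v‖) ^ 4)⁻¹ := integral_nonneg fun v => by positivity
  have hm : ∀ r, MeasurableSet {z | ‖(Φ z).1‖ ≤ r} := fun r =>
    measurableSet_le hΦ.measurable.fst.norm measurable_const
  have hmono : Monotone (massIn (massMeasure g) fun z => (Φ z).1) := fun r s hrs =>
    measureReal_mono fun z (hz : _ ≤ _) => hz.trans hrs
  have hball : ∀ r : ℝ, 0 ≤ r → volume.real (Metric.closedBall (0 : E3) r) =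
      r ^ 3 * volume.real (Metric.ball (0 : E3) 1) := fun r hr => by
    rw [Measure.addHaar_real_closedBall _ _ hr]
    simp
  have key : ∀ A : Set E3, MeasurableSet A → volume A ≠ ⊤ →
      (massMeasure g).real {z | (Φ z).1 ∈ A} ≤
      D * (1 + Q) ^ 4 * (∫ v : E3, ((1 + ‖v‖) ^ 4)⁻¹) * volume.real A := fun A hA hfin => by
    have h1 := hg.measure_preimage_le hΦ hQ hV hA
    have h2 := ENNReal.toReal_mono (ENNReal.mul_ne_top ENNReal.ofReal_ne_top hfin) h1
    rw [ENNReal.toReal_mul, ENNReal.toReal_ofReal (by positivity)] at h2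
    exact h2
  refine ⟨fun r => measureReal_nonneg, hmono, ?_, fun r s hr hrs => ?_⟩
  · refine le_antisymm ?_ measureReal_nonneg
    have := key {0} (measurableSet_singleton 0) (by simp)
    simpa [massIn, measureReal_def] using this
  · have hsub : {z | ‖(Φ z).1‖ ≤ r} ⊆ {z | ‖(Φ z).1‖ ≤ s} := fun z (hz : _ ≤ _) => hz.trans hrs
    rw [massIn, massIn, ← measureReal_sdiff hsub (hm r)]
    have h1 := key (Metric.closedBall 0 s \ Metric.closedBall 0 r)
      (measurableSet_closedBall.diff measurableSet_closedBall)
      ((measure_mono sdiff_subset).trans_lt measure_closedBall_lt_top).ne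
    rw [measureReal_sdiff (Metric.closedBall_subset_closedBall hrs) measurableSet_closedBall
      measure_closedBall_lt_top.ne, hball s (hr.trans hrs), hball r hr] at h1
    have e : {z | ‖(Φ z).1‖ ≤ s} \ {z | ‖(Φ z).1‖ ≤ r} =
        {z | (Φ z).1 ∈ Metric.closedBall 0 s \ Metric.closedBall 0 r} := by
      ext z; simp
    rw [e]
    refine h1.trans (le_of_eq ?_)
    rw [densConst]; ring

/-- The capped radial profile `min(N(r)/r³, K)`. -/
def capProfile (K : ℝ) (N : ℝ → ℝ) (r : ℝ) : ℝ := min (N r / r ^ 3) K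

/-- The capped radial field generated by the mass function `N`. -/
def capField (K : ℝ) (N : ℝ → ℝ) (x : E3) : E3 := ((4 * π)⁻¹ * capProfile K N ‖x‖) • x

theorem inv_four_pi_nonneg : 0 ≤ (4 * π)⁻¹ := by positivity

theorem seven_mul_inv_four_pi_le : 7 * (4 * π)⁻¹ ≤ 1 := by
  rw [← div_eq_mul_inv, div_le_one (by positivity)]
  linarith [pi_gt_three]

theorem ShellBound.le_cube {b : ℝ} {N : ℝ → ℝ} (h : ShellBound b N) {r : ℝ} (hr : 0 ≤ r) :
    N r ≤ b * r ^ 3 := by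
  have := h.shell 0 r le_rfl hr
  rw [h.zero] at this
  simpa using this

theorem ShellBound.const_nonneg {b : ℝ} {N : ℝ → ℝ} (h : ShellBound b N) : 0 ≤ b := by
  simpa using (h.nonneg 1).trans (h.le_cube zero_le_one)

theorem ShellBound.div_cube_le {b : ℝ} {N : ℝ → ℝ} (h : ShellBound b N) {r : ℝ} (hr : 0 ≤ r) :
    N r / r ^ 3 ≤ b := by
  rcases hr.eq_or_lt with rfl | hr
  · simpa using h.const_nonneg
  · rw [div_le_iff₀ (by positivity)]
    exact h.le_cube hr.le

theorem capProfile_nonneg {K : ℝ} (hK : 0 ≤ K) {N : ℝ → ℝ} (hN : ∀ r, 0 ≤ N r) {r : ℝ}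
    (hr : 0 ≤ r) : 0 ≤ capProfile K N r :=
  le_min (div_nonneg (hN r) (by positivity)) hK

theorem norm_capField {K : ℝ} (hK : 0 ≤ K) {N : ℝ → ℝ} (hN : ∀ r, 0 ≤ N r) (x : E3) :
    ‖capField K N x‖ = (4 * π)⁻¹ * (capProfile K N ‖x‖ * ‖x‖) := by
  rw [capField, norm_smul, norm_mul, norm_of_nonneg inv_four_pi_nonneg,
    norm_of_nonneg (capProfile_nonneg hK hN (norm_nonneg x)), mul_assoc]

theorem inv_four_pi_le_one : (4 * π)⁻¹ ≤ 1 := by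
  linarith [seven_mul_inv_four_pi_le, inv_four_pi_nonneg]

theorem norm_capField_le {K M : ℝ} (hK : 0 ≤ K) {N : ℝ → ℝ} (hN : ∀ r, 0 ≤ N r)
    (hM : ∀ r, N r ≤ M) (x : E3) : ‖capField K N x‖ ≤ M + K := by
  have hM0 : 0 ≤ M := (hN 0).trans (hM 0)
  rw [norm_capField hK hN]
  have h0 : 0 ≤ capProfile K N ‖x‖ * ‖x‖ :=
    mul_nonneg (capProfile_nonneg hK hN (norm_nonneg x)) (norm_nonneg x)
  have h1 : capProfile K N ‖x‖ * ‖x‖ ≤ M + K := by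
    rcases le_total ‖x‖ 1 with hx | hx
    · have : capProfile K N ‖x‖ ≤ K := min_le_right _ _
      nlinarith [norm_nonneg x]
    · have h2 : capProfile K N ‖x‖ ≤ M / ‖x‖ ^ 3 :=
        (min_le_left _ _).trans (by gcongr; exact hM _)
      calc capProfile K N ‖x‖ * ‖x‖ ≤ M / ‖x‖ ^ 3 * ‖x‖ := by gcongr
        _ = M / ‖x‖ ^ 2 := by field_simp
        _ ≤ M := div_le_self hM0 (one_le_pow₀ hx)
        _ ≤ M + K := by linarith
  nlinarith [inv_four_pi_le_one, inv_four_pi_nonneg]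

theorem ShellBound.abs_capProfile_sub_mul_le {b K : ℝ} {N : ℝ → ℝ} (h : ShellBound b N) {r s : ℝ}
    (hr : 0 ≤ r) (hrs : r ≤ s) :
    |capProfile K N r - capProfile K N s| * r ≤ 3 * b * (s - r) := by
  rcases hr.eq_or_lt with rfl | hr
  · have := h.const_nonneg
    simp only [mul_zero]; nlinarith
  have hs : 0 < s := hr.trans_le hrs
  have h1 : |N r / r ^ 3 - N s / s ^ 3| ≤ b * (s ^ 3 - r ^ 3) / s ^ 3 := by
    have hcube : r ^ 3 ≤ s ^ 3 := by gcongr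
    have e : N r / r ^ 3 - N s / s ^ 3 =
        N r / r ^ 3 * ((s ^ 3 - r ^ 3) / s ^ 3) - (N s - N r) / s ^ 3 := by
      field_simp; ring
    have h2 : N r / r ^ 3 * ((s ^ 3 - r ^ 3) / s ^ 3) ≤ b * ((s ^ 3 - r ^ 3) / s ^ 3) :=
      mul_le_mul_of_nonneg_right (h.div_cube_le hr.le)
        (div_nonneg (by linarith) (by positivity))
    have h3 : 0 ≤ N r / r ^ 3 * ((s ^ 3 - r ^ 3) / s ^ 3) :=
      mul_nonneg (div_nonneg (h.nonneg r) (by positivity))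
        (div_nonneg (by linarith) (by positivity))
    have h4 : (N s - N r) / s ^ 3 ≤ b * ((s ^ 3 - r ^ 3) / s ^ 3) := by
      rw [← mul_div_assoc]
      gcongr
      exact h.shell r s hr.le hrs
    have h5 : 0 ≤ (N s - N r) / s ^ 3 :=
      div_nonneg (sub_nonneg.2 (h.mono hrs)) (by positivity)
    rw [e, mul_div_assoc]
    exact abs_sub_le_of_nonneg_of_le h3 h2 h5 h4
  have h2 : |capProfile K N r - capProfile K N s| ≤ |N r / r ^ 3 - N s / s ^ 3| := by
    simpa [capProfile] using abs_min_sub_min_le_max (N r / r ^ 3) K (N s / s ^ 3) K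
  have hb := h.const_nonneg
  calc |capProfile K N r - capProfile K N s| * r ≤ b * (s ^ 3 - r ^ 3) / s ^ 3 * s := by
        have h0 := h2.trans h1
        exact mul_le_mul h0 hrs hr.le ((abs_nonneg _).trans h0)
    _ = b * (s - r) * ((s ^ 2 + s * r + r ^ 2) / s ^ 2) := by field_simp; ring
    _ ≤ b * (s - r) * 3 := by
        refine mul_le_mul_of_nonneg_left ?_ (mul_nonneg hb (by linarith))
        rw [div_le_iff₀ (by positivity)]
        nlinarith
    _ = 3 * b * (s - r) := by ring

theorem ShellBound.norm_capField_sub_le {b K : ℝ} (hK : 0 ≤ K) {N : ℝ → ℝ} (h : ShellBound b N)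
    (x y : E3) : ‖capField K N x - capField K N y‖ ≤ b * ‖x - y‖ := by
  wlog hxy : ‖x‖ ≤ ‖y‖ generalizing x y
  · rw [norm_sub_rev, norm_sub_rev x y]
    exact this y x (le_of_not_ge hxy)
  have e : capField K N x - capField K N y = (4 * π)⁻¹ • (capProfile K N ‖y‖ • (x - y) +
      (capProfile K N ‖x‖ - capProfile K N ‖y‖) • x) := by
    simp only [capField]; module
  have h1 := h.abs_capProfile_sub_mul_le (K := K) (norm_nonneg x) hxy
  have h2 : capProfile K N ‖y‖ ≤ b := (min_le_left _ _).trans (h.div_cube_le (norm_nonneg y))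
  have h3 : ‖y‖ - ‖x‖ ≤ ‖x - y‖ := by rw [norm_sub_rev]; exact norm_sub_norm_le _ _
  have hb := h.const_nonneg
  have h4 : ‖capProfile K N ‖y‖ • (x - y) + (capProfile K N ‖x‖ - capProfile K N ‖y‖) • x‖ ≤
      4 * b * ‖x - y‖ := by
    refine (norm_add_le _ _).trans ?_
    rw [norm_smul, norm_smul, norm_of_nonneg (capProfile_nonneg hK h.nonneg (norm_nonneg y)),
      Real.norm_eq_abs]
    nlinarith [norm_nonneg (x - y)]
  rw [e, norm_smul, norm_of_nonneg inv_four_pi_nonneg]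
  have h5 : 0 ≤ b * ‖x - y‖ := by positivity
  nlinarith [seven_mul_inv_four_pi_le, inv_four_pi_nonneg]

theorem norm_capField_sub_capField_le {b K δ : ℝ} (hK : 0 ≤ K) {N₁ N₂ : ℝ → ℝ}
    (h₁ : ShellBound b N₁) (h₂ : ShellBound b N₂) (h12 : ∀ r, N₁ r ≤ N₂ (r + δ))
    (h21 : ∀ r, N₂ r ≤ N₁ (r + δ)) (hδ : 0 ≤ δ) (x : E3) :
    ‖capField K N₁ x - capField K N₂ x‖ ≤ b * δ := by
  have hb := h₁.const_nonneg
  have hx := norm_nonneg x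
  have e : capField K N₁ x - capField K N₂ x =
      (4 * π)⁻¹ • ((capProfile K N₁ ‖x‖ - capProfile K N₂ ‖x‖) • x) := by
    simp only [capField]; module
  suffices h : |capProfile K N₁ ‖x‖ - capProfile K N₂ ‖x‖| * ‖x‖ ≤ 7 * (b * δ) by
    rw [e, norm_smul, norm_smul, norm_of_nonneg inv_four_pi_nonneg, Real.norm_eq_abs]
    have h5 : 0 ≤ b * δ := by positivity
    nlinarith [seven_mul_inv_four_pi_le, inv_four_pi_nonneg]
  rcases le_or_gt δ ‖x‖ with hδx | hδx
  · rcases hx.eq_or_lt with hx0 | hx0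
    · rw [← hx0]; simp; positivity
    have h3 : |capProfile K N₁ ‖x‖ - capProfile K N₂ ‖x‖| ≤
        |N₁ ‖x‖ / ‖x‖ ^ 3 - N₂ ‖x‖ / ‖x‖ ^ 3| := by
      simpa [capProfile] using
        abs_min_sub_min_le_max (N₁ ‖x‖ / ‖x‖ ^ 3) K (N₂ ‖x‖ / ‖x‖ ^ 3) K
    have h4 : b * ((‖x‖ + δ) ^ 3 - ‖x‖ ^ 3) ≤ 7 * (b * δ) * ‖x‖ ^ 2 := by
      have : (‖x‖ + δ) ^ 3 - ‖x‖ ^ 3 ≤ 7 * δ * ‖x‖ ^ 2 := by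
        nlinarith [mul_nonneg hδ (mul_nonneg hx (sub_nonneg.2 hδx)),
          mul_nonneg hδ (mul_nonneg hδ (sub_nonneg.2 hδx))]
      nlinarith
    have h5 : |N₁ ‖x‖ - N₂ ‖x‖| ≤ 7 * (b * δ) * ‖x‖ ^ 2 := by
      rw [abs_le]
      have a1 := h₁.shell ‖x‖ (‖x‖ + δ) hx (by linarith)
      have a2 := h₂.shell ‖x‖ (‖x‖ + δ) hx (by linarith)
      constructor <;> linarith [h12 ‖x‖, h21 ‖x‖]
    rw [← sub_div, abs_div, abs_of_pos (by positivity : 0 < ‖x‖ ^ 3)] at h3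
    calc _ ≤ |N₁ ‖x‖ - N₂ ‖x‖| / ‖x‖ ^ 3 * ‖x‖ := by gcongr
      _ = |N₁ ‖x‖ - N₂ ‖x‖| / ‖x‖ ^ 2 := by field_simp
      _ ≤ _ := by rwa [div_le_iff₀ (by positivity)]
  · have p1 : capProfile K N₁ ‖x‖ ≤ b := (min_le_left _ _).trans (h₁.div_cube_le hx)
    have p2 : capProfile K N₂ ‖x‖ ≤ b := (min_le_left _ _).trans (h₂.div_cube_le hx)
    have p3 := capProfile_nonneg hK h₁.nonneg hx
    have p4 := capProfile_nonneg hK h₂.nonneg hx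
    have : |capProfile K N₁ ‖x‖ - capProfile K N₂ ‖x‖| ≤ b :=
      abs_sub_le_of_nonneg_of_le p3 p1 p4 p2
    have h6 : |capProfile K N₁ ‖x‖ - capProfile K N₂ ‖x‖| * ‖x‖ ≤ b * δ :=
      mul_le_mul this hδx.le hx hb
    have h5 : 0 ≤ b * δ := by positivity
    linarith

theorem massIn_le_of_dist_le {μ : Measure (E3 × E3)} [IsFiniteMeasure μ] {X Y : E3 × E3 → E3}
    {δ : ℝ} (h : ∀ z, ‖X z - Y z‖ ≤ δ) (r : ℝ) : massIn μ X r ≤ massIn μ Y (r + δ) := by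
  refine measureReal_mono (fun z hz => ?_)
  have hz : ‖X z‖ ≤ r := hz
  show ‖Y z‖ ≤ r + δ
  have h1 := norm_sub_norm_le (Y z) (X z)
  rw [norm_sub_rev] at h1
  linarith [h z]

end Density

section Picard
open Filter Topology

variable {D K : ℝ} {g : E3 × E3 → ℝ}

/-- The total mass plus the cap: a bound for every capped field. -/
def fieldBound (g : E3 × E3 → ℝ) (K : ℝ) : ℝ := (massMeasure g).real univ + K

/-- The Lipschitz constant on `[-T, T]` of the capped fields generated by characteristics. -/
def fieldLip (D : ℝ) (g : E3 × E3 → ℝ) (K T : ℝ) : ℝ :=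
  densConst D * (1 + fieldBound g K * T) ^ 4

/-- The mass within distance `r` of the origin at time `t ∨ 0`, transported by the field `E`. -/
def flowMass (g : E3 × E3 → ℝ) (E : ℝ → E3 → E3) (t : ℝ) : ℝ → ℝ :=
  massIn (massMeasure g) fun z => (charFlow E (max t 0) z).1

/-- The capped field generated by the density transported by the field `E`. -/
def nextField (g : E3 × E3 → ℝ) (K : ℝ) (E : ℝ → E3 → E3) (t : ℝ) (x : E3) : E3 :=
  capField K (flowMass g E t) x

theorem fieldBound_nonneg (hK : 0 ≤ K) : 0 ≤ fieldBound g K := add_nonneg measureReal_nonneg hK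

theorem flowMass_nonneg (E : ℝ → E3 → E3) (t r : ℝ) : 0 ≤ flowMass g E t r := measureReal_nonneg

theorem DecayData.flowMass_le (hg : DecayData D g) (E : ℝ → E3 → E3) (t r : ℝ) :
    flowMass g E t r ≤ (massMeasure g).real univ := by
  have := hg.isFiniteMeasure
  exact measureReal_mono (subset_univ _)

theorem abs_max_zero_le {t T : ℝ} (ht : |t| ≤ T) : |max t 0| ≤ T := by
  rw [abs_le] at *
  constructor
  · linarith [le_max_right t 0]
  · exact max_le ht.2 (by linarith)

theorem GoodField.norm_vel_le {B : ℝ} {L : ℝ → ℝ} {E : ℝ → E3 → E3} (hE : GoodField B L E)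
    {t T : ℝ} (ht : |t| ≤ T) (z : E3 × E3) : ‖(charFlow E t z).2‖ ≤ ‖z.2‖ + B * T := by
  have h1 := hE.norm_vel_sub_le t 0 z
  rw [hE.charFlow_zero, sub_zero] at h1
  have h2 := norm_sub_norm_le (charFlow E t z).2 z.2
  have := hE.bound_nonneg
  nlinarith

theorem DecayData.shellBound_flowMass (hg : DecayData D g) (hK : 0 ≤ K) {L : ℝ → ℝ}
    {E : ℝ → E3 → E3} (hE : GoodField (fieldBound g K) L E) {t T : ℝ} (ht : |t| ≤ T) :
    ShellBound (fieldLip D g K T) (flowMass g E t) :=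
  hg.shellBound (hE.measurePreserving_charFlow _)
    (mul_nonneg (fieldBound_nonneg hK) ((abs_nonneg t).trans ht))
    (hE.norm_vel_le (abs_max_zero_le ht))

theorem DecayData.goodField_nextField (hg : DecayData D g) (hK : 0 ≤ K) {L : ℝ → ℝ}
    {E : ℝ → E3 → E3} (hE : GoodField (fieldBound g K) L E) :
    GoodField (fieldBound g K) (fieldLip D g K) (nextField g K E) where
  bdd t x := norm_capField_le hK (flowMass_nonneg E t) (hg.flowMass_le E t) x
  lip T t x y ht := (hg.shellBound_flowMass hK hE ht).norm_capField_sub_le hK x y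
  lip_time T s t x hs ht := by
    have := hg.isFiniteMeasure
    have hst : |max s 0 - max t 0| ≤ |s - t| := abs_max_sub_max_le_abs s t 0
    refine norm_capField_sub_capField_le hK (hg.shellBound_flowMass hK hE hs)
      (hg.shellBound_flowMass hK hE ht) (massIn_le_of_dist_le fun z => ?_)
      (massIn_le_of_dist_le fun z => ?_) (abs_nonneg _) x
    · exact (hE.norm_pos_sub_le _ _ z).trans hst
    · rw [norm_sub_rev]; exact (hE.norm_pos_sub_le _ _ z).trans hst

theorem GoodField.norm_charFlow_sub_le {B : ℝ} {L : ℝ → ℝ} {E₁ E₂ : ℝ → E3 → E3}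
    (h₁ : GoodField B L E₁) (h₂ : GoodField B L E₂) {T A β : ℝ} (hA : 0 < A) (hβ : 0 < β)
    (h : ∀ t ∈ Icc 0 T, ∀ x, ‖E₁ t x - E₂ t x‖ ≤ A * exp ((3 + |L T| + β) * t))
    (z : E3 × E3) {t : ℝ} (ht : t ∈ Icc 0 T) :
    ‖charFlow E₁ t z - charFlow E₂ t z‖ ≤ A / β * exp ((3 + |L T| + β) * t) := by
  set l := 3 + |L T| + β with hl
  have hd : ∀ t, HasDerivAt (fun t => charFlow E₁ t z - charFlow E₂ t z)
      (phaseVF E₁ t (charFlow E₁ t z) - phaseVF E₂ t (charFlow E₂ t z)) t := fun t =>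
    (h₁.lipVF.hasDerivAt_odeFlow 0 z t).sub (h₂.lipVF.hasDerivAt_odeFlow 0 z t)
  have hB : ∀ t, HasDerivAt (fun t => A / β * exp (l * t)) (A / β * (exp (l * t) * (l * 1))) t :=
    fun t => (((hasDerivAt_id t).const_mul l).exp).const_mul _
  refine image_norm_le_of_norm_deriv_right_lt_deriv_boundary (a := 0) (b := T)
    (fun t _ => (hd t).continuousAt.continuousWithinAt) (fun t _ => (hd t).hasDerivWithinAt)
    (B := fun t => A / β * exp (l * t)) ?_ hB ?_ ht
  · simp only [h₁.charFlow_zero, h₂.charFlow_zero, sub_self, norm_zero]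
    positivity
  · intro t ht heq
    have hT : |t| ≤ T := by rw [abs_of_nonneg ht.1]; exact ht.2.le
    have e : phaseVF E₁ t (charFlow E₁ t z) - phaseVF E₂ t (charFlow E₂ t z) =
        (phaseVF E₁ t (charFlow E₁ t z) - phaseVF E₁ t (charFlow E₂ t z)) +
        (phaseVF E₁ t (charFlow E₂ t z) - phaseVF E₂ t (charFlow E₂ t z)) := by abel
    have a1 := h₁.lipVF.lip T t (charFlow E₁ t z) (charFlow E₂ t z) hT
    have a2 : ‖phaseVF E₁ t (charFlow E₂ t z) - phaseVF E₂ t (charFlow E₂ t z)‖ ≤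
        A * exp (l * t) := by
      rw [phaseVF, phaseVF, Prod.mk_sub_mk, sub_self, Prod.norm_def]
      simp only [norm_zero]
      exact max_le (by positivity) (h t ⟨ht.1, ht.2.le⟩ _)
    rw [heq] at a1
    have h3 : 0 < A / β * exp (l * t) := by positivity
    have h4 : A * exp (l * t) = β * (A / β * exp (l * t)) := by field_simp
    rw [e]
    refine (norm_add_le _ _).trans_lt ?_
    rw [h4] at a2
    have h5 : A / β * (exp (l * t) * (l * 1)) = l * (A / β * exp (l * t)) := by ring
    rw [h5]
    have h6 : l = 3 + |L T| + β := hl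
    rw [h6] at *
    nlinarith

/-- The exponential rate at which the iteration contracts on `[0, T]`. -/
def contractionRate (D : ℝ) (g : E3 × E3 → ℝ) (K T : ℝ) : ℝ :=
  3 + |fieldLip D g K T| + (2 * |fieldLip D g K T| + 1)

theorem DecayData.norm_nextField_sub_le (hg : DecayData D g) (hK : 0 ≤ K)
    {E₁ E₂ : ℝ → E3 → E3} (h₁ : GoodField (fieldBound g K) (fieldLip D g K) E₁)
    (h₂ : GoodField (fieldBound g K) (fieldLip D g K) E₂) {T A : ℝ} (hA : 0 < A)
    (h : ∀ t ∈ Icc 0 T, ∀ x, ‖E₁ t x - E₂ t x‖ ≤ A * exp (contractionRate D g K T * t))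
    {t : ℝ} (ht : t ∈ Icc 0 T) (x : E3) :
    ‖nextField g K E₁ t x - nextField g K E₂ t x‖ ≤
      A / 2 * exp (contractionRate D g K T * t) := by
  have := hg.isFiniteMeasure
  have hb : 0 < 2 * |fieldLip D g K T| + 1 := by positivity
  have key := fun z => h₁.norm_charFlow_sub_le h₂ hA hb h z ht
  have hT : |t| ≤ T := by rw [abs_of_nonneg ht.1]; exact ht.2
  have hmax : max t 0 = t := max_eq_left ht.1
  rw [← contractionRate] at key
  set δ := A / (2 * |fieldLip D g K T| + 1) * exp (contractionRate D g K T * t) with hδ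
  have hfst : ∀ z, ‖(charFlow E₁ (max t 0) z).1 - (charFlow E₂ (max t 0) z).1‖ ≤ δ := fun z => by
    rw [hmax]; exact (norm_fst_le (charFlow E₁ t z - charFlow E₂ t z)).trans (key z)
  have h3 := norm_capField_sub_capField_le hK (hg.shellBound_flowMass hK h₁ hT)
      (hg.shellBound_flowMass hK h₂ hT) (massIn_le_of_dist_le hfst)
      (massIn_le_of_dist_le fun z => by rw [norm_sub_rev]; exact hfst z) (by positivity) x
  refine h3.trans ((mul_le_mul_of_nonneg_right (le_abs_self _) (by positivity)).trans ?_)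
  rw [hδ, ← mul_assoc]
  refine mul_le_mul_of_nonneg_right ?_ (exp_pos _).le
  rw [← mul_div_assoc, div_le_div_iff₀ hb two_pos]
  nlinarith

/-- The Picard iterates of the capped field equation. -/
def picardField (g : E3 × E3 → ℝ) (K : ℝ) : ℕ → ℝ → E3 → E3
  | 0 => fun _ _ => 0
  | n + 1 => nextField g K (picardField g K n)

theorem DecayData.fieldLip_nonneg (hg : DecayData D g) {T : ℝ} :
    0 ≤ fieldLip D g K T :=
  mul_nonneg hg.densConst_nonneg (Even.pow_nonneg ⟨2, rfl⟩ _)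

theorem DecayData.goodField_picardField (hg : DecayData D g) (hK : 0 ≤ K) (n : ℕ) :
    GoodField (fieldBound g K) (fieldLip D g K) (picardField g K n) := by
  induction n with
  | zero =>
    have hL := fun T => hg.fieldLip_nonneg (K := K) (T := T)
    exact ⟨fun t x => by simpa [picardField] using fieldBound_nonneg hK,
      fun T t x y _ => by simpa [picardField] using mul_nonneg (hL T) (norm_nonneg _),
      fun T s t x _ _ => by simpa [picardField] using mul_nonneg (hL T) (abs_nonneg _)⟩
  | succ n ih => exact hg.goodField_nextField hK ih

theorem nextField_max (E : ℝ → E3 → E3) (t : ℝ) : nextField g K E (max t 0) = nextField g K E t := by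
  funext x; simp [nextField, flowMass]

theorem picardField_max (n : ℕ) (t : ℝ) : picardField g K n (max t 0) = picardField g K n t := by
  cases n with
  | zero => rfl
  | succ n => exact nextField_max _ t

theorem DecayData.norm_picardField_sub_le (hg : DecayData D g) (hK : 0 ≤ K) (n : ℕ) {t T : ℝ}
    (ht : t ∈ Icc 0 T) (x : E3) :
    ‖picardField g K n t x - picardField g K (n + 1) t x‖ ≤
      (2 * fieldBound g K + 1) / 2 ^ n * exp (contractionRate D g K T * t) := by
  have hB := fieldBound_nonneg (g := g) hK
  induction n generalizing t x with
  | zero =>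
    have h1 := (hg.goodField_picardField hK 0).bdd t x
    have h2 := (hg.goodField_picardField hK 1).bdd t x
    have h3 : 1 ≤ exp (contractionRate D g K T * t) := by
      refine one_le_exp (mul_nonneg ?_ ht.1)
      rw [contractionRate]; positivity
    have := norm_sub_le (picardField g K 0 t x) (picardField g K (0 + 1) t x)
    simp only [zero_add] at *
    nlinarith
  | succ n ih =>
    have := hg.norm_nextField_sub_le hK (hg.goodField_picardField hK n)
      (hg.goodField_picardField hK (n + 1)) (T := T)
      (A := (2 * fieldBound g K + 1) / 2 ^ n) (by positivity) (fun t ht x => ih ht x) ht x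
    refine this.trans (le_of_eq ?_)
    rw [pow_succ]; field_simp

/-- Existence of a field that generates itself through the capped field equation. -/
theorem DecayData.exists_selfConsistent (hg : DecayData D g) (hK : 0 ≤ K) :
    ∃ E : ℝ → E3 → E3, GoodField (fieldBound g K) (fieldLip D g K) E ∧ nextField g K E = E := by
  have hB := fieldBound_nonneg (g := g) hK
  have hstep : ∀ T t x, t ∈ Icc 0 T → ∀ n, dist (picardField g K n t x)
      (picardField g K (n + 1) t x) ≤
      2 * (2 * fieldBound g K + 1) * exp (contractionRate D g K T * t) / 2 / 2 ^ n :=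
    fun T t x ht n => by
      rw [dist_eq_norm]
      exact (hg.norm_picardField_sub_le hK n ht x).trans (le_of_eq (by ring))
  have hlim : ∀ t x, ∃ y, Tendsto (fun n => picardField g K n t x) atTop (𝓝 y) := fun t x => by
    simp_rw [← picardField_max _ t]
    exact cauchySeq_tendsto_of_complete (cauchySeq_of_le_geometric_two
      (hstep _ _ x ⟨le_max_right t 0, le_rfl⟩))
  choose E hE using hlim
  have hgood : GoodField (fieldBound g K) (fieldLip D g K) E := by
    refine ⟨fun t x => ?_, fun T t x y ht => ?_, fun T s t x hs ht => ?_⟩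
    · exact le_of_tendsto' (hE t x).norm fun n => (hg.goodField_picardField hK n).bdd t x
    · exact le_of_tendsto' ((hE t x).sub (hE t y)).norm fun n =>
        (hg.goodField_picardField hK n).lip T t x y ht
    · exact le_of_tendsto' ((hE s x).sub (hE t x)).norm fun n =>
        (hg.goodField_picardField hK n).lip_time T s t x hs ht
  refine ⟨E, hgood, ?_⟩
  funext t x
  wlog ht : 0 ≤ t generalizing t
  · have h1 : E (max t 0) x = E t x := by
      refine tendsto_nhds_unique (hE _ x) ((hE t x).congr fun n => ?_)
      rw [picardField_max]
    rw [← nextField_max, ← h1]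
    exact this (max t 0) (le_max_right _ _)
  have hdist : ∀ n, ∀ s ∈ Icc 0 t, ∀ x, ‖picardField g K n s x - E s x‖ ≤
      2 * (2 * fieldBound g K + 1) / 2 ^ n * exp (contractionRate D g K t * s) :=
    fun n s hs x => by
      rw [← dist_eq_norm]
      refine (dist_le_of_le_geometric_two_of_tendsto (hstep t s x hs) (hE s x) n).trans
        (le_of_eq (by ring))
  refine tendsto_nhds_unique ?_ ((tendsto_add_atTop_iff_nat 1).2 (hE t x))
  rw [tendsto_iff_norm_sub_tendsto_zero]
  refine squeeze_zero (fun n => norm_nonneg _) (fun n => hg.norm_nextField_sub_le hK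
    (hg.goodField_picardField hK n) hgood (by positivity) (hdist n) ⟨ht, le_rfl⟩ x) ?_
  have : Tendsto (fun n : ℕ => ((2 * fieldBound g K + 1) * exp (contractionRate D g K t * t)) *
      (1 / 2) ^ n) atTop (𝓝 (((2 * fieldBound g K + 1) * exp (contractionRate D g K t * t)) * 0)) :=
    (tendsto_pow_atTop_nhds_zero_of_lt_one (by norm_num) (by norm_num)).const_mul _
  rw [mul_zero] at this
  refine this.congr fun n => ?_
  rw [one_div, inv_pow]; ring

end Picard

section Energy
open Filter Topology

/-- The signed radial strength of the capped field. -/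
def radialForce (K : ℝ) (N : ℝ → ℝ) (r : ℝ) : ℝ := (4 * π)⁻¹ * capProfile K N |r| * r

/-- The antiderivative of the radial strength of the capped field. -/
def radialPotential (K : ℝ) (N : ℝ → ℝ) (r : ℝ) : ℝ := ∫ s in (0 : ℝ)..r, radialForce K N s

variable {b K : ℝ} {N : ℝ → ℝ}

theorem inner_capField_smul {e : E3} (he : ‖e‖ = 1) (r : ℝ) :
    inner ℝ (capField K N (r • e)) e = radialForce K N r := by
  rw [capField, norm_smul, he, mul_one, Real.norm_eq_abs, real_inner_smul_left,
    real_inner_smul_left, real_inner_self_eq_norm_sq, he, radialForce]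
  ring

theorem exists_norm_eq_one : ∃ e : E3, ‖e‖ = 1 :=
  ⟨EuclideanSpace.single 0 1, by simp⟩

theorem ShellBound.continuous_capField (hK : 0 ≤ K) (h : ShellBound b N) :
    Continuous (capField K N) :=
  (LipschitzWith.of_dist_le_mul (K := b.toNNReal) fun x y => by
    rw [dist_eq_norm, dist_eq_norm, coe_toNNReal _ h.const_nonneg]
    exact h.norm_capField_sub_le hK x y).continuous

theorem ShellBound.continuous_radialForce (hK : 0 ≤ K) (h : ShellBound b N) :
    Continuous (radialForce K N) := by
  obtain ⟨e, he⟩ := exists_norm_eq_one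
  have h1 : Continuous fun r : ℝ => inner ℝ (capField K N (r • e)) e :=
    ((h.continuous_capField hK).comp (by fun_prop)).inner continuous_const
  simpa only [inner_capField_smul he] using h1

theorem ShellBound.hasDerivAt_radialPotential (hK : 0 ≤ K) (h : ShellBound b N) (r : ℝ) :
    HasDerivAt (radialPotential K N) (radialForce K N r) r :=
  (h.continuous_radialForce hK).integral_hasStrictDerivAt 0 r |>.hasDerivAt

theorem ShellBound.hasFDerivAt_radialPotential (hK : 0 ≤ K) (h : ShellBound b N) (x : E3) :
    HasFDerivAt (fun x : E3 => radialPotential K N ‖x‖) (innerSL ℝ (capField K N x)) x := by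
  rcases eq_or_ne x 0 with rfl | hx
  · have h0 : capField K N 0 = 0 := by simp [capField]
    have h1 := h.hasDerivAt_radialPotential hK 0
    have h2 : radialForce K N 0 = 0 := by simp [radialForce]
    rw [h2, hasDerivAt_iff_isLittleO_nhds_zero] at h1
    rw [h0, map_zero, hasFDerivAt_iff_isLittleO_nhds_zero]
    have h3 : Tendsto (fun x : E3 => ‖x‖) (𝓝 0) (𝓝 0) := by
      simpa using (continuous_norm (E := E3)).tendsto 0
    have h4 := (h1.comp_tendsto h3)
    refine (h4.trans_isBigO (k := fun x : E3 => x)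
      (Asymptotics.isBigO_refl (fun x : E3 => x) _).norm_left).congr_left fun x => ?_
    simp
  · have h1 := (h.hasDerivAt_radialPotential hK ‖x‖).comp_hasFDerivAt x
      ((hasStrictFDerivAt_norm_sq x).hasFDerivAt.sqrt (by positivity) |>.congr_of_eventuallyEq
        (Eventually.of_forall fun y => (sqrt_sq (norm_nonneg y)).symm))
    refine h1.congr_fderiv ?_
    ext y
    have hx' : ‖x‖ ≠ 0 := norm_ne_zero_iff.2 hx
    simp [radialForce, capField, sqrt_sq]
    field_simp

theorem hasFDerivAt_gam (v : E3) : HasFDerivAt gam (innerSL ℝ (vhat v)) v := by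
  have h1 := ((hasStrictFDerivAt_norm_sq v).hasFDerivAt.const_add 1).sqrt
    (by positivity : 1 + ‖v‖ ^ 2 ≠ 0)
  refine h1.congr_fderiv ?_
  ext y
  simp [vhat]
  ring

theorem abs_radialForce_le {M : ℝ} (hK : 0 ≤ K) (hN : ∀ r, 0 ≤ N r) (hM : ∀ r, N r ≤ M) (r : ℝ) :
    |radialForce K N r| ≤ M + K := by
  obtain ⟨e, he⟩ := exists_norm_eq_one
  rw [← inner_capField_smul he]
  refine (abs_real_inner_le_norm _ _).trans ?_
  rw [he, mul_one]
  exact norm_capField_le hK hN hM _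

/-- The field energy density in the radial variable, for the mass `m` inside radius `r`. -/
def energyDensity (K m r : ℝ) : ℝ :=
  (4 * π * r ^ 2)⁻¹ * (m * min m (K * r ^ 3) - min m (K * r ^ 3) ^ 2 / 2)

theorem energyDensity_sub_le {N₁ N₂ : ℝ → ℝ} {r : ℝ} (hr : 0 < r) :
    energyDensity K (N₁ r) r - energyDensity K (N₂ r) r ≤
      radialForce K N₁ r * (N₁ r - N₂ r) := by
  have e : radialForce K N₁ r = (4 * π * r ^ 2)⁻¹ * min (N₁ r) (K * r ^ 3) := by
    have : capProfile K N₁ r = min (N₁ r) (K * r ^ 3) / r ^ 3 := by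
      have hr3 : 0 < r ^ 3 := by positivity
      rw [capProfile, ← min_div_div_right hr3.le, mul_div_cancel_right₀ _ hr3.ne']
    rw [radialForce, abs_of_pos hr, this]
    field_simp
  rw [e, energyDensity, energyDensity, mul_assoc (4 * π * r ^ 2)⁻¹, ← mul_sub (4 * π * r ^ 2)⁻¹]
  refine mul_le_mul_of_nonneg_left ?_ (by positivity)
  rcases le_total (N₁ r) (K * r ^ 3) with h1 | h1 <;>
  rcases le_total (N₂ r) (K * r ^ 3) with h2 | h2 <;> simp only [h1, h2, min_eq_left, min_eq_right]
    <;> nlinarith [sq_nonneg (N₁ r - N₂ r), sq_nonneg (N₂ r - K * r ^ 3)]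

theorem energyDensity_le {m r : ℝ} : energyDensity K m r ≤ m ^ 2 / (8 * π * r ^ 2) := by
  have : m ^ 2 / (8 * π * r ^ 2) = (4 * π * r ^ 2)⁻¹ * (m ^ 2 / 2) := by
    rw [div_eq_mul_inv, show 8 * π * r ^ 2 = (4 * π * r ^ 2) * 2 by ring, mul_inv]; ring
  rw [this, energyDensity]
  refine mul_le_mul_of_nonneg_left ?_ (by positivity)
  nlinarith [sq_nonneg (m - min m (K * r ^ 3))]

theorem le_energyDensity {m r : ℝ} (hK : 0 ≤ K) (hm : 0 ≤ m) (hr : 0 ≤ r) :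
    (4 * π * r ^ 2)⁻¹ * (min m (K * r ^ 3) ^ 2 / 2) ≤ energyDensity K m r := by
  refine mul_le_mul_of_nonneg_left ?_ (by positivity)
  have h1 : min m (K * r ^ 3) ≤ m := min_le_left _ _
  have h2 : 0 ≤ min m (K * r ^ 3) := le_min hm (by positivity)
  nlinarith

theorem energyDensity_nonneg {m r : ℝ} (hK : 0 ≤ K) (hm : 0 ≤ m) (hr : 0 ≤ r) :
    0 ≤ energyDensity K m r := le_trans (by positivity) (le_energyDensity hK hm hr)

/-- Mass functions with the shell bound and bounded mass have finite uncapped field energy. -/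
theorem ShellBound.integrableOn_sq_div (h : ShellBound b N) {M : ℝ} (hM : ∀ r, N r ≤ M) :
    IntegrableOn (fun r => N r ^ 2 / (8 * π * r ^ 2)) (Ioi 0) := by
  have hmeas : Measurable fun r => N r ^ 2 / (8 * π * r ^ 2) :=
    (h.mono.measurable.pow_const 2).div (by fun_prop)
  have hb := h.const_nonneg
  have hM0 := (h.nonneg 0).trans (hM 0)
  rw [← Ioc_union_Ioi_eq_Ioi (zero_le_one' ℝ), integrableOn_union]
  constructor
  · refine Measure.integrableOn_of_bounded (M := b ^ 2) measure_Ioc_lt_top.ne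
      hmeas.aestronglyMeasurable ?_
    refine (ae_restrict_iff' measurableSet_Ioc).2 (Eventually.of_forall fun r hr => ?_)
    have hr0 : 0 < r := hr.1
    rw [norm_of_nonneg (by positivity), div_le_iff₀ (by positivity)]
    have h1 := h.le_cube hr0.le
    have h2 : N r ^ 2 ≤ (b * r ^ 3) ^ 2 := pow_le_pow_left₀ (h.nonneg r) h1 2
    have h3 : r ^ 4 ≤ 8 * π := (pow_le_one₀ hr0.le hr.2).trans (by linarith [pi_gt_three])
    refine h2.trans ?_
    have h4 : r ^ 4 * (b ^ 2 * r ^ 2) ≤ 8 * π * (b ^ 2 * r ^ 2) :=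
      mul_le_mul_of_nonneg_right h3 (by positivity)
    linarith
  · have h1 : IntegrableOn (fun r : ℝ => M ^ 2 * r ^ (-2 : ℝ)) (Ioi 1) :=
      (integrableOn_Ioi_rpow_of_lt (by norm_num) one_pos).const_mul _
    refine h1.mono' hmeas.aestronglyMeasurable ?_
    refine (ae_restrict_iff' measurableSet_Ioi).2 (Eventually.of_forall fun r hr => ?_)
    have hr0 : 0 < r := one_pos.trans hr
    rw [norm_of_nonneg (by positivity), div_le_iff₀ (by positivity), rpow_neg hr0.le]
    norm_cast
    have h2 : N r ^ 2 ≤ M ^ 2 := pow_le_pow_left₀ (h.nonneg r) (hM r) 2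
    have : M ^ 2 * (r ^ 2)⁻¹ * (8 * π * r ^ 2) = M ^ 2 * (8 * π) := by field_simp
    rw [this]
    nlinarith [pi_gt_three, sq_nonneg M]

theorem ShellBound.integrableOn_energyDensity (hK : 0 ≤ K) (h : ShellBound b N) {M : ℝ}
    (hM : ∀ r, N r ≤ M) : IntegrableOn (fun r => energyDensity K (N r) r) (Ioi 0) := by
  refine (h.integrableOn_sq_div hM).mono' ?_ ?_
  · have := h.mono.measurable
    exact Measurable.aestronglyMeasurable (by unfold energyDensity; fun_prop)
  · refine (ae_restrict_iff' measurableSet_Ioi).2 (Eventually.of_forall fun r hr => ?_)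
    rw [norm_of_nonneg (energyDensity_nonneg hK (h.nonneg r) (le_of_lt hr))]
    exact energyDensity_le

/-- The field energy. -/
def fieldEnergy (K : ℝ) (N : ℝ → ℝ) : ℝ := ∫ r in Ioi 0, energyDensity K (N r) r

theorem ShellBound.min_sq_le (hK : 0 ≤ K) (h : ShellBound b N) {M : ℝ} (hM : ∀ r, N r ≤ M)
    {r : ℝ} (hr : 0 < r) : min (N r) (K * r ^ 3) ^ 2 ≤ 32 * π * fieldEnergy K N * r := by
  set y := min (N r) (K * r ^ 3) with hy
  have hy0 : 0 ≤ y := le_min (h.nonneg r) (by positivity)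
  have hi := h.integrableOn_energyDensity hK hM
  have hsub : Ioc r (2 * r) ⊆ Ioi 0 := fun x hx => hr.trans hx.1
  have h1 : ∫ s in Ioc r (2 * r), (32 * π * r ^ 2)⁻¹ * y ^ 2 ≤
      ∫ s in Ioc r (2 * r), energyDensity K (N s) s := by
    refine setIntegral_mono_on (integrableOn_const (by simp)) (hi.mono_set hsub)
      measurableSet_Ioc fun s hs => ?_
    have hs0 : 0 < s := hsub hs
    refine le_trans ?_ (le_energyDensity hK (h.nonneg s) hs0.le)
    have h2 : y ≤ min (N s) (K * s ^ 3) :=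
      min_le_min (h.mono hs.1.le) (by gcongr; exact hs.1.le)
    calc (32 * π * r ^ 2)⁻¹ * y ^ 2 = (4 * π * (2 * r) ^ 2)⁻¹ * (y ^ 2 / 2) := by
          field_simp; ring
      _ ≤ _ := by gcongr; exact hs.2
  have h2 : ∫ s in Ioc r (2 * r), energyDensity K (N s) s ≤ fieldEnergy K N :=
    setIntegral_mono_set hi ((ae_restrict_iff' measurableSet_Ioi).2
      (Eventually.of_forall fun s hs => energyDensity_nonneg hK (h.nonneg s) (le_of_lt hs)))
      (LE.le.eventuallyLE hsub)
  have h3 := h1.trans h2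
  rw [setIntegral_const, smul_eq_mul, measureReal_def, Real.volume_Ioc,
    ENNReal.toReal_ofReal (by linarith)] at h3
  have h4 : (2 * r - r) * ((32 * π * r ^ 2)⁻¹ * y ^ 2) = y ^ 2 / (32 * π * r) := by
    field_simp; ring
  rw [h4, div_le_iff₀ (by positivity)] at h3
  linarith

end Energy

section EnergyInequality
open Filter Topology

theorem step_kernel_of_le {P : ℝ → ℝ} (hP : Continuous P) {B : ℝ} (hB : ∀ r, |P r| ≤ B) {a c : ℝ}
    (hac : a ≤ c) :
    Integrable (fun r => P r * ((if a ≤ r then 1 else 0) - (if c ≤ r then 1 else 0))) ∧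
    (∫ r, P r * ((if a ≤ r then 1 else 0) - (if c ≤ r then 1 else 0))) = ∫ r in a..c, P r ∧
    (∫ r, ‖P r * ((if a ≤ r then 1 else 0) - (if c ≤ r then 1 else 0))‖) ≤ B * |a - c| := by
  have e : (fun r => P r * ((if a ≤ r then 1 else 0) - (if c ≤ r then 1 else 0))) =
      (Ico a c).indicator P := by
    funext r
    by_cases h1 : a ≤ r <;> by_cases h2 : c ≤ r
    · simp [h1, h2]
    · simp [h1, h2, not_le.1 h2]
    · exact absurd (hac.trans h2) h1
    · simp [h1, h2]
  have e' : ∀ r, P r * ((if a ≤ r then 1 else 0) - (if c ≤ r then 1 else 0)) =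
      (Ico a c).indicator P r := fun r => congrFun e r
  simp only [e']
  refine ⟨?_, ?_, ?_⟩
  · rw [integrable_indicator_iff measurableSet_Ico]
    exact (hP.integrableOn_Icc).mono_set Ico_subset_Icc_self
  · rw [integral_indicator measurableSet_Ico, intervalIntegral.integral_of_le hac,
      integral_Ico_eq_integral_Ioo, integral_Ioc_eq_integral_Ioo]
  · simp only [norm_indicator_eq_indicator_norm]
    rw [integral_indicator measurableSet_Ico]
    have h1 := norm_setIntegral_le_of_norm_le_const (μ := volume) (s := Ico a c) (C := B)
      (f := fun r => ‖P r‖) measure_Ico_lt_top (fun r _ => by rw [norm_norm]; exact hB r)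
    rw [measureReal_def, Real.volume_Ico, ENNReal.toReal_ofReal (by linarith)] at h1
    rw [abs_sub_comm, abs_of_nonneg (by linarith : 0 ≤ c - a)]
    exact (le_abs_self _).trans h1

theorem step_kernel {P : ℝ → ℝ} (hP : Continuous P) {B : ℝ} (hB : ∀ r, |P r| ≤ B) (a c : ℝ) :
    Integrable (fun r => P r * ((if a ≤ r then 1 else 0) - (if c ≤ r then 1 else 0))) ∧
    (∫ r, P r * ((if a ≤ r then 1 else 0) - (if c ≤ r then 1 else 0))) = ∫ r in a..c, P r ∧
    (∫ r, ‖P r * ((if a ≤ r then 1 else 0) - (if c ≤ r then 1 else 0))‖) ≤ B * |a - c| := by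
  rcases le_total a c with h | h
  · exact step_kernel_of_le hP hB h
  · obtain ⟨h1, h2, h3⟩ := step_kernel_of_le hP hB h
    have e : ∀ r, P r * ((if a ≤ r then 1 else 0) - (if c ≤ r then 1 else 0)) =
        -(P r * ((if c ≤ r then 1 else 0) - (if a ≤ r then 1 else 0))) := fun r => by ring
    simp only [e, norm_neg, integral_neg, h2]
    refine ⟨h1.neg, ?_, ?_⟩
    · rw [intervalIntegral.integral_symm, neg_neg]
    · rwa [abs_sub_comm]

theorem integrable_mul_massIn_sub {μ : Measure (E3 × E3)} [IsFiniteMeasure μ]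
    {X Y : E3 × E3 → E3} (hX : Measurable X) (hY : Measurable Y) {δ : ℝ}
    (hXY : ∀ z, ‖X z - Y z‖ ≤ δ) {P : ℝ → ℝ} (hP : Continuous P) {B : ℝ} (hB : ∀ r, |P r| ≤ B) :
    Integrable (fun r => P r * (massIn μ X r - massIn μ Y r)) ∧
    Integrable (fun z => ∫ r in ‖X z‖..‖Y z‖, P r) μ ∧
    ∫ r, P r * (massIn μ X r - massIn μ Y r) = ∫ z, (∫ r in ‖X z‖..‖Y z‖, P r) ∂μ := by
  set k : (E3 × E3) × ℝ → ℝ := fun p =>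
    P p.2 * ((if ‖X p.1‖ ≤ p.2 then 1 else 0) - (if ‖Y p.1‖ ≤ p.2 then 1 else 0)) with hk
  have hk_meas : Measurable k := by
    refine (hP.measurable.comp measurable_snd).mul (Measurable.sub ?_ ?_)
    · exact Measurable.ite (measurableSet_le (hX.comp measurable_fst).norm measurable_snd)
        measurable_const measurable_const
    · exact Measurable.ite (measurableSet_le (hY.comp measurable_fst).norm measurable_snd)
        measurable_const measurable_const
  have hB0 : 0 ≤ B := (abs_nonneg _).trans (hB 0)
  have hk_int : Integrable k (μ.prod volume) := by
    rw [integrable_prod_iff hk_meas.aestronglyMeasurable]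
    refine ⟨Eventually.of_forall fun z => (step_kernel hP hB ‖X z‖ ‖Y z‖).1, ?_⟩
    refine Integrable.of_bound (C := B * δ)
      (hk_meas.norm.stronglyMeasurable.integral_prod_right'.aestronglyMeasurable) ?_
    refine Eventually.of_forall fun z => ?_
    rw [norm_of_nonneg (integral_nonneg fun r => norm_nonneg _)]
    refine (step_kernel hP hB ‖X z‖ ‖Y z‖).2.2.trans (mul_le_mul_of_nonneg_left ?_ hB0)
    exact (abs_norm_sub_norm_le _ _).trans (hXY z)
  have hind : ∀ (X : E3 × E3 → E3), Measurable X → ∀ r,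
      massIn μ X r = ∫ z, (if ‖X z‖ ≤ r then (1 : ℝ) else 0) ∂μ := fun X hX r => by
    rw [massIn, ← integral_indicator_one (measurableSet_le hX.norm measurable_const)]
    refine integral_congr_ae (Eventually.of_forall fun z => ?_)
    simp [indicator_apply]
  have hInt : ∀ (X : E3 × E3 → E3), Measurable X → ∀ r,
      Integrable (fun z => (if ‖X z‖ ≤ r then (1 : ℝ) else 0)) μ := fun X hX r => by
    refine Integrable.of_bound (C := 1) (Measurable.aestronglyMeasurable ?_) ?_
    · exact Measurable.ite (measurableSet_le hX.norm measurable_const)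
        measurable_const measurable_const
    · refine Eventually.of_forall fun z => ?_
      split_ifs <;> simp
  have e1 : ∀ r, ∫ z, k (z, r) ∂μ = P r * (massIn μ X r - massIn μ Y r) := fun r => by
    simp only [hk]
    rw [integral_const_mul, integral_sub (hInt X hX r) (hInt Y hY r), hind X hX, hind Y hY]
  have e2 : ∀ z, ∫ r, k (z, r) = ∫ r in ‖X z‖..‖Y z‖, P r := fun z =>
    (step_kernel hP hB ‖X z‖ ‖Y z‖).2.1
  have h1 := hk_int.integral_prod_right
  have h2 := hk_int.integral_prod_left
  simp only [e1] at h1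
  simp only [e2] at h2
  refine ⟨h1, h2, ?_⟩
  simp only [← e1, ← e2]
  exact (integral_integral_swap (f := fun z r => k (z, r)) hk_int).symm

theorem massIn_of_neg {μ : Measure (E3 × E3)} {X : E3 × E3 → E3} {r : ℝ} (hr : r < 0) :
    massIn μ X r = 0 := by
  have : {z | ‖X z‖ ≤ r} = ∅ := by
    ext z; simp [hr.trans_le (norm_nonneg (X z))]
  rw [massIn, this, measureReal_empty]

theorem le_of_sub_le_sq {H : ℝ → ℝ} {C T : ℝ} (hT : 0 ≤ T)
    (h : ∀ s t, 0 ≤ s → s ≤ t → t ≤ T → H t - H s ≤ C * (t - s) ^ 2) : H T ≤ H 0 := by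
  have hn : ∀ n : ℕ, H T - H 0 ≤ C * T ^ 2 * (1 / ((n : ℝ) + 1)) := fun n => by
    have hpos : (0 : ℝ) < n + 1 := by positivity
    set d := T / (n + 1) with hd
    have hd0 : 0 ≤ d := by positivity
    have hk : ∀ k : ℕ, k ≤ n + 1 → H (k * d) - H 0 ≤ k * (C * d ^ 2) := fun k => by
      induction k with
      | zero => simp
      | succ k ih =>
        intro hk
        have h1 := ih (by omega)
        have h2 := h (k * d) ((k + 1) * d) (by positivity) (by nlinarith) (by
          have : ((k : ℝ) + 1) ≤ n + 1 := by exact_mod_cast hk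
          calc ((k : ℝ) + 1) * d ≤ (n + 1) * d := by gcongr
            _ = T := by rw [hd]; field_simp)
        push_cast
        have e : (k + 1) * d - k * d = d := by ring
        rw [e] at h2
        linarith
    have h1 := hk (n + 1) le_rfl
    push_cast at h1
    have e1 : ((n : ℝ) + 1) * d = T := by rw [hd]; field_simp
    rw [e1] at h1
    refine h1.trans (le_of_eq ?_)
    rw [hd]; field_simp
  have hlim : Tendsto (fun n : ℕ => C * T ^ 2 * (1 / ((n : ℝ) + 1))) atTop (𝓝 (C * T ^ 2 * 0)) :=
    tendsto_one_div_add_atTop_nhds_zero_nat.const_mul _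
  rw [mul_zero] at hlim
  linarith [ge_of_tendsto' hlim hn]

variable {D K : ℝ} {g : E3 × E3 → ℝ} {E : ℝ → E3 → E3}

/-- The total energy at time `t`. -/
def totalEnergy (g : E3 × E3 → ℝ) (K : ℝ) (E : ℝ → E3 → E3) (t : ℝ) : ℝ :=
  (∫ z, gam (charFlow E t z).2 ∂(massMeasure g)) + fieldEnergy K (flowMass g E t)

theorem DecayData.integrable_gam_flow (hg : DecayData D g) {B : ℝ} {L : ℝ → ℝ}
    (hE : GoodField B L E) (t : ℝ) :
    Integrable (fun z => gam (charFlow E t z).2) (massMeasure g) := by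
  have := hg.isFiniteMeasure
  refine (hg.integrable_gam.add (integrable_const (B * |t|))).mono'
    (contDiff_gam.continuous.comp (hE.continuous_charFlow_right t).snd).aestronglyMeasurable
    (Eventually.of_forall fun z => ?_)
  rw [norm_of_nonneg (gam_pos _).le]
  have h1 := hE.norm_vel_sub_le t 0 z
  rw [hE.charFlow_zero, sub_zero] at h1
  have h2 := abs_gam_sub_gam_le (charFlow E t z).2 z.2
  have h3 := (le_abs_self _).trans h2
  simp only [Pi.add_apply]
  linarith

theorem DecayData.totalEnergy_sub_le (hg : DecayData D g) (hK : 0 ≤ K)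
    (hE : GoodField (fieldBound g K) (fieldLip D g K) E) (hfix : nextField g K E = E)
    {s t T : ℝ} (hs : 0 ≤ s) (hst : s ≤ t) (htT : t ≤ T) :
    totalEnergy g K E t - totalEnergy g K E s ≤
      (massMeasure g).real univ * fieldLip D g K T * (t - s) ^ 2 := by
  have := hg.isFiniteMeasure
  have ht0 : 0 ≤ t := hs.trans hst
  have ht : |t| ≤ T := by rwa [abs_of_nonneg ht0]
  have hsT : |s| ≤ T := by rw [abs_of_nonneg hs]; exact hst.trans htT
  have hNt := hg.shellBound_flowMass hK hE ht
  have hNs := hg.shellBound_flowMass hK hE hsT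
  have hEt : ∀ r x, E r x = capField K (flowMass g E r) x := fun r x => by
    conv_lhs => rw [← hfix]
    rfl
  set P := radialForce K (flowMass g E t) with hP
  have hPc := hNt.continuous_radialForce hK
  have hPb := abs_radialForce_le hK hNt.nonneg (hg.flowMass_le E t)
  have hXm : ∀ r, Measurable fun z => (charFlow E r z).1 := fun r =>
    (hE.continuous_charFlow_right r).measurable.fst
  obtain ⟨i1, i2, i3⟩ := integrable_mul_massIn_sub (μ := massMeasure g) (hXm t) (hXm s)
    (hE.norm_pos_sub_le t s) hPc hPb
  have hflow : ∀ r, 0 ≤ r → flowMass g E r = massIn (massMeasure g) fun z => (charFlow E r z).1 :=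
    fun r hr => by rw [flowMass, max_eq_left hr]
  have hU : fieldEnergy K (flowMass g E t) - fieldEnergy K (flowMass g E s) ≤
      ∫ z, (∫ r in ‖(charFlow E t z).1‖..‖(charFlow E s z).1‖, P r) ∂(massMeasure g) := by
    have j1 := hNt.integrableOn_energyDensity hK (hg.flowMass_le E t)
    have j2 := hNs.integrableOn_energyDensity hK (hg.flowMass_le E s)
    have e1 : fieldEnergy K (flowMass g E t) - fieldEnergy K (flowMass g E s) =
        ∫ r in Ioi 0, (energyDensity K (flowMass g E t r) r -
          energyDensity K (flowMass g E s r) r) := (integral_sub j1 j2).symm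
    have e2 := setIntegral_eq_integral_of_forall_compl_eq_zero (μ := volume) (s := Ioi 0)
      (f := fun r => P r * (massIn (massMeasure g) (fun z => (charFlow E t z).1) r -
          massIn (massMeasure g) (fun z => (charFlow E s z).1) r)) fun r hr => by
        rcases (not_lt.1 (mem_Ioi.not.1 hr)).eq_or_lt with rfl | hr
        · simp [P, radialForce]
        · simp only [massIn_of_neg hr, sub_self, mul_zero]
    rw [← i3, e1, ← e2]
    refine setIntegral_mono_on (j1.sub j2) i1.integrableOn measurableSet_Ioi fun r hr => ?_
    rw [← hflow t ht0, ← hflow s hs]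
    exact energyDensity_sub_le hr
  have hpt : ∀ z, gam (charFlow E t z).2 - gam (charFlow E s z).2 +
      (∫ r in ‖(charFlow E t z).1‖..‖(charFlow E s z).1‖, P r) ≤
      fieldLip D g K T * (t - s) ^ 2 := fun z => by
    set θ : ℝ → ℝ := fun τ => gam (charFlow E τ z).2 -
      radialPotential K (flowMass g E t) ‖(charFlow E τ z).1‖ with hθ
    have hd : ∀ τ, HasDerivAt θ (inner ℝ (vhat (charFlow E τ z).2) (E τ (charFlow E τ z).1) -
        inner ℝ (E t (charFlow E τ z).1) (vhat (charFlow E τ z).2)) τ := fun τ => by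
      have h1 := (hasFDerivAt_gam (charFlow E τ z).2).comp_hasDerivAt τ (hE.hasDerivAt_vel τ z)
      have h2 := (hNt.hasFDerivAt_radialPotential hK (charFlow E τ z).1).comp_hasDerivAt τ
        (hE.hasDerivAt_pos τ z)
      rw [← hEt] at h2
      exact h1.sub h2
    have hb : ∀ τ ∈ Icc s t, ‖inner ℝ (vhat (charFlow E τ z).2) (E τ (charFlow E τ z).1) -
        inner ℝ (E t (charFlow E τ z).1) (vhat (charFlow E τ z).2)‖ ≤
        fieldLip D g K T * (t - s) := fun τ hτ => by
      rw [real_inner_comm, ← inner_sub_left]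
      refine (norm_inner_le_norm _ _).trans ?_
      have hτT : |τ| ≤ T := by rw [abs_of_nonneg (hs.trans hτ.1)]; exact hτ.2.trans htT
      have h1 := hE.lip_time T τ t (charFlow E τ z).1 hτT ht
      have h2 := norm_vhat_le (charFlow E τ z).2
      have h3 : |τ - t| ≤ t - s := by
        rw [abs_sub_comm, abs_of_nonneg (by linarith [hτ.2])]; linarith [hτ.1]
      have hL := hg.fieldLip_nonneg (K := K) (T := T)
      have h4 : fieldLip D g K T * |τ - t| ≤ fieldLip D g K T * (t - s) := by gcongr
      calc _ ≤ (fieldLip D g K T * (t - s)) * 1 := by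
            refine mul_le_mul (h1.trans h4) h2 (norm_nonneg _) ?_
            exact mul_nonneg hL (by linarith)
        _ = _ := mul_one _
    have h1 := (convex_Icc s t).norm_image_sub_le_of_norm_hasDerivWithin_le
      (fun τ _ => (hd τ).hasDerivWithinAt) hb (left_mem_Icc.2 hst) (right_mem_Icc.2 hst)
    have h2 := (le_abs_self _).trans h1
    rw [Real.norm_eq_abs, abs_of_nonneg (by linarith : 0 ≤ t - s)] at h2
    have h3 : (∫ r in ‖(charFlow E t z).1‖..‖(charFlow E s z).1‖, P r) =
        radialPotential K (flowMass g E t) ‖(charFlow E s z).1‖ -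
        radialPotential K (flowMass g E t) ‖(charFlow E t z).1‖ :=
      (intervalIntegral.integral_interval_sub_left (hPc.intervalIntegrable _ _)
        (hPc.intervalIntegrable _ _)).symm
    rw [h3]
    simp only [hθ] at h2
    nlinarith
  have hkin := hg.integrable_gam_flow hE
  calc totalEnergy g K E t - totalEnergy g K E s
      ≤ ∫ z, (gam (charFlow E t z).2 - gam (charFlow E s z).2 +
        (∫ r in ‖(charFlow E t z).1‖..‖(charFlow E s z).1‖, P r)) ∂(massMeasure g) := by
        have e1 := integral_add ((hkin t).sub (hkin s)) i2
        have e2 := integral_sub (hkin t) (hkin s)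
        simp only [Pi.sub_apply] at e1
        rw [e2] at e1
        rw [e1, totalEnergy, totalEnergy]
        linarith
    _ ≤ ∫ _, fieldLip D g K T * (t - s) ^ 2 ∂(massMeasure g) :=
        integral_mono (((hkin t).sub (hkin s)).add i2) (integrable_const _) hpt
    _ = _ := by rw [integral_const, smul_eq_mul, mul_assoc]

/-- The initial energy, without cap. -/
def initialEnergy (g : E3 × E3 → ℝ) : ℝ :=
  (∫ z : E3 × E3, gam z.2 ∂(massMeasure g)) +
    ∫ r in Ioi 0, massIn (massMeasure g) Prod.fst r ^ 2 / (8 * π * r ^ 2)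

theorem initialEnergy_nonneg : 0 ≤ initialEnergy g :=
  add_nonneg (integral_nonneg fun z => (gam_pos _).le) (integral_nonneg fun r => by positivity)

theorem DecayData.fieldEnergy_le (hg : DecayData D g) (hK : 0 ≤ K)
    (hE : GoodField (fieldBound g K) (fieldLip D g K) E) (hfix : nextField g K E = E)
    {t : ℝ} (ht : 0 ≤ t) : fieldEnergy K (flowMass g E t) ≤ initialEnergy g := by
  have h1 : totalEnergy g K E t ≤ totalEnergy g K E 0 :=
    le_of_sub_le_sq ht fun s r hs hsr hr => hg.totalEnergy_sub_le hK hE hfix hs hsr hr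
  have h0 : flowMass g E 0 = massIn (massMeasure g) Prod.fst := by
    simp [flowMass, hE.charFlow_zero]
  have hN := hg.shellBound_flowMass hK hE (t := 0) (T := 0) (by simp)
  have h2 : fieldEnergy K (flowMass g E 0) ≤
      ∫ r in Ioi 0, massIn (massMeasure g) Prod.fst r ^ 2 / (8 * π * r ^ 2) := by
    rw [← h0]
    exact setIntegral_mono_on (hN.integrableOn_energyDensity hK (hg.flowMass_le E 0))
      (hN.integrableOn_sq_div (hg.flowMass_le E 0)) measurableSet_Ioi fun r _ => energyDensity_le
  have h3 : 0 ≤ ∫ z, gam (charFlow E t z).2 ∂(massMeasure g) :=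
    integral_nonneg fun z => (gam_pos _).le
  simp only [totalEnergy, hE.charFlow_zero] at h1
  rw [initialEnergy]
  linarith

/-- Bound of the capped mass inside radius `r`, independent of the cap. -/
theorem DecayData.min_flowMass_sq_le (hg : DecayData D g) (hK : 0 ≤ K)
    (hE : GoodField (fieldBound g K) (fieldLip D g K) E) (hfix : nextField g K E = E)
    {t r : ℝ} (ht : 0 ≤ t) (hr : 0 < r) :
    min (flowMass g E t r) (K * r ^ 3) ^ 2 ≤ 32 * π * initialEnergy g * r := by
  have hN := hg.shellBound_flowMass hK hE (t := t) le_rfl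
  refine (hN.min_sq_le hK (hg.flowMass_le E t) hr).trans ?_
  have := hg.fieldEnergy_le hK hE hfix ht
  gcongr

end EnergyInequality

section Apriori
open Filter Topology

theorem le_mul_rpow_of_bounds {κ r c₀ c₁ u : ℝ} (hκ : 0 ≤ κ) (hr : 0 ≤ r) (hc₀ : 0 ≤ c₀)
    (hc₁ : 0 ≤ c₁) (hu : 1 ≤ u) (h1 : κ ^ 2 * r ^ 5 ≤ c₀ ^ 2) (h2 : κ ≤ c₁ * u ^ 4) :
    κ ≤ 4 * (c₀ + c₁) * (r ^ 2 + u ^ (-(16 / 5) : ℝ)) ^ (-(5 / 4) : ℝ) := by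
  have hu0 : 0 < u := one_pos.trans_le hu
  set s := u ^ (-(16 / 5) : ℝ) with hs
  have hs0 : 0 < s := rpow_pos_of_pos hu0 _
  have hS : 0 < r ^ 2 + s := by positivity
  rw [rpow_neg hS.le, ← div_eq_mul_inv, le_div_iff₀ (rpow_pos_of_pos hS _)]
  have h24 : (2 : ℝ) ^ (5 / 4 : ℝ) ≤ 4 := by
    calc (2 : ℝ) ^ (5 / 4 : ℝ) ≤ 2 ^ (2 : ℝ) := rpow_le_rpow_of_exponent_le (by norm_num) (by norm_num)
      _ = 4 := by norm_num
  rcases le_total s (r ^ 2) with h | h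
  · have h3 : (r ^ 2 + s) ^ (5 / 4 : ℝ) ≤ 4 * r ^ (5 / 2 : ℝ) := by
      calc (r ^ 2 + s) ^ (5 / 4 : ℝ) ≤ (2 * r ^ 2) ^ (5 / 4 : ℝ) :=
            rpow_le_rpow hS.le (by linarith) (by norm_num)
        _ = 2 ^ (5 / 4 : ℝ) * r ^ (5 / 2 : ℝ) := by
            rw [mul_rpow (by norm_num) (by positivity), ← rpow_natCast r 2, ← rpow_mul hr]
            norm_num
        _ ≤ _ := by gcongr
    have h4 : κ * r ^ (5 / 2 : ℝ) ≤ c₀ := by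
      refine abs_le_of_sq_le_sq' ?_ hc₀ |>.2
      refine le_trans (le_of_eq ?_) h1
      rw [mul_pow, ← rpow_natCast (r ^ (5 / 2 : ℝ)) 2, ← rpow_mul hr]
      norm_num
    calc κ * (r ^ 2 + s) ^ (5 / 4 : ℝ) ≤ κ * (4 * r ^ (5 / 2 : ℝ)) := by gcongr
      _ = 4 * (κ * r ^ (5 / 2 : ℝ)) := by ring
      _ ≤ 4 * (c₀ + c₁) := by gcongr; linarith
  · have h3 : (r ^ 2 + s) ^ (5 / 4 : ℝ) ≤ 4 * (u ^ 4)⁻¹ := by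
      calc (r ^ 2 + s) ^ (5 / 4 : ℝ) ≤ (2 * s) ^ (5 / 4 : ℝ) :=
            rpow_le_rpow hS.le (by linarith) (by norm_num)
        _ = 2 ^ (5 / 4 : ℝ) * (u ^ 4)⁻¹ := by
            rw [mul_rpow (by norm_num) hs0.le, hs, ← rpow_mul hu0.le, ← rpow_natCast u 4,
              ← rpow_neg hu0.le]
            norm_num
        _ ≤ _ := by gcongr
    calc κ * (r ^ 2 + s) ^ (5 / 4 : ℝ) ≤ (c₁ * u ^ 4) * (4 * (u ^ 4)⁻¹) := by gcongr
      _ = 4 * c₁ := by field_simp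
      _ ≤ 4 * (c₀ + c₁) := by linarith

/-- A particle pushed outward by a repulsive radial force gains at most the potential difference
of a majorant of the force. -/
theorem gam_le_of_radial {X V : ℝ → E3} {κ : ℝ → ℝ} {t c a : ℝ} (ht : 0 ≤ t) (ha : 0 < a)
    (hc : 0 ≤ c)
    (hX : ∀ τ, HasDerivAt X (vhat (V τ)) τ) (hV : ∀ τ, HasDerivAt V (κ τ • X τ) τ)
    (hκ : ∀ τ, 0 ≤ τ → 0 ≤ κ τ)
    (hκ' : ∀ τ ∈ Icc 0 t, κ τ ≤ c * (‖X τ‖ ^ 2 + a) ^ (-(5 / 4) : ℝ)) :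
    gam (V t) ≤ gam (V 0) + 2 * c * a ^ (-(1 / 4) : ℝ) := by
  set q : ℝ → ℝ := fun τ => inner ℝ (X τ) (V τ) with hq
  have hq' : ∀ τ, HasDerivAt q ((gam (V τ))⁻¹ * ‖V τ‖ ^ 2 + κ τ * ‖X τ‖ ^ 2) τ := fun τ => by
    have h1 := (hX τ).inner ℝ (hV τ)
    refine h1.congr_deriv ?_
    rw [vhat_eq, real_inner_smul_left, real_inner_smul_right, real_inner_self_eq_norm_sq,
      real_inner_self_eq_norm_sq]
    ring
  have hqc : Continuous q := continuous_iff_continuousAt.2 fun τ => (hq' τ).continuousAt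
  have hqm : MonotoneOn q (Ici 0) := by
    refine monotoneOn_of_hasDerivWithinAt_nonneg (convex_Ici 0) hqc.continuousOn
      (fun τ _ => (hq' τ).hasDerivWithinAt) fun τ hτ => ?_
    have := gam_pos (V τ)
    have := hκ τ (by simpa using le_of_lt (by simpa using hτ))
    positivity
  have hγ : ∀ τ, HasDerivAt (fun τ => gam (V τ)) ((gam (V τ))⁻¹ * κ τ * q τ) τ := fun τ => by
    have h1 := (hasFDerivAt_gam (V τ)).comp_hasDerivAt τ (hV τ)
    refine h1.congr_deriv ?_
    simp only [innerSL_apply_apply, vhat_eq, real_inner_smul_left, real_inner_smul_right, hq]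
    rw [real_inner_comm]; ring
  obtain ⟨t₀, ht₀, hneg, hpos⟩ : ∃ t₀ ∈ Icc 0 t, (∀ τ ∈ Ioo 0 t₀, q τ ≤ 0) ∧
      ∀ τ ∈ Ioo t₀ t, 0 ≤ q τ := by
    rcases le_total (q t) 0 with h | h
    · exact ⟨t, ⟨ht, le_rfl⟩, fun τ hτ => (hqm hτ.1.le ht hτ.2.le).trans h,
        fun τ hτ => absurd hτ.1 hτ.2.not_gt⟩
    rcases le_total 0 (q 0) with h' | h'
    · exact ⟨0, ⟨le_rfl, ht⟩, fun τ hτ => absurd hτ.1 hτ.2.not_gt,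
        fun τ hτ => h'.trans (hqm self_mem_Ici hτ.1.le hτ.1.le)⟩
    obtain ⟨t₀, ht₀, h0⟩ := intermediate_value_Icc ht hqc.continuousOn ⟨h', h⟩
    refine ⟨t₀, ht₀, fun τ hτ => ?_, fun τ hτ => ?_⟩
    · rw [← h0]; exact hqm hτ.1.le ht₀.1 hτ.2.le
    · rw [← h0]; exact hqm ht₀.1 (ht₀.1.trans hτ.1.le) hτ.1.le
  have hγc : Continuous fun τ => gam (V τ) :=
    continuous_iff_continuousAt.2 fun τ => (hγ τ).continuousAt
  have hin : gam (V t₀) ≤ gam (V 0) := by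
    refine antitoneOn_of_hasDerivWithinAt_nonpos (convex_Icc 0 t₀) hγc.continuousOn
      (fun τ _ => (hγ τ).hasDerivWithinAt) (fun τ hτ => ?_) (left_mem_Icc.2 ht₀.1)
      (right_mem_Icc.2 ht₀.1) ht₀.1
    rw [interior_Icc] at hτ
    have := gam_pos (V τ)
    have := hκ τ hτ.1.le
    exact mul_nonpos_of_nonneg_of_nonpos (by positivity) (hneg τ hτ)
  set w : ℝ → ℝ := fun τ => -2 * c * (‖X τ‖ ^ 2 + a) ^ (-(1 / 4) : ℝ) with hw
  have hS : ∀ τ, 0 < ‖X τ‖ ^ 2 + a := fun τ => by positivity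
  have hw' : ∀ τ, HasDerivAt w
      (c * (‖X τ‖ ^ 2 + a) ^ (-(5 / 4) : ℝ) * ((gam (V τ))⁻¹ * q τ)) τ := fun τ => by
    have h1 : HasDerivAt (fun τ => ‖X τ‖ ^ 2 + a) (2 * ((gam (V τ))⁻¹ * q τ)) τ := by
      refine ((hX τ).norm_sq.add_const a).congr_deriv ?_
      rw [vhat_eq, real_inner_smul_right]
    have h2 := (h1.rpow_const (p := -(1 / 4)) (Or.inl (hS τ).ne')).const_mul (-2 * c)
    refine h2.congr_deriv ?_
    norm_num
    ring
  have hout : gam (V t) - w t ≤ gam (V t₀) - w t₀ := by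
    refine antitoneOn_of_hasDerivWithinAt_nonpos (convex_Icc t₀ t)
      (f := fun τ => gam (V τ) - w τ) (fun τ _ =>
        ((hγ τ).sub (hw' τ)).continuousAt.continuousWithinAt)
      (fun τ _ => ((hγ τ).sub (hw' τ)).hasDerivWithinAt) (fun τ hτ => ?_) (left_mem_Icc.2 ht₀.2)
      (right_mem_Icc.2 ht₀.2) ht₀.2
    rw [interior_Icc] at hτ
    have h1 := gam_pos (V τ)
    have h2 := hκ' τ ⟨ht₀.1.trans hτ.1.le, hτ.2.le⟩
    have h3 : 0 ≤ (gam (V τ))⁻¹ * q τ := mul_nonneg (by positivity) (hpos τ hτ)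
    have h4 := mul_le_mul_of_nonneg_right h2 h3
    linarith
  have h1 : w t ≤ 0 := by
    have : 0 ≤ (‖X t‖ ^ 2 + a) ^ (-(1 / 4) : ℝ) := (rpow_pos_of_pos (hS t) _).le
    simp only [hw]; nlinarith
  have h2 : -w t₀ ≤ 2 * c * a ^ (-(1 / 4) : ℝ) := by
    have : (‖X t₀‖ ^ 2 + a) ^ (-(1 / 4) : ℝ) ≤ a ^ (-(1 / 4) : ℝ) :=
      rpow_le_rpow_of_nonpos ha (by nlinarith [sq_nonneg ‖X t₀‖]) (by norm_num)
    simp only [hw]; nlinarith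
  linarith

variable {D K : ℝ} {g : E3 × E3 → ℝ} {E : ℝ → E3 → E3}

/-- The constant controlling the velocity growth, independent of the cap. -/
def growthConst (D : ℝ) (g : E3 × E3 → ℝ) : ℝ :=
  4 * (√(32 * π * initialEnergy g) + densConst D)

theorem capProfile_mul_cube {N : ℝ → ℝ} {r : ℝ} (hr : 0 < r) :
    capProfile K N r * r ^ 3 = min (N r) (K * r ^ 3) := by
  have hr3 : 0 < r ^ 3 := by positivity
  rw [capProfile, min_mul_of_nonneg _ _ hr3.le, div_mul_cancel₀ _ hr3.ne']

theorem DecayData.norm_vel_le_of_norm_vel_le (hg : DecayData D g) (hK : 0 ≤ K)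
    (hE : GoodField (fieldBound g K) (fieldLip D g K) E) (hfix : nextField g K E = E)
    {T Q : ℝ} (hQ : 0 ≤ Q) (hV : ∀ t ∈ Icc 0 T, ∀ z, ‖(charFlow E t z).2‖ ≤ ‖z.2‖ + Q)
    {t : ℝ} (ht : t ∈ Icc 0 T) (z : E3 × E3) :
    ‖(charFlow E t z).2‖ ≤ ‖z.2‖ + (1 + 2 * growthConst D g * (1 + Q) ^ (4 / 5 : ℝ)) := by
  have hd := hg.densConst_nonneg
  have hu : 0 < 1 + Q := by linarith
  have hEt : ∀ τ x, E τ x = ((4 * π)⁻¹ * capProfile K (flowMass g E τ) ‖x‖) • x := fun τ x => by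
    conv_lhs => rw [← hfix]
    rfl
  have hp : ∀ τ (x : E3), 0 ≤ capProfile K (flowMass g E τ) ‖x‖ := fun τ x =>
    capProfile_nonneg hK (flowMass_nonneg E τ) (norm_nonneg x)
  have key := gam_le_of_radial (X := fun τ => (charFlow E τ z).1)
    (V := fun τ => (charFlow E τ z).2)
    (κ := fun τ => (4 * π)⁻¹ * capProfile K (flowMass g E τ) ‖(charFlow E τ z).1‖)
    (c := growthConst D g) (a := (1 + Q) ^ (-(16 / 5) : ℝ)) ht.1 (rpow_pos_of_pos hu _)
    (by unfold growthConst; positivity)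
    (fun τ => hE.hasDerivAt_pos τ z)
    (fun τ => by simp only [← hEt]; exact hE.hasDerivAt_vel τ z)
    (fun τ _ => mul_nonneg inv_four_pi_nonneg (hp _ _))
    (fun τ hτ => by
      have hτT : τ ∈ Icc 0 T := ⟨hτ.1, hτ.2.trans ht.2⟩
      have hN : ShellBound (densConst D * (1 + Q) ^ 4) (flowMass g E τ) :=
        hg.shellBound (hE.measurePreserving_charFlow _) hQ
          (by rw [max_eq_left hτ.1]; exact hV τ hτT)
      refine (mul_le_of_le_one_left (hp _ _) inv_four_pi_le_one).trans ?_
      refine le_mul_rpow_of_bounds (hp _ _) (norm_nonneg _) (sqrt_nonneg _) hd (by linarith) ?_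
        ((min_le_left _ _).trans (hN.div_cube_le (norm_nonneg _)))
      rw [sq_sqrt (mul_nonneg (by positivity) initialEnergy_nonneg)]
      rcases (norm_nonneg (charFlow E τ z).1).eq_or_lt with h0 | h0
      · rw [← h0]
        simpa using mul_nonneg (by positivity) initialEnergy_nonneg
      · have h1 := hg.min_flowMass_sq_le hK hE hfix hτ.1 h0
        rw [← capProfile_mul_cube h0] at h1
        refine le_of_mul_le_mul_right ?_ h0
        linarith)
  have h1 := norm_le_gam (charFlow E t z).2
  have h2 := gam_le z.2
  simp only [hE.charFlow_zero] at key
  have h3 : ((1 + Q) ^ (-(16 / 5) : ℝ)) ^ (-(1 / 4) : ℝ) = (1 + Q) ^ (4 / 5 : ℝ) := by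
    rw [← rpow_mul hu.le]; norm_num
  rw [h3] at key
  linarith

/-- The velocity growth bound, independent of the cap and of time. -/
def velGrowth (D : ℝ) (g : E3 × E3 → ℝ) : ℝ := (2 + 2 * growthConst D g) ^ 5

theorem DecayData.norm_vel_le (hg : DecayData D g) (hK : 0 ≤ K)
    (hE : GoodField (fieldBound g K) (fieldLip D g K) E) (hfix : nextField g K E = E)
    {t : ℝ} (ht : 0 ≤ t) (z : E3 × E3) :
    ‖(charFlow E t z).2‖ ≤ ‖z.2‖ + velGrowth D g := by
  have hd := hg.densConst_nonneg
  have hc : 0 ≤ growthConst D g := by unfold growthConst; positivity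
  set S : Set ℝ := {Q | 0 ≤ Q ∧ ∀ s ∈ Icc 0 t, ∀ z, ‖(charFlow E s z).2‖ ≤ ‖z.2‖ + Q} with hS
  have hne : S.Nonempty := ⟨fieldBound g K * t, mul_nonneg (fieldBound_nonneg hK) ht,
    fun s hs z => hE.norm_vel_le (by rw [abs_of_nonneg hs.1]; exact hs.2) z⟩
  have hbdd : BddBelow S := ⟨0, fun Q hQ => hQ.1⟩
  set Q := sInf S with hQ
  have hQ0 : 0 ≤ Q := le_csInf hne fun Q hQ => hQ.1
  have hQv : ∀ s ∈ Icc 0 t, ∀ z, ‖(charFlow E s z).2‖ ≤ ‖z.2‖ + Q := fun s hs z => by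
    have : ‖(charFlow E s z).2‖ - ‖z.2‖ ≤ Q := le_csInf hne fun Q hQ => by
      linarith [hQ.2 s hs z]
    linarith
  have h1 : Q ≤ 1 + 2 * growthConst D g * (1 + Q) ^ (4 / 5 : ℝ) :=
    csInf_le hbdd ⟨by positivity, fun s hs z =>
      hg.norm_vel_le_of_norm_vel_le hK hE hfix hQ0 hQv hs z⟩
  have hu : 0 < 1 + Q := by linarith
  have h2 : 1 ≤ (1 + Q) ^ (4 / 5 : ℝ) := one_le_rpow (by linarith) (by norm_num)
  have h3 : 1 + Q ≤ (2 + 2 * growthConst D g) * (1 + Q) ^ (4 / 5 : ℝ) := by nlinarith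
  have h4 : (1 + Q) ^ (1 / 5 : ℝ) ≤ 2 + 2 * growthConst D g := by
    refine le_of_mul_le_mul_right ?_ (rpow_pos_of_pos hu (4 / 5))
    rw [← rpow_add hu]
    norm_num
    exact h3
  have h5 : 1 + Q ≤ velGrowth D g := by
    have h6 : ((1 + Q) ^ (1 / 5 : ℝ)) ^ 5 = 1 + Q := by
      rw [← rpow_natCast, ← rpow_mul hu.le]; norm_num
    rw [← h6]
    exact pow_le_pow_left₀ (rpow_pos_of_pos hu _).le h4 5
  linarith [hQv t ⟨ht, le_rfl⟩ z]

/-- Existence of a global self-consistent field with bounded velocity growth. -/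
theorem DecayData.exists_field (hg : DecayData D g) :
    ∃ (B : ℝ) (L : ℝ → ℝ) (Q : ℝ) (E : ℝ → E3 → E3), GoodField B L E ∧ 0 ≤ Q ∧
      (∀ t, 0 ≤ t → ∀ z, ‖(charFlow E t z).2‖ ≤ ‖z.2‖ + Q) ∧
      ∀ t x, E t x = ((4 * π)⁻¹ * (flowMass g E t ‖x‖ / ‖x‖ ^ 3)) • x := by
  have hd := hg.densConst_nonneg
  have hc : 0 ≤ growthConst D g := by unfold growthConst; positivity
  have hQ : 0 ≤ velGrowth D g := by unfold velGrowth; positivity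
  set K := densConst D * (1 + velGrowth D g) ^ 4 with hKdef
  have hK : 0 ≤ K := by positivity
  obtain ⟨E, hE, hfix⟩ := hg.exists_selfConsistent hK
  refine ⟨_, _, velGrowth D g, E, hE, hQ, fun t ht z => hg.norm_vel_le hK hE hfix ht z,
    fun t x => ?_⟩
  have hN : ShellBound K (flowMass g E t) :=
    hg.shellBound (hE.measurePreserving_charFlow _) hQ
      (hg.norm_vel_le hK hE hfix (le_max_right _ _))
  conv_lhs => rw [← hfix]
  rw [nextField, capField, capProfile, min_eq_left (hN.div_cube_le (norm_nonneg x))]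

end Apriori

section Decay
open Filter Topology ENNReal

/-- One-dimensional Sobolev inequality on a unit interval. -/
theorem enorm_le_lintegral_add {F : Type*} [NormedAddCommGroup F] [NormedSpace ℝ F]
    [CompleteSpace F] {u u' : ℝ → F} (hu : ∀ t, HasDerivAt u (u' t) t) (hu' : Continuous u')
    {c : ℝ} :
    ‖u c‖ₑ ≤ (∫⁻ t in Icc c (c + 1), ‖u t‖ₑ) + ∫⁻ t in Icc c (c + 1), ‖u' t‖ₑ := by
  have key : ∀ t ∈ Icc c (c + 1), ‖u c‖ₑ ≤ ‖u t‖ₑ + ∫⁻ t in Icc c (c + 1), ‖u' t‖ₑ := by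
    intro t ht
    have h1 : u t - u c = ∫ r in c..t, u' r :=
      (intervalIntegral.integral_eq_sub_of_hasDerivAt (fun r _ => hu r)
        (hu'.intervalIntegrable _ _)).symm
    have h2 : ‖u t - u c‖ₑ ≤ ∫⁻ t in Icc c (c + 1), ‖u' t‖ₑ := by
      rw [h1, intervalIntegral.integral_of_le ht.1]
      refine (enorm_integral_le_lintegral_enorm _).trans (lintegral_mono_set ?_)
      exact fun r hr => ⟨hr.1.le, hr.2.trans ht.2⟩
    calc ‖u c‖ₑ = ‖u t - (u t - u c)‖ₑ := by congr 1; abel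
      _ ≤ ‖u t‖ₑ + ‖u t - u c‖ₑ := enorm_sub_le
      _ ≤ _ := by gcongr
  have hv : volume (Icc c (c + 1)) = 1 := by simp
  calc ‖u c‖ₑ = ∫⁻ _ in Icc c (c + 1), ‖u c‖ₑ := by simp
    _ ≤ ∫⁻ t in Icc c (c + 1), (‖u t‖ₑ + ∫⁻ t in Icc c (c + 1), ‖u' t‖ₑ) :=
      setLIntegral_mono' measurableSet_Icc key
    _ = _ := by
      rw [lintegral_add_right _ measurable_const]
      simp

/-- Sum of the norms of the derivatives of order at most `k`. -/
def jetNorm {Z : Type*} [NormedAddCommGroup Z] [NormedSpace ℝ Z] (g : Z → ℝ) (k : ℕ) (z : Z) :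
    ℝ≥0∞ :=
  ∑ n ∈ Finset.range (k + 1), ‖iteratedFDeriv ℝ n g z‖ₑ

section Jet

variable {Z : Type*} [NormedAddCommGroup Z] [NormedSpace ℝ Z] {g : Z → ℝ} {k m : ℕ}

theorem continuous_jetNorm (hg : ContDiff ℝ m g) (hk : k ≤ m) : Continuous (jetNorm g k) := by
  refine continuous_finsetSum _ fun n hn => ?_
  refine (hg.continuous_iteratedFDeriv ?_).enorm
  exact_mod_cast (Nat.lt_succ_iff.1 (Finset.mem_range.1 hn)).trans hk

theorem jetNorm_le_lintegral (hg : ContDiff ℝ m g) (hk : k + 1 ≤ m) {z e : Z} (he : ‖e‖ ≤ 1)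
    (c : ℝ) :
    jetNorm g k (z + c • e) ≤ 2 * ∫⁻ t in Icc c (c + 1), jetNorm g (k + 1) (z + t • e) := by
  have hline : ∀ t : ℝ, HasDerivAt (fun t : ℝ => z + t • e) e t := fun t => by
    simpa using ((hasDerivAt_id t).smul_const e).const_add z
  have hcl : Continuous fun t : ℝ => z + t • e := by fun_prop
  have hc : ∀ n ≤ m, Continuous fun t : ℝ => ‖iteratedFDeriv ℝ n g (z + t • e)‖ₑ := fun n hn =>
    ((hg.continuous_iteratedFDeriv (by exact_mod_cast hn)).comp hcl).enorm
  have h1 : ∀ n ∈ Finset.range (k + 1), ‖iteratedFDeriv ℝ n g (z + c • e)‖ₑ ≤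
      (∫⁻ t in Icc c (c + 1), ‖iteratedFDeriv ℝ n g (z + t • e)‖ₑ) +
      ∫⁻ t in Icc c (c + 1), ‖iteratedFDeriv ℝ (n + 1) g (z + t • e)‖ₑ := by
    intro n hn
    have hnm : n < m := (Finset.mem_range.1 hn).trans_le hk
    have hd : Differentiable ℝ (iteratedFDeriv ℝ n g) :=
      hg.differentiable_iteratedFDeriv (by exact_mod_cast hnm)
    have hder : ∀ t : ℝ, HasDerivAt (fun t : ℝ => iteratedFDeriv ℝ n g (z + t • e))
        (fderiv ℝ (iteratedFDeriv ℝ n g) (z + t • e) e) t := fun t =>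
      (hd _).hasFDerivAt.comp_hasDerivAt t (hline t)
    have hcd : Continuous (fderiv ℝ (iteratedFDeriv ℝ n g)) := by
      have : ContDiff ℝ 1 (iteratedFDeriv ℝ n g) :=
        hg.iteratedFDeriv_right (by exact_mod_cast (by omega : 1 + n ≤ m))
      exact this.continuous_fderiv (by norm_num)
    refine (enorm_le_lintegral_add hder ((hcd.comp hcl).clm_apply continuous_const)).trans ?_
    gcongr with t
    refine enorm_le_iff_norm_le.2 ?_
    rw [← norm_fderiv_iteratedFDeriv]
    refine (ContinuousLinearMap.le_opNorm _ _).trans ?_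
    exact mul_le_of_le_one_right (norm_nonneg _) he
  have h2 : ∀ n ∈ Finset.range (k + 1), Measurable fun t : ℝ => ‖iteratedFDeriv ℝ n g (z + t • e)‖ₑ :=
    fun n hn => (hc n ((Finset.mem_range.1 hn).le.trans hk)).measurable
  have h3 : ∀ n ∈ Finset.range (k + 1),
      Measurable fun t : ℝ => ‖iteratedFDeriv ℝ (n + 1) g (z + t • e)‖ₑ :=
    fun n hn => (hc _ (Nat.succ_le_of_lt ((Finset.mem_range.1 hn).trans_le hk))).measurable
  calc jetNorm g k (z + c • e) ≤ _ := Finset.sum_le_sum h1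
    _ = (∫⁻ t in Icc c (c + 1), ∑ n ∈ Finset.range (k + 1), ‖iteratedFDeriv ℝ n g (z + t • e)‖ₑ) +
      ∫⁻ t in Icc c (c + 1), ∑ n ∈ Finset.range (k + 1),
        ‖iteratedFDeriv ℝ (n + 1) g (z + t • e)‖ₑ := by
      rw [Finset.sum_add_distrib, lintegral_finsetSum' _ fun n hn => (h2 n hn).aemeasurable,
        lintegral_finsetSum' _ fun n hn => (h3 n hn).aemeasurable]
    _ ≤ (∫⁻ t in Icc c (c + 1), jetNorm g (k + 1) (z + t • e)) +
        ∫⁻ t in Icc c (c + 1), jetNorm g (k + 1) (z + t • e) := by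
      gcongr with t t
      · exact Finset.sum_le_sum_of_subset (Finset.range_mono (by omega))
      · rw [jetNorm, Finset.sum_range_succ' _ (k + 1)]
        exact le_self_add
    _ = _ := (two_mul _).symm

end Jet

/-- Coordinates on phase space. -/
def phaseCoord (p : Fin 3 ⊕ Fin 3 → ℝ) : E3 × E3 :=
  (WithLp.toLp 2 fun i => p (.inl i), WithLp.toLp 2 fun i => p (.inr i))

theorem measurePreserving_phaseCoord : MeasurePreserving phaseCoord :=
  ((PiLp.volume_preserving_toLp (Fin 3)).prod (PiLp.volume_preserving_toLp (Fin 3))).comp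
    (volume_measurePreserving_sumPiEquivProdPi fun _ : Fin 3 ⊕ Fin 3 => ℝ)

theorem continuous_phaseCoord : Continuous phaseCoord := by
  unfold phaseCoord
  refine Continuous.prodMk ?_ ?_ <;>
  exact (PiLp.continuous_toLp 2 _).comp (by fun_prop)

theorem phaseCoord_update (p : Fin 3 ⊕ Fin 3 → ℝ) (i : Fin 3 ⊕ Fin 3) (t : ℝ) :
    phaseCoord (Function.update p i t) =
      phaseCoord (Function.update p i 0) + t • phaseCoord (Pi.single i 1) := by
  rcases i with i | i <;> refine Prod.ext ?_ ?_ <;> ext j <;>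
    by_cases h : j = i <;> simp [phaseCoord, Function.update_apply, Pi.single_apply, h]

theorem norm_phaseCoord_single (i : Fin 3 ⊕ Fin 3) : ‖phaseCoord (Pi.single i 1)‖ ≤ 1 := by
  rcases i with i | i <;>
  · simp only [phaseCoord, Prod.norm_def, EuclideanSpace.norm_eq, Pi.single_apply]
    simp

theorem jetNorm_le_lmarginal {g : E3 × E3 → ℝ} {m : ℕ} (hg : ContDiff ℝ m g)
    (p : Fin 3 ⊕ Fin 3 → ℝ) (s : Finset (Fin 3 ⊕ Fin 3)) (hs : s.card ≤ m) :
    jetNorm g 0 (phaseCoord p) ≤ 2 ^ s.card *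
      (∫⋯∫⁻_s, fun q => jetNorm g s.card (phaseCoord q)
        ∂fun i => volume.restrict (Icc (p i) (p i + 1))) p := by
  classical
  induction s using Finset.induction_on with
  | empty => simp
  | insert i s hi ih =>
    rw [Finset.card_insert_of_notMem hi] at hs ⊢
    refine (ih (by omega)).trans ?_
    rw [lmarginal_insert' (fun q => jetNorm g (s.card + 1) (phaseCoord q))
      (((continuous_jetNorm hg hs).comp continuous_phaseCoord).measurable) hi,
      pow_succ, mul_assoc]
    gcongr
    unfold lmarginal
    rw [← lintegral_const_mul' _ _ (by simp)]
    refine lintegral_mono fun y => ?_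
    set q := Function.updateFinset p s y with hq
    have hqi : q i = p i := by simp [hq, Function.updateFinset, hi]
    have h := jetNorm_le_lintegral hg hs (z := phaseCoord (Function.update q i 0))
      (norm_phaseCoord_single i) (p i)
    simp only [← phaseCoord_update] at h
    rw [← hqi, Function.update_eq_self] at h
    rwa [hqi] at h

theorem surjective_phaseCoord : Function.Surjective phaseCoord := fun z =>
  ⟨Sum.elim (fun i => z.1 i) fun i => z.2 i, rfl⟩

theorem jetNorm_le_setLIntegral {g : E3 × E3 → ℝ} (hg : ContDiff ℝ 6 g)
    (p : Fin 3 ⊕ Fin 3 → ℝ) :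
    jetNorm g 0 (phaseCoord p) ≤ 2 ^ 6 *
      ∫⁻ q in univ.pi fun i => Icc (p i) (p i + 1), jetNorm g 6 (phaseCoord q) := by
  have h := jetNorm_le_lmarginal (m := 6) (by exact_mod_cast hg) p Finset.univ (by simp)
  rw [lmarginal_univ] at h
  rw [volume_pi, Measure.restrict_pi_pi]
  simpa using h

theorem norm_toLp_sub_le_two {a b : Fin 3 → ℝ} (h : ∀ i, b i ∈ Icc (a i) (a i + 1)) :
    ‖(WithLp.toLp 2 a : E3)‖ ≤ ‖(WithLp.toLp 2 b : E3)‖ + 2 := by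
  have h1 : ‖(WithLp.toLp 2 a : E3) - WithLp.toLp 2 b‖ ≤ 2 := by
    rw [EuclideanSpace.norm_eq, Real.sqrt_le_iff]
    refine ⟨by norm_num, ?_⟩
    have h2 : ∀ i, ‖((WithLp.toLp 2 a : E3) - WithLp.toLp 2 b) i‖ ^ 2 ≤ 1 := fun i => by
      have := h i
      simp only [PiLp.sub_apply, Real.norm_eq_abs, sq_abs]
      have h3 := this.1
      have h4 := this.2
      nlinarith
    rw [Fin.sum_univ_three]
    linarith [h2 0, h2 1, h2 2]
  have := norm_le_norm_add_norm_sub' (WithLp.toLp 2 a : E3) (WithLp.toLp 2 b)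
  linarith

/-- Weighted Sobolev embedding: a function whose derivatives up to order six are square integrable
against a large polynomial weight decays pointwise. -/
theorem exists_decayData {g : E3 × E3 → ℝ} (hg : ContDiff ℝ 6 g) (hg0 : ∀ z, 0 ≤ g z)
    (hdec : ∀ n : ℕ, n ≤ 6 → MemLp (fun p : E3 × E3 =>
        (1 + ‖p.1‖ + ‖p.2‖) ^ (100 : ℕ) * ‖iteratedFDeriv ℝ n g p‖) 2 volume) :
    ∃ D, DecayData D g := by
  set F : E3 × E3 → ℝ := fun p => ∑ n ∈ Finset.range 7,
    (1 + ‖p.1‖ + ‖p.2‖) ^ (100 : ℕ) * ‖iteratedFDeriv ℝ n g p‖ with hF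
  have hFL : MemLp F 2 volume :=
    memLp_finsetSum _ fun n hn => hdec n (by have := Finset.mem_range.1 hn; omega)
  have hFe : ∀ z, ‖F z‖ₑ = ENNReal.ofReal ((1 + ‖z.1‖ + ‖z.2‖) ^ 100) * jetNorm g 6 z := by
    intro z
    have h0 : 0 ≤ (1 + ‖z.1‖ + ‖z.2‖) ^ 100 := by positivity
    rw [Real.enorm_eq_ofReal (Finset.sum_nonneg fun n _ => mul_nonneg h0 (norm_nonneg _)),
      ← Finset.mul_sum,
      ENNReal.ofReal_mul h0, ENNReal.ofReal_sum_of_nonneg fun n _ => norm_nonneg _]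
    simp [jetNorm]
  have hFc : Measurable fun z => ‖F z‖ₑ := by
    simp only [hFe]
    refine Measurable.mul ?_ (continuous_jetNorm (m := 6) (by exact_mod_cast hg) le_rfl).measurable
    have hw : Continuous fun z : E3 × E3 => 1 + ‖z.1‖ + ‖z.2‖ := by fun_prop
    exact (hw.pow 100).measurable.ennreal_ofReal
  set K : ℝ≥0∞ := ∫⁻ z, ‖F z‖ₑ ^ 2 with hK
  have hKfin : K < ⊤ := by
    have := (eLpNorm_lt_top_iff_lintegral_rpow_enorm_lt_top (by norm_num) (by norm_num)).1 hFL.2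
    simpa [hK] using this
  set C : ℝ≥0∞ := 2 ^ 6 * (ENNReal.ofReal (5 ^ 9) * (1 + K)) with hC
  have hCfin : C ≠ ⊤ := by
    refine ENNReal.mul_ne_top (by norm_num) (ENNReal.mul_ne_top ENNReal.ofReal_ne_top ?_)
    exact ENNReal.add_ne_top.2 ⟨ENNReal.one_ne_top, hKfin.ne⟩
  have main : ∀ z, ENNReal.ofReal ((1 + ‖z.1‖ + ‖z.2‖) ^ 9) * ‖g z‖ₑ ≤ C := by
    intro z
    obtain ⟨p, rfl⟩ := surjective_phaseCoord z
    set Q := univ.pi fun i => Icc (p i) (p i + 1) with hQ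
    have hQm : MeasurableSet Q := MeasurableSet.univ_pi fun i => measurableSet_Icc
    have hQv : volume Q = 1 := by
      rw [hQ, volume_pi_pi]
      simp
    have hw : ∀ q ∈ Q, ENNReal.ofReal ((1 + ‖(phaseCoord p).1‖ + ‖(phaseCoord p).2‖) ^ 9) *
        jetNorm g 6 (phaseCoord q) ≤ ENNReal.ofReal (5 ^ 9) * ‖F (phaseCoord q)‖ₑ := by
      intro q hq
      rw [hFe, ← mul_assoc, ← ENNReal.ofReal_mul (by positivity)]
      gcongr
      have h1 : ‖(phaseCoord p).1‖ ≤ ‖(phaseCoord q).1‖ + 2 :=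
        norm_toLp_sub_le_two fun i => hq (.inl i) trivial
      have h2 : ‖(phaseCoord p).2‖ ≤ ‖(phaseCoord q).2‖ + 2 :=
        norm_toLp_sub_le_two fun i => hq (.inr i) trivial
      set w := 1 + ‖(phaseCoord q).1‖ + ‖(phaseCoord q).2‖ with hw
      have hn1 := norm_nonneg (phaseCoord q).1
      have hn2 := norm_nonneg (phaseCoord q).2
      have hw1 : 1 ≤ w := by linarith
      calc (1 + ‖(phaseCoord p).1‖ + ‖(phaseCoord p).2‖) ^ 9 ≤ (5 * w) ^ 9 := by
            gcongr; linarith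
        _ = 5 ^ 9 * w ^ 9 := mul_pow _ _ _
        _ ≤ 5 ^ 9 * w ^ 100 := by
            exact mul_le_mul_of_nonneg_left (pow_le_pow_right₀ hw1 (by norm_num)) (by positivity)
    have hg1 : ‖g (phaseCoord p)‖ₑ = jetNorm g 0 (phaseCoord p) := by
      simp only [jetNorm, zero_add, Finset.sum_range_one]
      rw [← ofReal_norm, ← ofReal_norm, norm_iteratedFDeriv_zero]
    rw [hg1]
    calc ENNReal.ofReal ((1 + ‖(phaseCoord p).1‖ + ‖(phaseCoord p).2‖) ^ 9) *
          jetNorm g 0 (phaseCoord p)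
        ≤ ENNReal.ofReal ((1 + ‖(phaseCoord p).1‖ + ‖(phaseCoord p).2‖) ^ 9) *
          (2 ^ 6 * ∫⁻ q in Q, jetNorm g 6 (phaseCoord q)) := by
          gcongr
          exact jetNorm_le_setLIntegral hg p
      _ = 2 ^ 6 * ∫⁻ q in Q, ENNReal.ofReal ((1 + ‖(phaseCoord p).1‖ + ‖(phaseCoord p).2‖) ^ 9) *
          jetNorm g 6 (phaseCoord q) := by
          rw [lintegral_const_mul' _ _ ENNReal.ofReal_ne_top]
          ring
      _ ≤ 2 ^ 6 * ∫⁻ q in Q, ENNReal.ofReal (5 ^ 9) * (1 + ‖F (phaseCoord q)‖ₑ ^ 2) := by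
          gcongr 2 ^ 6 * ?_
          refine setLIntegral_mono' hQm fun q hq => (hw q hq).trans ?_
          gcongr
          rcases le_total ‖F (phaseCoord q)‖ₑ 1 with h | h
          · exact h.trans le_self_add
          · exact (le_self_pow₀ h (by norm_num)).trans le_add_self
      _ = 2 ^ 6 * (ENNReal.ofReal (5 ^ 9) * (1 + ∫⁻ q in Q, ‖F (phaseCoord q)‖ₑ ^ 2)) := by
          rw [lintegral_const_mul' _ _ ENNReal.ofReal_ne_top, lintegral_add_left measurable_const]
          simp [hQv]
      _ ≤ C := by
          rw [hC]
          gcongr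
          refine (setLIntegral_le_lintegral _ _).trans ?_
          exact (measurePreserving_phaseCoord.lintegral_comp (hFc.pow_const 2)).le
  refine ⟨C.toReal, hg.continuous, hg0, fun z => ?_⟩
  have h := main z
  rw [Real.enorm_eq_ofReal (hg0 z), ← ENNReal.ofReal_mul (by positivity),
    ENNReal.ofReal_le_iff_le_toReal hCfin] at h
  have hz1 := norm_nonneg z.1
  have hz2 := norm_nonneg z.2
  have h4 : (1 + ‖z.1‖) ^ 4 * (1 + ‖z.2‖) ^ 5 ≤ (1 + ‖z.1‖ + ‖z.2‖) ^ 9 := by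
    calc (1 + ‖z.1‖) ^ 4 * (1 + ‖z.2‖) ^ 5
        ≤ (1 + ‖z.1‖ + ‖z.2‖) ^ 4 * (1 + ‖z.1‖ + ‖z.2‖) ^ 5 :=
          mul_le_mul (pow_le_pow_left₀ (by positivity) (by linarith) 4)
            (pow_le_pow_left₀ (by positivity) (by linarith) 5) (by positivity) (by positivity)
      _ = _ := by ring
  rw [mul_assoc, ← mul_inv, ← div_eq_mul_inv, le_div_iff₀ (by positivity), mul_comm]
  exact (mul_le_mul_of_nonneg_right h4 (hg0 z)).trans h

end Decay

section Newton
open Filter Topology ENNReal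

theorem lintegral_plane_radial (F : ℝ → ℝ≥0∞) (hF : Measurable F) :
    ∫⁻ w : ℝ × ℝ, F (w.1 ^ 2 + w.2 ^ 2) =
      ENNReal.ofReal (2 * π) * ∫⁻ r in Ioi 0, ENNReal.ofReal r * F (r ^ 2) := by
  rw [← lintegral_comp_polarCoord_symm]
  have h1 : ∀ p : ℝ × ℝ, (polarCoord.symm p).1 ^ 2 + (polarCoord.symm p).2 ^ 2 = p.1 ^ 2 := by
    intro p
    simp only [polarCoord_symm_apply]
    linear_combination p.1 ^ 2 * Real.sin_sq_add_cos_sq p.2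
  simp only [h1, polarCoord_target, smul_eq_mul]
  rw [Measure.volume_eq_prod, ← Measure.prod_restrict,
    lintegral_prod _ (Measurable.aemeasurable (by fun_prop))]
  simp only [lintegral_const, Measure.restrict_apply MeasurableSet.univ, univ_inter, Real.volume_Ioo]
  rw [lintegral_mul_const _ (by fun_prop), mul_comm]
  congr 2
  ring

theorem image_sqrt_add_sq_Ioi (z : ℝ) : (fun r => √(z ^ 2 + r ^ 2)) '' Ioi 0 = Ioi |z| := by
  ext σ
  constructor
  · rintro ⟨r, hr, rfl⟩
    have hr : 0 < r := hr
    rw [mem_Ioi, Real.lt_sqrt (abs_nonneg z), sq_abs]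
    linarith [pow_pos hr 2]
  · intro hσ
    have hσ : |z| < σ := hσ
    have h1 : 0 < σ ^ 2 - z ^ 2 := by
      rw [← sq_abs z]
      nlinarith [abs_nonneg z]
    refine ⟨√(σ ^ 2 - z ^ 2), Real.sqrt_pos.2 h1, ?_⟩
    simp only [Real.sq_sqrt h1.le]
    rw [show z ^ 2 + (σ ^ 2 - z ^ 2) = σ ^ 2 by ring, Real.sqrt_sq ((abs_nonneg z).trans hσ.le)]

theorem lintegral_Ioi_sqrt_add_sq (z : ℝ) (F : ℝ → ℝ≥0∞) :
    ∫⁻ r in Ioi 0, ENNReal.ofReal r * F √(z ^ 2 + r ^ 2) =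
      ∫⁻ σ in Ioi |z|, ENNReal.ofReal σ * F σ := by
  have hpos : ∀ r ∈ Ioi (0 : ℝ), 0 < z ^ 2 + r ^ 2 := fun r hr => by
    have hr : 0 < r := hr
    positivity
  have hder : ∀ r ∈ Ioi (0 : ℝ),
      HasDerivWithinAt (fun r => √(z ^ 2 + r ^ 2)) (r / √(z ^ 2 + r ^ 2)) (Ioi 0) r := by
    intro r hr
    have h1 : HasDerivAt (fun r : ℝ => z ^ 2 + r ^ 2) (2 * r) r := by
      simpa using (hasDerivAt_pow 2 r).const_add (z ^ 2)
    convert! (h1.sqrt (hpos r hr).ne').hasDerivWithinAt using 1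
    field_simp
  have hinj : InjOn (fun r => √(z ^ 2 + r ^ 2)) (Ioi 0) := by
    intro a ha b hb hab
    have ha : 0 < a := ha
    have hb : 0 < b := hb
    have := (Real.sqrt_inj (by positivity) (by positivity)).1 hab
    nlinarith
  rw [← image_sqrt_add_sq_Ioi, lintegral_image_eq_lintegral_abs_deriv_mul measurableSet_Ioi hder hinj]
  refine setLIntegral_congr_fun measurableSet_Ioi fun r hr => ?_
  have hs := Real.sqrt_pos.2 (hpos r hr)
  have hr : 0 < r := hr
  rw [← mul_assoc, ← ENNReal.ofReal_mul (abs_nonneg _), abs_of_pos (by positivity),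
    div_mul_cancel₀ _ hs.ne']

/-- The joint law of the norm and the first coordinate under Lebesgue measure. -/
def zonalMeasure : Measure (ℝ × ℝ) :=
  (volume.restrict {q : ℝ × ℝ | |q.2| < q.1}).withDensity fun q => ENNReal.ofReal (2 * π * q.1)

theorem measurableSet_zonal : MeasurableSet {q : ℝ × ℝ | |q.2| < q.1} :=
  measurableSet_lt (by fun_prop) (by fun_prop)

theorem measurable_norm_coord : Measurable fun y : E3 => (‖y‖, y 0) := by fun_prop

theorem lintegral_norm_coord (F : ℝ × ℝ → ℝ≥0∞) (hF : Measurable F) :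
    ∫⁻ y : E3, F (‖y‖, y 0) = ∫⁻ q, F q ∂zonalMeasure := by
  have hT : MeasurePreserving (fun y : E3 => (y 0, (y 1, y 2))) :=
    ((MeasurePreserving.id volume).prod (volume_preserving_finTwoArrow ℝ)).comp
      ((volume_preserving_piFinSuccAbove (fun _ : Fin 3 => ℝ) 0).comp
        (PiLp.volume_preserving_ofLp (Fin 3)))
  have h1 : ∀ y : E3, F (‖y‖, y 0) = (fun w : ℝ × ℝ × ℝ =>
      F (√(w.1 ^ 2 + (w.2.1 ^ 2 + w.2.2 ^ 2)), w.1)) (y 0, (y 1, y 2)) := by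
    intro y
    simp [EuclideanSpace.norm_eq, Fin.sum_univ_three, add_assoc]
  have hm : Measurable fun w : ℝ × ℝ × ℝ => F (√(w.1 ^ 2 + (w.2.1 ^ 2 + w.2.2 ^ 2)), w.1) := by
    fun_prop
  simp only [h1]
  rw [hT.lintegral_comp hm, Measure.volume_eq_prod, lintegral_prod _ hm.aemeasurable]
  have h2 : ∀ z : ℝ, ∫⁻ w : ℝ × ℝ, F (√(z ^ 2 + (w.1 ^ 2 + w.2 ^ 2)), z) =
      ∫⁻ σ, ({q : ℝ × ℝ | |q.2| < q.1}.indicator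
        (fun q => ENNReal.ofReal (2 * π * q.1) * F q)) (σ, z) := by
    intro z
    rw [lintegral_plane_radial (fun a => F (√(z ^ 2 + a), z)) (by fun_prop),
      lintegral_Ioi_sqrt_add_sq z fun σ => F (σ, z), ← lintegral_const_mul _ (by fun_prop),
      ← lintegral_indicator measurableSet_Ioi]
    refine lintegral_congr fun σ => ?_
    by_cases h : |z| < σ
    · have : (σ, z) ∈ {q : ℝ × ℝ | |q.2| < q.1} := h
      rw [indicator_of_mem (show σ ∈ Ioi |z| from h), indicator_of_mem this, ← mul_assoc,
        ← ENNReal.ofReal_mul (by positivity)]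
    · have : (σ, z) ∉ {q : ℝ × ℝ | |q.2| < q.1} := h
      rw [indicator_of_notMem (show σ ∉ Ioi |z| from h), indicator_of_notMem this]
  simp only [h2]
  have hm2 : Measurable ({q : ℝ × ℝ | |q.2| < q.1}.indicator
      (fun q => ENNReal.ofReal (2 * π * q.1) * F q)) :=
    Measurable.indicator (by fun_prop) measurableSet_zonal
  rw [← lintegral_prod_symm _ hm2.aemeasurable, ← Measure.volume_eq_prod,
    lintegral_indicator measurableSet_zonal, zonalMeasure,
    lintegral_withDensity_eq_lintegral_mul _ (by fun_prop) hF]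
  rfl

theorem map_norm_coord : (volume : Measure E3).map (fun y => (‖y‖, y 0)) = zonalMeasure :=
  Measure.ext_of_lintegral _ fun F hF => by
    rw [lintegral_map hF measurable_norm_coord, lintegral_norm_coord F hF]

theorem integral_norm_coord {F : ℝ × ℝ → ℝ} (hF : Measurable F)
    (hi : Integrable fun y : E3 => F (‖y‖, y 0)) :
    ∫ y : E3, F (‖y‖, y 0) =
      ∫ σ in Ioi 0, 2 * π * σ * ∫ z in -σ..σ, F (σ, z) := by
  set S := {q : ℝ × ℝ | |q.2| < q.1} with hS
  have hSm : MeasurableSet S := measurableSet_zonal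
  have hi1 : Integrable F zonalMeasure := by
    rw [← map_norm_coord]
    exact (integrable_map_measure hF.aestronglyMeasurable measurable_norm_coord.aemeasurable).2 hi
  have hd : Measurable fun q : ℝ × ℝ => ENNReal.ofReal (2 * π * q.1) := by fun_prop
  have hSd : ∀ q ∈ S, (ENNReal.ofReal (2 * π * q.1)).toReal • F q = 2 * π * q.1 * F q := by
    intro q hq
    have : 0 < q.1 := (abs_nonneg _).trans_lt hq
    rw [ENNReal.toReal_ofReal (by positivity), smul_eq_mul]
  have hi2 : IntegrableOn (fun q => 2 * π * q.1 * F q) S := by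
    rw [zonalMeasure, integrable_withDensity_iff_integrable_smul' hd (by simp)] at hi1
    exact (integrableOn_congr_fun hSd hSm).1 hi1
  have h1 : ∫ y : E3, F (‖y‖, y 0) = ∫ q in S, 2 * π * q.1 * F q := by
    rw [← integral_map measurable_norm_coord.aemeasurable hF.aestronglyMeasurable, map_norm_coord,
      zonalMeasure, integral_withDensity_eq_integral_toReal_smul hd (by simp)]
    exact setIntegral_congr_fun hSm hSd
  rw [h1, ← integral_indicator hSm, Measure.volume_eq_prod,
    integral_prod _ (by rw [← Measure.volume_eq_prod]; exact hi2.integrable_indicator hSm),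
    ← integral_indicator measurableSet_Ioi]
  refine integral_congr_ae (Eventually.of_forall fun σ => ?_)
  by_cases hσ : 0 < σ
  · simp only [indicator_of_mem (show σ ∈ Ioi 0 from hσ)]
    rw [intervalIntegral.integral_of_le (by linarith), integral_Ioc_eq_integral_Ioo,
      ← integral_const_mul, ← integral_indicator measurableSet_Ioo]
    refine integral_congr_ae (Eventually.of_forall fun z => ?_)
    simp [indicator_apply, hS, abs_lt]
  · simp only [indicator_of_notMem (show σ ∉ Ioi 0 from hσ)]
    refine integral_eq_zero_of_ae (Eventually.of_forall fun z => ?_)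
    have hz : (σ, z) ∉ S := fun h => hσ ((abs_nonneg z).trans_lt h)
    exact indicator_of_notMem hz _

theorem integral_norm_coord_congr {F G : ℝ × ℝ → ℝ} (hF : Measurable F) (hG : Measurable G)
    (hFi : Integrable fun y : E3 => F (‖y‖, y 0)) (hGi : Integrable fun y : E3 => G (‖y‖, y 0))
    {R : ℝ} (h : ∀ σ, 0 < σ → σ ≠ R → ∫ z in -σ..σ, F (σ, z) = ∫ z in -σ..σ, G (σ, z)) :
    ∫ y : E3, F (‖y‖, y 0) = ∫ y : E3, G (‖y‖, y 0) := by
  rw [integral_norm_coord hF hFi, integral_norm_coord hG hGi]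
  refine setIntegral_congr_ae measurableSet_Ioi ?_
  have : ∀ᵐ σ : ℝ, σ ≠ R := by simp [ae_iff]
  filter_upwards [this] with σ h1 h2
  rw [h σ h2 h1]

/-- The average of the Coulomb force over a sphere. -/
theorem integral_coulomb_zone {R σ : ℝ} (hR : 0 < R) (hσ : 0 < σ) (hne : σ ≠ R) :
    ∫ z in -σ..σ, (R - z) / √(R ^ 2 - 2 * R * z + σ ^ 2) ^ 3 =
      ∫ _z in -σ..σ, if σ ≤ R then (R ^ 2)⁻¹ else 0 := by
  have hu : ∀ z ∈ uIcc (-σ) σ, 0 < R ^ 2 - 2 * R * z + σ ^ 2 := by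
    intro z hz
    rw [uIcc_of_le (by linarith)] at hz
    have h1 : 0 < (R - σ) ^ 2 := by
      have : R - σ ≠ 0 := sub_ne_zero.2 hne.symm
      positivity
    nlinarith [mul_nonneg hR.le (sub_nonneg.2 hz.2)]
  have hder : ∀ z ∈ uIcc (-σ) σ, HasDerivAt
      (fun z => (2 * R ^ 2)⁻¹ * (-√(R ^ 2 - 2 * R * z + σ ^ 2) +
        (R ^ 2 - σ ^ 2) / √(R ^ 2 - 2 * R * z + σ ^ 2)))
      ((R - z) / √(R ^ 2 - 2 * R * z + σ ^ 2) ^ 3) z := by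
    intro z hz
    have hpos := hu z hz
    have hs := Real.sqrt_pos.2 hpos
    have h1 : HasDerivAt (fun z : ℝ => R ^ 2 - 2 * R * z + σ ^ 2) (-(2 * R)) z := by
      simpa using (((hasDerivAt_id z).const_mul (2 * R)).const_sub (R ^ 2)).add_const (σ ^ 2)
    have h2 := h1.sqrt hpos.ne'
    have h3 := (h2.neg.add ((hasDerivAt_const z (R ^ 2 - σ ^ 2)).div h2 hs.ne')).const_mul
      (2 * R ^ 2)⁻¹
    convert! h3 using 1
    have hsq : √(R ^ 2 - 2 * R * z + σ ^ 2) ^ 2 = R ^ 2 - 2 * R * z + σ ^ 2 := Real.sq_sqrt hpos.le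
    set u := √(R ^ 2 - 2 * R * z + σ ^ 2)
    field_simp
    linear_combination (-R) * hsq
  have hcont : ContinuousOn (fun z => (R - z) / √(R ^ 2 - 2 * R * z + σ ^ 2) ^ 3) (uIcc (-σ) σ) :=
    ContinuousOn.div (by fun_prop) (by fun_prop) fun z hz => (pow_pos (Real.sqrt_pos.2 (hu z hz)) 3).ne'
  rw [intervalIntegral.integral_eq_sub_of_hasDerivAt hder hcont.intervalIntegrable,
    intervalIntegral.integral_const]
  rw [show R ^ 2 - 2 * R * σ + σ ^ 2 = (R - σ) ^ 2 by ring,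
    show R ^ 2 - 2 * R * -σ + σ ^ 2 = (R + σ) ^ 2 by ring, Real.sqrt_sq_eq_abs,
    Real.sqrt_sq (by linarith)]
  have h1 : R + σ ≠ 0 := by positivity
  have h2 : R - σ ≠ 0 := sub_ne_zero.2 hne.symm
  rcases lt_or_gt_of_ne hne with h | h
  · rw [if_pos h.le, abs_of_pos (by linarith)]
    rw [smul_eq_mul]
    field_simp
    ring
  · rw [if_neg (not_le.2 h), abs_of_neg (by linarith)]
    have h3 : -(R - σ) ≠ 0 := neg_ne_zero.2 h2
    rw [smul_zero]
    field_simp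
    ring

theorem integrable_indicator_inv_norm_sq :
    Integrable ((Metric.ball (0 : E3) 1).indicator fun y => (‖y‖ ^ 2)⁻¹) := by
  refine (integrable_indicator_iff Metric.isOpen_ball.measurableSet).2 ?_
  refine integrableOn_ball_of_norm_le_rpow (C := 1) (α := 2) (by simp) (by simp; norm_num)
    (Eventually.of_forall fun y => ?_) (Measurable.aestronglyMeasurable (by fun_prop))
  rw [one_mul, Real.rpow_neg (norm_nonneg _), norm_inv, norm_pow, norm_norm]
  norm_num

variable {p : ℝ → ℝ} {M : ℝ}

theorem norm_coulomb_le (hb : ∀ r, |p r| ≤ M) (x y : E3) :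
    ‖(p ‖y‖ / ‖x - y‖ ^ 3) • (x - y)‖ ≤
      M * (Metric.ball (0 : E3) 1).indicator (fun y => (‖y‖ ^ 2)⁻¹) (x - y) + |p ‖y‖| := by
  have hM : 0 ≤ M := (abs_nonneg _).trans (hb 0)
  rw [norm_smul, norm_div, norm_pow, norm_norm, Real.norm_eq_abs]
  rcases eq_or_ne (x - y) 0 with h | h
  · rw [h]
    have : 0 ≤ (Metric.ball (0 : E3) 1).indicator (fun y => (‖y‖ ^ 2)⁻¹) 0 :=
      indicator_nonneg (fun _ _ => by positivity) _
    rw [norm_zero, mul_zero]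
    positivity
  have hn : 0 < ‖x - y‖ := norm_pos_iff.2 h
  have h1 : |p ‖y‖| / ‖x - y‖ ^ 3 * ‖x - y‖ = |p ‖y‖| * (‖x - y‖ ^ 2)⁻¹ := by
    field_simp
  rw [h1]
  by_cases hball : x - y ∈ Metric.ball (0 : E3) 1
  · rw [indicator_of_mem hball]
    have := mul_le_mul_of_nonneg_right (hb ‖y‖) (inv_nonneg.2 (sq_nonneg ‖x - y‖))
    linarith [abs_nonneg (p ‖y‖)]
  · rw [indicator_of_notMem hball, mul_zero, zero_add]
    have h2 : 1 ≤ ‖x - y‖ := by simpa using hball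
    refine mul_le_of_le_one_right (abs_nonneg _) (inv_le_one_of_one_le₀ (one_le_pow₀ h2))

theorem integrable_coulomb (hp : Measurable p) (hb : ∀ r, |p r| ≤ M)
    (hi : Integrable fun y : E3 => p ‖y‖) (x : E3) :
    Integrable fun y : E3 => (p ‖y‖ / ‖x - y‖ ^ 3) • (x - y) := by
  refine Integrable.mono' (((integrable_indicator_inv_norm_sq.comp_sub_left x).const_mul M).add
    hi.abs) ?_ (Eventually.of_forall fun y => norm_coulomb_le hb x y)
  refine Measurable.aestronglyMeasurable ?_
  fun_prop

theorem coulomb_equivariant (U : E3 ≃ₗᵢ[ℝ] E3) (x : E3) :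
    ∫ y, (p ‖y‖ / ‖U x - y‖ ^ 3) • (U x - y) = U (∫ y, (p ‖y‖ / ‖x - y‖ ^ 3) • (x - y)) := by
  rw [← U.measurePreserving.integral_comp U.toHomeomorph.measurableEmbedding]
  have h := U.toContinuousLinearEquiv.integral_comp_comm
    (μ := volume) fun y => (p ‖y‖ / ‖x - y‖ ^ 3) • (x - y)
  refine Eq.trans ?_ h
  refine integral_congr_ae (Eventually.of_forall fun y => ?_)
  simp [← map_sub]

theorem coulomb_axis (hp : Measurable p) (hb : ∀ r, |p r| ≤ M)
    (hi : Integrable fun y : E3 => p ‖y‖) {R : ℝ} (hR : 0 < R) :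
    inner ℝ (EuclideanSpace.single (0 : Fin 3) R)
      (∫ y : E3, (p ‖y‖ / ‖EuclideanSpace.single (0 : Fin 3) R - y‖ ^ 3) •
        (EuclideanSpace.single (0 : Fin 3) R - y)) =
      R⁻¹ * ∫ y in {y : E3 | ‖y‖ ≤ R}, p ‖y‖ := by
  set x : E3 := EuclideanSpace.single (0 : Fin 3) R with hx
  have hxn : ‖x‖ = R := by simp [hx, abs_of_pos hR]
  have hxy : ∀ y : E3, inner ℝ x y = R * y 0 := fun y => by
    simp [hx, EuclideanSpace.inner_single_left]
  have hxyn : ∀ y : E3, ‖x - y‖ = √(R ^ 2 - 2 * R * y 0 + ‖y‖ ^ 2) := fun y => by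
    rw [← Real.sqrt_sq (norm_nonneg (x - y)), norm_sub_sq_real, hxy, hxn]
    congr 1; ring
  have hInt := integrable_coulomb hp hb hi x
  rw [← integral_inner hInt]
  set F : ℝ × ℝ → ℝ := fun q => p q.1 * R *
    ((R - q.2) / √(R ^ 2 - 2 * R * q.2 + q.1 ^ 2) ^ 3) with hF
  set G : ℝ × ℝ → ℝ := fun q => p q.1 * R * (if q.1 ≤ R then (R ^ 2)⁻¹ else 0) with hG
  have h1 : ∀ y : E3, inner ℝ x ((p ‖y‖ / ‖x - y‖ ^ 3) • (x - y)) = F (‖y‖, y 0) := fun y => by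
    rw [inner_smul_right, inner_sub_right, real_inner_self_eq_norm_sq, hxn, hxy, hxyn, hF]
    ring
  have hS : MeasurableSet {y : E3 | ‖y‖ ≤ R} := measurableSet_le (by fun_prop) (by fun_prop)
  have h2 : ∀ y : E3, G (‖y‖, y 0) =
      {y : E3 | ‖y‖ ≤ R}.indicator (fun y => R⁻¹ * p ‖y‖) y := fun y => by
    by_cases h : ‖y‖ ≤ R
    · rw [indicator_of_mem (show y ∈ {y : E3 | ‖y‖ ≤ R} from h)]
      simp only [hG, if_pos h]
      field_simp
    · rw [indicator_of_notMem (show y ∉ {y : E3 | ‖y‖ ≤ R} from h)]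
      simp only [hG, if_neg h, mul_zero]
  have hFi : Integrable fun y : E3 => F (‖y‖, y 0) := by
    simpa only [h1] using hInt.const_inner (𝕜 := ℝ) x
  have hGi : Integrable fun y : E3 => G (‖y‖, y 0) := by
    simp only [h2]
    exact (hi.const_mul _).indicator hS
  simp only [h1]
  rw [integral_norm_coord_congr (G := G) (R := R) (by fun_prop) ?_ hFi hGi ?_]
  · simp only [h2]
    rw [integral_indicator hS, integral_const_mul]
  · refine Measurable.mul (by fun_prop) (Measurable.ite ?_ measurable_const measurable_const)
    exact measurableSet_le (by fun_prop) (by fun_prop)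
  · intro σ hσ hne
    simp only [hF, hG]
    rw [intervalIntegral.integral_const_mul, intervalIntegral.integral_const_mul,
      integral_coulomb_zone hR hσ hne]

/-- Newton's shell theorem for a bounded integrable radial density. -/
theorem newton_shell (hp : Measurable p) (hb : ∀ r, |p r| ≤ M)
    (hi : Integrable fun y : E3 => p ‖y‖) (x : E3) :
    ∫ y, (p ‖y‖ / ‖x - y‖ ^ 3) • (x - y) =
      ((∫ y in {y : E3 | ‖y‖ ≤ ‖x‖}, p ‖y‖) / ‖x‖ ^ 3) • x := by
  rcases eq_or_ne x 0 with rfl | hx0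
  · have h := coulomb_equivariant (p := p) (LinearIsometryEquiv.neg ℝ) (0 : E3)
    rw [map_zero, LinearIsometryEquiv.coe_neg] at h
    rw [smul_zero]
    have h2 := add_eq_zero_iff_eq_neg.2 h
    rw [← two_smul ℝ] at h2
    exact (smul_eq_zero.1 h2).resolve_left two_ne_zero
  have hR : 0 < ‖x‖ := norm_pos_iff.2 hx0
  set a : E3 := EuclideanSpace.single (0 : Fin 3) ‖x‖ with ha
  have han : ‖a‖ = ‖x‖ := by simp [ha]
  have hax := coulomb_axis hp hb hi hR
  rw [← ha] at hax
  have hax2 : ∫ y, (p ‖y‖ / ‖a - y‖ ^ 3) • (a - y) =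
      ((∫ y in {y : E3 | ‖y‖ ≤ ‖x‖}, p ‖y‖) / ‖x‖ ^ 3) • a := by
    have h := coulomb_equivariant (p := p) (ℝ ∙ a).reflection a
    rw [(Submodule.reflection_eq_self_iff a).2 (Submodule.mem_span_singleton_self a), eq_comm,
      Submodule.reflection_eq_self_iff, Submodule.mem_span_singleton] at h
    obtain ⟨c, hc⟩ := h
    rw [← hc, inner_smul_right, real_inner_self_eq_norm_sq, han] at hax
    rw [← hc]
    congr 1
    field_simp at hax ⊢
    linarith
  have hU : (ℝ ∙ (a - x))ᗮ.reflection a = x := Submodule.reflection_sub han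
  have h := coulomb_equivariant (p := p) (ℝ ∙ (a - x))ᗮ.reflection a
  rw [hax2, map_smul, hU] at h
  exact h

end Newton

section Radial
open Filter Topology

variable {B D : ℝ} {L : ℝ → ℝ} {E : ℝ → E3 → E3} {g : E3 × E3 → ℝ}

/-- The phase space density transported by the field `E`. -/
def flowDens (g : E3 × E3 → ℝ) (E : ℝ → E3 → E3) (t : ℝ) (z : E3 × E3) : ℝ :=
  g (odeFlow (phaseVF E) t 0 z)

/-- The spatial density of the transported phase space density. -/
def flowRho (g : E3 × E3 → ℝ) (E : ℝ → E3 → E3) (t : ℝ) (x : E3) : ℝ :=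
  ∫ v, flowDens g E t (x, v)

theorem GoodField.continuous_flowDens (hE : GoodField B L E) (hg : DecayData D g) :
    Continuous fun p : ℝ × E3 × E3 => flowDens g E p.1 p.2 :=
  hg.cont.comp hE.lipVF.continuous_odeFlow_to_zero

theorem GoodField.flowDens_le (hE : GoodField B L E) (hg : DecayData D g) {T t : ℝ} (ht : |t| ≤ T)
    (x v : E3) :
    flowDens g E t (x, v) ≤ D * (1 + (1 + B) * T) ^ 4 * ((1 + ‖v‖) ^ 4)⁻¹ := by
  have hB := hE.bound_nonneg
  have hT : 0 ≤ T := (abs_nonneg t).trans ht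
  set w := odeFlow (phaseVF E) t 0 (x, v) with hw
  have h1 : ‖v‖ ≤ ‖w.2‖ + (1 + B) * T := by
    have h2 := hE.norm_odeFlow_sub_le t t 0 (x, v)
    rw [hE.lipVF.odeFlow_self, sub_zero] at h2
    have h3 : ‖v - w.2‖ ≤ (1 + B) * T :=
      ((norm_snd_le ((x, v) - w)).trans h2).trans (by gcongr)
    have := norm_le_norm_add_norm_sub' v w.2
    linarith
  have h4 : 1 + ‖v‖ ≤ (1 + (1 + B) * T) * (1 + ‖w.2‖) := by
    nlinarith [norm_nonneg w.2, mul_nonneg (mul_nonneg (by linarith : 0 ≤ 1 + B) hT)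
      (norm_nonneg w.2)]
  refine (hg.le_vel w).trans ?_
  have hv := norm_nonneg v
  have hwn := norm_nonneg w.2
  rw [mul_assoc]
  refine mul_le_mul_of_nonneg_left ?_ hg.D_nonneg
  rw [← div_eq_mul_inv, le_div_iff₀ (by positivity), inv_mul_le_iff₀ (by positivity), mul_comm,
    ← mul_pow]
  exact pow_le_pow_left₀ (by positivity) h4 4

theorem GoodField.flowDens_nonneg (hg : DecayData D g) (t : ℝ) (z : E3 × E3) :
    0 ≤ flowDens g E t z := hg.nonneg _

theorem GoodField.continuous_flowRho (hE : GoodField B L E) (hg : DecayData D g) :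
    Continuous fun p : ℝ × E3 => flowRho g E p.1 p.2 := by
  rw [continuous_iff_continuousAt]
  rintro ⟨t, x⟩
  refine continuousAt_of_dominated
    (bound := fun v => D * (1 + (1 + B) * (|t| + 1)) ^ 4 * ((1 + ‖v‖) ^ 4)⁻¹) ?_ ?_ ?_ ?_
  · refine Eventually.of_forall fun p => Continuous.aestronglyMeasurable ?_
    exact (hE.continuous_flowDens hg).comp (by fun_prop : Continuous fun v => (p.1, p.2, v))
  · have hev : ∀ᶠ p : ℝ × E3 in 𝓝 (t, x), |p.1| < |t| + 1 :=
      (continuous_fst.abs).continuousAt.eventually_lt continuousAt_const (by simp)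
    filter_upwards [hev] with p hp
    refine Eventually.of_forall fun v => ?_
    rw [Real.norm_of_nonneg (GoodField.flowDens_nonneg hg _ _)]
    exact hE.flowDens_le hg hp.le p.2 v
  · exact integrable_inv_one_add_norm_pow_four.const_mul _
  · refine Eventually.of_forall fun v => Continuous.continuousAt ?_
    exact (hE.continuous_flowDens hg).comp (by fun_prop : Continuous fun p : ℝ × E3 => (p.1, p.2, v))

theorem GoodField.flowRho_nonneg (hg : DecayData D g) (t : ℝ) (x : E3) : 0 ≤ flowRho g E t x :=
  integral_nonneg fun _ => GoodField.flowDens_nonneg hg _ _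

theorem GoodField.exists_flowRho_le (hE : GoodField B L E) (hg : DecayData D g) (t : ℝ) :
    ∃ M, ∀ x, |flowRho g E t x| ≤ M := by
  refine ⟨∫ v : E3, D * (1 + (1 + B) * |t|) ^ 4 * ((1 + ‖v‖) ^ 4)⁻¹, fun x => ?_⟩
  rw [abs_of_nonneg (GoodField.flowRho_nonneg hg t x)]
  exact integral_mono_of_nonneg (Eventually.of_forall fun v => GoodField.flowDens_nonneg hg _ _)
    (integrable_inv_one_add_norm_pow_four.const_mul _)
    (Eventually.of_forall fun v => hE.flowDens_le hg le_rfl x v)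

theorem GoodField.integrable_flowDens (hE : GoodField B L E) (hg : DecayData D g) (t : ℝ) :
    Integrable (flowDens g E t) :=
  (hE.measurePreserving_odeFlow t 0).integrable_comp_of_integrable hg.integrable

theorem GoodField.integrable_flowRho (hE : GoodField B L E) (hg : DecayData D g) (t : ℝ) :
    Integrable (flowRho g E t) :=
  (hE.integrable_flowDens hg t).integral_prod_left

/-- The mass in a ball is the integral of the spatial density. -/
theorem GoodField.flowMass_eq (hE : GoodField B L E) (hg : DecayData D g) (t r : ℝ) :
    flowMass g E t r = ∫ x in {x : E3 | ‖x‖ ≤ r}, flowRho g E (max t 0) x := by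
  set τ := max t 0
  have hS : MeasurableSet {x : E3 | ‖x‖ ≤ r} := measurableSet_le (by fun_prop) (by fun_prop)
  have hS2 : MeasurableSet {z : E3 × E3 | ‖(charFlow E τ z).1‖ ≤ r} :=
    measurableSet_le (((hE.continuous_charFlow_right τ).fst.norm).measurable) measurable_const
  have hmp := hE.measurePreserving_charFlow τ
  set F : E3 × E3 → ℝ := fun z => {x : E3 | ‖x‖ ≤ r}.indicator (fun _ => 1) z.1 * flowDens g E τ z
    with hF
  have hFi : Integrable F := by
    refine (hE.integrable_flowDens hg τ).bdd_mul (c := 1) ?_ ?_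
    · exact ((measurable_const.indicator hS).comp measurable_fst).aestronglyMeasurable
    · refine Eventually.of_forall fun z => ?_
      refine (norm_indicator_le_norm_self _ _).trans (by simp)
  calc flowMass g E t r
      = ∫ z, {z : E3 × E3 | ‖(charFlow E τ z).1‖ ≤ r}.indicator (fun _ => (1 : ℝ)) z
          ∂(massMeasure g) := (integral_indicator_one hS2).symm
    _ = ∫ z, g z * {z : E3 × E3 | ‖(charFlow E τ z).1‖ ≤ r}.indicator (fun _ => (1 : ℝ)) z :=
        hg.integral_massMeasure _
    _ = ∫ z, F (charFlow E τ z) := by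
        refine integral_congr_ae (Eventually.of_forall fun z => ?_)
        simp only [hF, flowDens, charFlow, hE.lipVF.odeFlow_odeFlow_self]
        rw [mul_comm]
        rfl
    _ = ∫ z, F z := by
        have h := hmp.map_eq
        nth_rewrite 2 [← h]
        exact (integral_map hmp.measurable.aemeasurable
          (by rw [h]; exact hFi.aestronglyMeasurable)).symm
    _ = ∫ x, ∫ v, F (x, v) := by
        rw [Measure.volume_eq_prod]
        exact integral_prod _ hFi
    _ = ∫ x, {x : E3 | ‖x‖ ≤ r}.indicator (fun x => flowRho g E τ x) x := by
        refine integral_congr_ae (Eventually.of_forall fun x => ?_)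
        simp only [hF]
        rw [integral_const_mul]
        by_cases hx : x ∈ {x : E3 | ‖x‖ ≤ r}
        · rw [indicator_of_mem hx, indicator_of_mem hx, one_mul]; rfl
        · rw [indicator_of_notMem hx, indicator_of_notMem hx, zero_mul]
    _ = _ := integral_indicator hS

/-- A field of the form `c(t,|x|) x` commutes with linear isometries. -/
def IsCentral (E : ℝ → E3 → E3) : Prop := ∃ c : ℝ → ℝ → ℝ, ∀ t x, E t x = c t ‖x‖ • x

theorem vhat_map (U : E3 ≃ₗᵢ[ℝ] E3) (v : E3) : vhat (U v) = U (vhat v) := by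
  simp [vhat]

theorem GoodField.odeFlow_map (hE : GoodField B L E) (hc : IsCentral E) (U : E3 ≃ₗᵢ[ℝ] E3)
    (s t : ℝ) (x v : E3) :
    odeFlow (phaseVF E) s t (U x, U v) =
      (U (odeFlow (phaseVF E) s t (x, v)).1, U (odeFlow (phaseVF E) s t (x, v)).2) := by
  obtain ⟨c, hc⟩ := hc
  have hU : ∀ {a : ℝ → E3} {a' : E3} {t : ℝ}, HasDerivAt a a' t →
      HasDerivAt (fun t => U (a t)) (U a') t := fun {a a' t} h =>
    (U.toContinuousLinearEquiv : E3 →L[ℝ] E3).hasFDerivAt.comp_hasDerivAt t h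
  refine hE.lipVF.odeFlow_eq
    (α := fun t => (U (odeFlow (phaseVF E) s t (x, v)).1, U (odeFlow (phaseVF E) s t (x, v)).2))
    (by simp [hE.lipVF.odeFlow_self]) (fun t => ?_) t
  have h := hE.lipVF.hasDerivAt_odeFlow s (x, v) t
  convert! (hU h.fst).prodMk (hU h.snd) using 1
  simp [phaseVF, vhat_map, hc]

theorem exists_mem_orthogonal_ne_zero (y : E3) : ∃ w : E3, w ≠ 0 ∧ inner ℝ y w = 0 := by
  have h : (ℝ ∙ y)ᗮ ≠ ⊥ := by
    rw [Ne, Submodule.orthogonal_eq_bot_iff]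
    intro h
    have h1 : Module.finrank ℝ (ℝ ∙ y) ≤ 1 := by
      simpa using finrank_span_le_card (R := ℝ) ({y} : Set E3)
    rw [h, finrank_top] at h1
    simp at h1
  obtain ⟨w, hw, hw0⟩ := Submodule.exists_mem_ne_zero_of_ne_bot h
  exact ⟨w, hw0, Submodule.mem_orthogonal_singleton_iff_inner_right.1 hw⟩

theorem det_reflection_orthogonal {w : E3} (hw : w ≠ 0) :
    (ℝ ∙ w)ᗮ.reflection.toLinearEquiv.det = -1 := by
  have h := Submodule.linearEquiv_det_reflection (𝕜 := ℝ) (ℝ ∙ w)ᗮ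
  rw [Submodule.orthogonal_orthogonal, finrank_span_singleton hw, pow_one] at h
  exact h

/-- Rotations act transitively on spheres. -/
theorem exists_rotation {x y : E3} (h : ‖x‖ = ‖y‖) :
    ∃ U : E3 ≃ₗᵢ[ℝ] E3, U.toLinearEquiv.det = 1 ∧ U x = y := by
  rcases eq_or_ne x y with rfl | hne
  · exact ⟨LinearIsometryEquiv.refl ℝ E3, LinearEquiv.det_refl, rfl⟩
  obtain ⟨w, hw0, hw⟩ := exists_mem_orthogonal_ne_zero y
  refine ⟨(ℝ ∙ (x - y))ᗮ.reflection.trans (ℝ ∙ w)ᗮ.reflection, ?_, ?_⟩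
  · have h1 : ((ℝ ∙ (x - y))ᗮ.reflection.trans (ℝ ∙ w)ᗮ.reflection).toLinearEquiv =
        (ℝ ∙ (x - y))ᗮ.reflection.toLinearEquiv.trans (ℝ ∙ w)ᗮ.reflection.toLinearEquiv := rfl
    rw [h1, LinearEquiv.det_trans, det_reflection_orthogonal hw0,
      det_reflection_orthogonal (sub_ne_zero.2 hne)]
    simp
  · rw [LinearIsometryEquiv.trans_apply, Submodule.reflection_sub h,
      Submodule.reflection_eq_self_iff, Submodule.mem_orthogonal_singleton_iff_inner_left]
    exact hw

/-- The spatial density generated by a radial density in a central field is radial. -/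
theorem GoodField.flowRho_radial (hE : GoodField B L E) (hc : IsCentral E)
    (hrad : ∀ U : E3 ≃ₗᵢ[ℝ] E3, U.toLinearEquiv.det = 1 → ∀ x v, g (U x, U v) = g (x, v))
    (t : ℝ) {x y : E3} (h : ‖x‖ = ‖y‖) : flowRho g E t x = flowRho g E t y := by
  obtain ⟨U, hU, rfl⟩ := exists_rotation h
  have h1 : ∀ v, flowDens g E t (x, v) = flowDens g E t (U x, U v) := fun v => by
    rw [flowDens, flowDens, hE.odeFlow_map hc, hrad U hU]
  unfold flowRho
  simp only [h1]
  exact U.measurePreserving.integral_comp U.toHomeomorph.measurableEmbedding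
    fun v => flowDens g E t (U x, v)

end Radial

section Smooth
open Filter Topology

/-- The mean of a radial profile `p` over the ball of radius `r`, divided by three. -/
def ballMean (p : ℝ → ℝ) (r : ℝ) : ℝ := ∫ u in (0 : ℝ)..1, u ^ 2 * p (r * u)

theorem pow_mul_ballMean (p : ℝ → ℝ) (r : ℝ) :
    r ^ 3 * ballMean p r = ∫ s in (0 : ℝ)..r, s ^ 2 * p s := by
  have h := intervalIntegral.mul_integral_comp_mul_left (a := 0) (b := 1) (c := r)
    (f := fun s => s ^ 2 * p s)
  rw [mul_zero, mul_one] at h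
  rw [← h, ballMean, ← intervalIntegral.integral_const_mul, ← intervalIntegral.integral_const_mul]
  congr 1
  ext u
  ring

theorem ballMean_zero (p : ℝ → ℝ) : ballMean p 0 = p 0 / 3 := by
  simp only [ballMean, zero_mul, intervalIntegral.integral_mul_const, integral_pow]
  norm_num
  ring

theorem continuous_ballMean {p : ℝ → ℝ → ℝ} (hp : Continuous fun q : ℝ × ℝ => p q.1 q.2) :
    Continuous fun q : ℝ × ℝ => ballMean (p q.1) q.2 := by
  refine intervalIntegral.continuous_parametric_intervalIntegral_of_continuous' ?_ 0 1
  have : Continuous fun w : (ℝ × ℝ) × ℝ => p w.1.1 (w.1.2 * w.2) :=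
    hp.comp (by fun_prop : Continuous fun w : (ℝ × ℝ) × ℝ => (w.1.1, w.1.2 * w.2))
  exact (continuous_snd.pow 2).mul this

theorem hasDerivAt_ballMean {p : ℝ → ℝ} (hp : Continuous p) {r : ℝ} (hr : 0 < r) :
    HasDerivAt (ballMean p) ((p r - 3 * ballMean p r) / r) r := by
  have hc : Continuous fun s => s ^ 2 * p s := by fun_prop
  have h1 : HasDerivAt (fun r => ∫ s in (0 : ℝ)..r, s ^ 2 * p s) (r ^ 2 * p r) r :=
    intervalIntegral.integral_hasDerivAt_right (hc.intervalIntegrable _ _)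
      (hc.stronglyMeasurableAtFilter _ _) hc.continuousAt
  have h2 := h1.div (hasDerivAt_pow 3 r) (pow_pos hr 3).ne'
  have heq : ballMean p =ᶠ[𝓝 r] (fun r => ∫ s in (0 : ℝ)..r, s ^ 2 * p s) / fun r => r ^ 3 := by
    filter_upwards [lt_mem_nhds hr] with s hs
    rw [Pi.div_apply, eq_div_iff (pow_pos hs 3).ne', ← pow_mul_ballMean p s, mul_comm]
  refine (h2.congr_of_eventuallyEq heq).congr_deriv ?_
  rw [← pow_mul_ballMean p r]
  field_simp
  norm_num
  ring

theorem setIntegral_radial {p : ℝ → ℝ} (hp : Continuous p) (hi : Integrable fun y : E3 => p ‖y‖)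
    {r : ℝ} (hr : 0 < r) :
    ∫ y in {y : E3 | ‖y‖ ≤ r}, p ‖y‖ = 4 * π * (r ^ 3 * ballMean p r) := by
  have hS : MeasurableSet {y : E3 | ‖y‖ ≤ r} := measurableSet_le (by fun_prop) (by fun_prop)
  set F : ℝ × ℝ → ℝ := fun q => {s | s ≤ r}.indicator p q.1 with hF
  have hFm : Measurable F :=
    (hp.measurable.indicator (measurableSet_le measurable_id measurable_const)).comp measurable_fst
  have h1 : ∀ y : E3, {y : E3 | ‖y‖ ≤ r}.indicator (fun y => p ‖y‖) y = F (‖y‖, y 0) := fun y => by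
    simp [hF, indicator_apply]
  have hFi : Integrable fun y : E3 => F (‖y‖, y 0) := by
    simp only [← h1]
    exact hi.indicator hS
  rw [← integral_indicator hS]
  simp only [h1]
  rw [integral_norm_coord hFm hFi, pow_mul_ballMean p r, ← intervalIntegral.integral_const_mul,
    intervalIntegral.integral_of_le hr.le, ← integral_indicator measurableSet_Ioi,
    ← integral_indicator measurableSet_Ioc]
  refine integral_congr_ae (Eventually.of_forall fun σ => ?_)
  simp only [hF, intervalIntegral.integral_const, indicator_apply, mem_Ioi, mem_Ioc, mem_ofPred_eq]
  by_cases h0 : 0 < σ <;> by_cases h2 : σ ≤ r <;> simp [h0, h2]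
  ring

/-- The derivative of the central field `κ(|x|) x`. -/
def centralDeriv (p : ℝ → ℝ) (x : E3) : E3 →L[ℝ] E3 :=
  ballMean p ‖x‖ • ContinuousLinearMap.id ℝ E3 +
    (p ‖x‖ - 3 * ballMean p ‖x‖) • ((‖x‖ ^ 2)⁻¹ • (innerSL ℝ x).smulRight x)

theorem hasFDerivAt_central {p : ℝ → ℝ} (hp : Continuous p) (x : E3) :
    HasFDerivAt (fun x : E3 => ballMean p ‖x‖ • x) (centralDeriv p x) x := by
  have hcm : Continuous (ballMean p) := by
    have := continuous_ballMean (p := fun _ => p) (by fun_prop)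
    exact this.comp (by fun_prop : Continuous fun r : ℝ => ((0 : ℝ), r))
  rcases eq_or_ne x 0 with rfl | hx
  · have h0 : centralDeriv p 0 = ballMean p 0 • ContinuousLinearMap.id ℝ E3 := by
      simp [centralDeriv]
    rw [h0, hasFDerivAt_iff_isLittleO_nhds_zero]
    rw [Asymptotics.isLittleO_iff]
    intro ε hε
    have ht : Tendsto (fun h : E3 => ballMean p ‖h‖) (𝓝 0) (𝓝 (ballMean p 0)) := by
      have := (hcm.comp continuous_norm).tendsto (0 : E3)
      simpa [Function.comp_def] using this
    filter_upwards [Metric.tendsto_nhds.1 ht ε hε] with h hh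
    rw [dist_eq_norm] at hh
    simp only [zero_add, smul_zero, sub_zero, smul_apply,
      ContinuousLinearMap.id_apply]
    rw [← sub_smul, norm_smul]
    gcongr
  · have hr : 0 < ‖x‖ := norm_pos_iff.2 hx
    have hn : HasFDerivAt (fun x : E3 => ‖x‖) ((‖x‖)⁻¹ • innerSL ℝ x) x := by
      have h1 := (hasStrictFDerivAt_norm_sq x).hasFDerivAt.sqrt (pow_pos hr 2).ne'
      simp only [Real.sqrt_sq (norm_nonneg _)] at h1
      refine h1.congr_fderiv ?_
      ext y
      simp
      field_simp
    have h2 := ((hasDerivAt_ballMean hp hr).comp_hasFDerivAt x hn).smul (hasFDerivAt_id x)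
    refine h2.congr_fderiv ?_
    ext1 y
    simp only [centralDeriv, add_apply, smul_apply,
      ContinuousLinearMap.id_apply, ContinuousLinearMap.smulRight_apply, smul_smul, id,
      Function.comp, smul_eq_mul]
    congr 2
    field_simp

theorem continuous_centralDeriv {p : ℝ → ℝ → ℝ} (hp : Continuous fun q : ℝ × ℝ => p q.1 q.2) :
    Continuous fun q : ℝ × E3 => centralDeriv (p q.1) q.2 := by
  have hk : Continuous fun q : ℝ × E3 => ballMean (p q.1) ‖q.2‖ :=
    (continuous_ballMean hp).comp (by fun_prop : Continuous fun q : ℝ × E3 => (q.1, ‖q.2‖))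
  have hpc : Continuous fun q : ℝ × E3 => p q.1 ‖q.2‖ :=
    hp.comp (by fun_prop : Continuous fun q : ℝ × E3 => (q.1, ‖q.2‖))
  have hc : Continuous fun q : ℝ × E3 => p q.1 ‖q.2‖ - 3 * ballMean (p q.1) ‖q.2‖ :=
    hpc.sub (continuous_const.mul hk)
  unfold centralDeriv
  refine (hk.smul continuous_const).add ?_
  rw [continuous_iff_continuousAt]
  rintro ⟨t, x⟩
  rcases eq_or_ne x 0 with rfl | hx
  · have hbound : ∀ x : E3, ‖(‖x‖ ^ 2)⁻¹ • (innerSL ℝ x).smulRight x‖ ≤ 1 := by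
      intro x
      rw [norm_smul, ContinuousLinearMap.norm_smulRight_apply, innerSL_apply_norm, norm_inv,
        norm_pow, norm_norm, ← sq]
      exact inv_mul_le_one
    have h0 : Tendsto (fun q : ℝ × E3 => p q.1 ‖q.2‖ - 3 * ballMean (p q.1) ‖q.2‖) (𝓝 (t, 0))
        (𝓝 0) := by
      have := hc.tendsto (t, 0)
      simp only [norm_zero, ballMean_zero] at this
      convert! this using 2
      ring
    rw [ContinuousAt]
    simp only [norm_zero, map_zero]
    have hz : (p t 0 - 3 * ballMean (p t) 0) •
        (((0 : ℝ) ^ 2)⁻¹ • (0 : E3 →L[ℝ] ℝ).smulRight (0 : E3)) = 0 := by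
      ext1 v
      simp only [smul_apply, ContinuousLinearMap.smulRight_apply, smul_zero, zero_apply]
    rw [hz, tendsto_zero_iff_norm_tendsto_zero]
    refine squeeze_zero (fun _ => norm_nonneg _) (fun q => ?_) (by simpa using h0.norm)
    rw [norm_smul, ← Real.norm_eq_abs]
    exact mul_le_of_le_one_right (norm_nonneg _) (hbound q.2)
  · have hinv : ContinuousAt (fun q : ℝ × E3 => (‖q.2‖ ^ 2)⁻¹) (t, x) :=
      ContinuousAt.inv₀ (by fun_prop) (pow_pos (norm_pos_iff.2 hx) 2).ne'
    have hS : Continuous fun q : ℝ × E3 => (innerSL ℝ q.2).smulRight q.2 := by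
      have h1 : Continuous fun q : ℝ × E3 =>
          ContinuousLinearMap.smulRightL ℝ E3 E3 (innerSL ℝ q.2) q.2 := by fun_prop
      exact h1
    exact hc.continuousAt.smul (hinv.smul hS.continuousAt)

end Smooth

section Final
open Filter Topology

variable {B D : ℝ} {L : ℝ → ℝ} {E : ℝ → E3 → E3} {g : E3 × E3 → ℝ}

/-- The radial profile of the spatial density at the times `max t 0`. -/
def rhoProfile (g : E3 × E3 → ℝ) (E : ℝ → E3 → E3) (t r : ℝ) : ℝ :=
  flowRho g E (max t 0) (EuclideanSpace.single (0 : Fin 3) r)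

theorem GoodField.continuous_rhoProfile (hE : GoodField B L E) (hg : DecayData D g) :
    Continuous fun q : ℝ × ℝ => rhoProfile g E q.1 q.2 := by
  have h1 : Continuous fun r : ℝ => (EuclideanSpace.single (0 : Fin 3) r : E3) :=
    Isometry.continuous (Isometry.of_dist_eq fun a b => PiLp.dist_single_same _ _ _ _ _)
  exact (hE.continuous_flowRho hg).comp
    ((continuous_fst.max continuous_const).prodMk (h1.comp continuous_snd))

/-- The datum `g` is rotation invariant and `E` is the central field generated by the mass that
the characteristics of `E` transport from `g`. -/
structure SelfConsistent (g : E3 × E3 → ℝ) (E : ℝ → E3 → E3) : Prop where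
  radial : ∀ U : E3 ≃ₗᵢ[ℝ] E3, U.toLinearEquiv.det = 1 → ∀ x v, g (U x, U v) = g (x, v)
  eq : ∀ t x, E t x = ((4 * π)⁻¹ * (flowMass g E t ‖x‖ / ‖x‖ ^ 3)) • x

theorem SelfConsistent.isCentral (h : SelfConsistent g E) : IsCentral E :=
  ⟨fun t r => (4 * π)⁻¹ * (flowMass g E t r / r ^ 3), h.eq⟩

theorem SelfConsistent.flowRho_eq (h : SelfConsistent g E) (hE : GoodField B L E) (t : ℝ)
    (x : E3) : flowRho g E (max t 0) x = rhoProfile g E t ‖x‖ :=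
  hE.flowRho_radial h.isCentral h.radial _ (by simp)

theorem SelfConsistent.integrable_rhoProfile (h : SelfConsistent g E) (hE : GoodField B L E)
    (hg : DecayData D g) (t : ℝ) : Integrable fun y : E3 => rhoProfile g E t ‖y‖ := by
  simp only [← h.flowRho_eq hE]
  exact hE.integrable_flowRho hg _

theorem SelfConsistent.flowMass_eq (h : SelfConsistent g E) (hE : GoodField B L E)
    (hg : DecayData D g) (t r : ℝ) :
    flowMass g E t r = ∫ y in {y : E3 | ‖y‖ ≤ r}, rhoProfile g E t ‖y‖ := by
  simp only [hE.flowMass_eq hg, h.flowRho_eq hE]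

theorem SelfConsistent.eq_ballMean (h : SelfConsistent g E) (hE : GoodField B L E)
    (hg : DecayData D g) (t : ℝ) : E t = fun x => ballMean (rhoProfile g E t) ‖x‖ • x := by
  ext1 x
  rcases eq_or_ne x 0 with rfl | hx
  · rw [h.eq, smul_zero, smul_zero]
  have hr : 0 < ‖x‖ := norm_pos_iff.2 hx
  have hc : Continuous (rhoProfile g E t) :=
    (hE.continuous_rhoProfile hg).comp (continuous_const.prodMk continuous_id)
  rw [h.eq, h.flowMass_eq hE hg, setIntegral_radial hc (h.integrable_rhoProfile hE hg t) hr]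
  congr 1
  have := Real.pi_pos
  field_simp

/-- The flow transports the initial datum to a continuously differentiable density. -/
theorem SelfConsistent.contDiff_flowDens (h : SelfConsistent g E) (hE : GoodField B L E)
    (hg : DecayData D g) (hgs : ContDiff ℝ 1 g) :
    ContDiff ℝ 1 fun p : ℝ × E3 × E3 => flowDens g E p.1 p.2 := by
  have hq := hE.continuous_rhoProfile hg
  have hcv : Continuous (fderiv ℝ vhat) := contDiff_vhat.continuous_fderiv one_ne_zero
  refine hgs.comp (hE.lipVF.contDiff_odeFlow_to_zero
    (dv := fun t z => ((fderiv ℝ vhat z.2).comp (ContinuousLinearMap.snd ℝ E3 E3)).prod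
      ((centralDeriv (rhoProfile g E t) z.1).comp (ContinuousLinearMap.fst ℝ E3 E3)))
    (fun t z => ?_) ?_)
  · have h1 : HasFDerivAt vhat (fderiv ℝ vhat z.2) z.2 :=
      ((contDiff_vhat.differentiable one_ne_zero) z.2).hasFDerivAt
    have h2 : HasFDerivAt (E t) (centralDeriv (rhoProfile g E t) z.1) z.1 := by
      rw [h.eq_ballMean hE hg t]
      exact hasFDerivAt_central (hq.comp (continuous_const.prodMk continuous_id)) z.1
    exact (h1.comp z hasFDerivAt_snd).prodMk (h2.comp z hasFDerivAt_fst)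
  · have h1 : Continuous fun p : ℝ × E3 × E3 =>
        (fderiv ℝ vhat p.2.2).comp (ContinuousLinearMap.snd ℝ E3 E3) :=
      (hcv.comp (by fun_prop)).clm_comp continuous_const
    have h2 : Continuous fun p : ℝ × E3 × E3 =>
        (centralDeriv (rhoProfile g E p.1) p.2.1).comp (ContinuousLinearMap.fst ℝ E3 E3) :=
      ((continuous_centralDeriv hq).comp
        (by fun_prop : Continuous fun p : ℝ × E3 × E3 => (p.1, p.2.1))).clm_comp continuous_const
    exact (ContinuousLinearMap.prodₗᵢ (𝕜 := ℝ) (E := E3 × E3) (F := E3) (G := E3)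
      ℝ).continuous.comp (h1.prodMk h2)

theorem SelfConsistent.rvpField_eq (h : SelfConsistent g E) (hE : GoodField B L E)
    (hg : DecayData D g) {t : ℝ} (ht : 0 ≤ t) (x : E3) :
    rvpField (fun t x v => flowDens g E t (x, v)) t x = E t x := by
  have hρ : ∀ y, rvpRho (fun t x v => flowDens g E t (x, v)) t y = rhoProfile g E t ‖y‖ :=
    fun y => by rw [← h.flowRho_eq hE, max_eq_left ht]; rfl
  have hc : Continuous (rhoProfile g E t) :=
    (hE.continuous_rhoProfile hg).comp (continuous_const.prodMk continuous_id)
  obtain ⟨M, hM⟩ := hE.exists_flowRho_le hg (max t 0)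
  rw [rvpField]
  simp only [hρ]
  rw [newton_shell hc.measurable (fun r => hM _) (h.integrable_rhoProfile hE hg t) x, h.eq,
    h.flowMass_eq hE hg, smul_smul]

/-- The transported density is constant along characteristics. -/
theorem SelfConsistent.fderiv_flowDens (h : SelfConsistent g E) (hE : GoodField B L E)
    (hg : DecayData D g) (hgs : ContDiff ℝ 1 g) (t : ℝ) (z : E3 × E3) :
    fderiv ℝ (fun p : ℝ × E3 × E3 => flowDens g E p.1 p.2) (t, z) (1, phaseVF E t z) = 0 := by
  have hF := ((h.contDiff_flowDens hE hg hgs).differentiable one_ne_zero (t, z)).hasFDerivAt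
  have hγ : HasDerivAt (fun τ => (τ, odeFlow (phaseVF E) t τ z)) (1, phaseVF E t z) t := by
    have := hE.lipVF.hasDerivAt_odeFlow t z t
    rw [hE.lipVF.odeFlow_self] at this
    exact (hasDerivAt_id t).prodMk this
  have hcomp : HasDerivAt (fun τ => flowDens g E τ (odeFlow (phaseVF E) t τ z))
      (fderiv ℝ (fun p : ℝ × E3 × E3 => flowDens g E p.1 p.2) (t, z) (1, phaseVF E t z)) t := by
    refine HasFDerivAt.comp_hasDerivAt (l := fun p : ℝ × E3 × E3 => flowDens g E p.1 p.2)
      (f := fun τ => (τ, odeFlow (phaseVF E) t τ z)) t ?_ hγ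
    rw [hE.lipVF.odeFlow_self]
    exact hF
  have hconst : (fun τ => flowDens g E τ (odeFlow (phaseVF E) t τ z)) =
      fun _ => flowDens g E t z := by
    ext τ
    rw [flowDens, flowDens, hE.lipVF.odeFlow_odeFlow]
  rw [hconst] at hcomp
  exact hcomp.unique (hasDerivAt_const t _)

theorem SelfConsistent.isRVPSolution (h : SelfConsistent g E) (hE : GoodField B L E)
    (hg : DecayData D g) (hgs : ContDiff ℝ 1 g) :
    IsRVPSolution (Ici 0) fun t x v => flowDens g E t (x, v) := by
  have hF := h.contDiff_flowDens hE hg hgs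
  refine ⟨fun t _ x v => GoodField.flowDens_nonneg hg _ _, hF.contDiffOn, fun t ht x v => ?_⟩
  rw [h.rvpField_eq hE hg ht]
  have hu : UniqueDiffWithinAt ℝ (Ici (0 : ℝ) ×ˢ (univ : Set (E3 × E3))) (t, x, v) :=
    ((uniqueDiffOn_Ici 0).prod uniqueDiffOn_univ) _ ⟨ht, mem_univ _⟩
  rw [((hF.differentiable one_ne_zero) (t, x, v)).fderivWithin hu]
  exact h.fderiv_flowDens hE hg hgs t (x, v)

end Final

/-- Global existence for the 3D relativistic Vlasov–Poisson system with radially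
symmetric initial data decaying polynomially in phase space, together with finiteness
of the electric field on every finite time interval. -/
theorem global_existence_radial
    (s : ℕ) (hs : 6 ≤ s) (f0 : E3 → E3 → ℝ)
    (hf0_nonneg : ∀ x v, 0 ≤ f0 x v)
    (hf0_smooth : ContDiff ℝ s (fun p : E3 × E3 => f0 p.1 p.2))
    (hf0_radial : ∀ R : E3 ≃ₗᵢ[ℝ] E3, R.toLinearEquiv.det = 1 →
      ∀ x v, f0 (R x) (R v) = f0 x v)
    (hf0_decay : ∀ n : ℕ, n ≤ s →
      MemLp (fun p : E3 × E3 =>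
        (1 + ‖p.1‖ + ‖p.2‖) ^ (100 : ℕ) *
          ‖iteratedFDeriv ℝ n (fun q : E3 × E3 => f0 q.1 q.2) p‖) 2 volume) :
    ∃ f : ℝ → E3 → E3 → ℝ,
      IsRVPSolution (Set.Ici 0) f ∧ (∀ x v, f 0 x v = f0 x v) ∧
      ∀ T > (0 : ℝ), ∃ C : ℝ, ∀ t ∈ Set.Icc (0 : ℝ) T, ∀ x : E3, ‖rvpField f t x‖ ≤ C := by
  have h6 : ContDiff ℝ 6 (fun p : E3 × E3 => f0 p.1 p.2) := hf0_smooth.of_le (by exact_mod_cast hs)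
  have h1 : ContDiff ℝ 1 (fun p : E3 × E3 => f0 p.1 p.2) := h6.of_le (by norm_num)
  obtain ⟨D, hg⟩ := exists_decayData h6 (fun z => hf0_nonneg z.1 z.2)
    fun n hn => hf0_decay n (hn.trans hs)
  obtain ⟨B, L, Q, E, hE, -, -, hfix⟩ := hg.exists_field
  have hsc : SelfConsistent (fun p : E3 × E3 => f0 p.1 p.2) E := ⟨hf0_radial, hfix⟩
  refine ⟨_, hsc.isRVPSolution hE hg h1, fun x v => ?_, fun T _ => ⟨B, fun t ht x => ?_⟩⟩
  · simp only [flowDens, hE.lipVF.odeFlow_self]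
  · rw [hsc.rvpField_eq hE hg ht.1]
    exact hE.bdd t x
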